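/- arXiv:2010.01583 — 9 statements merged into one kernel-verified Lean document; each statement's English description precedes it below -/
import Mathlib

section
/- Let β ∈ 𝒦 and let γ : [0,1] → ℂ be a continuous map with γ(1) = β and f(γ(t)) = t·f(β) for all t ∈ [0,1]. Then γ(t) ∈ 𝒦 for every t ∈ [0,1]. -/
open Polynomial Complex Set

theorem steepest_aux_logDeriv (s : ℕ) (hs : 2 ≤ s) (α : Fin s → ℂ)
    (n : Fin s → ℕ) (hn : ∀ j, 1 ≤ n j) (c z : ℂ)
    (hz : ∀ j, 0 < (c * (z - α j)).re) :
    0 < (c * ((∏ j, (X - C (α j)) ^ n j : Polynomial ℂ).eval z /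
      (derivative (∏ j, (X - C (α j)) ^ n j : Polynomial ℂ)).eval z)).re := by
  have hinv : ∀ w : ℂ, 0 < w.re → 0 < (w⁻¹).re := by
    intro w hw
    have hw0 : w ≠ 0 := by
      rintro rfl
      simp at hw
    rw [Complex.inv_re]
    exact div_pos hw (Complex.normSq_pos.mpr hw0)
  have hne : ∀ j, z - α j ≠ 0 := by
    intro j h
    have := hz j
    simp [h] at this
  have hfne : (∏ j, (X - C (α j)) ^ n j : Polynomial ℂ).eval z ≠ 0 := by
    rw [eval_prod]
    refine Finset.prod_ne_zero_iff.mpr fun j _ => ?_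
    simpa using pow_ne_zero _ (hne j)
  have hld : (derivative (∏ j, (X - C (α j)) ^ n j : Polynomial ℂ)).eval z /
      (∏ j, (X - C (α j)) ^ n j : Polynomial ℂ).eval z = ∑ j, (n j : ℂ) / (z - α j) := by
    have h1 : (derivative (∏ j, (X - C (α j)) ^ n j : Polynomial ℂ)).eval z /
        (∏ j, (X - C (α j)) ^ n j : Polynomial ℂ).eval z =
        logDeriv (fun w => ∏ j, (w - α j) ^ n j) z := by
      rw [logDeriv_apply]
      have : (fun w => ∏ j, (w - α j) ^ n j) =
          fun w => (∏ j, (X - C (α j)) ^ n j : Polynomial ℂ).eval w := by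
        funext w
        simp [eval_prod]
      rw [this, Polynomial.deriv]
      simp [eval_prod]
    rw [h1, logDeriv_prod]
    · refine Finset.sum_congr rfl fun j _ => ?_
      rw [logDeriv_fun_pow (by fun_prop), logDeriv_apply]
      simp [div_eq_mul_inv]
    · intro j _
      exact pow_ne_zero _ (hne j)
    · intro j _
      fun_prop
  have hrw : c * ((∏ j, (X - C (α j)) ^ n j : Polynomial ℂ).eval z /
      (derivative (∏ j, (X - C (α j)) ^ n j : Polynomial ℂ)).eval z)
      = (∑ j, (n j : ℂ) * (c * (z - α j))⁻¹)⁻¹ := by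
    rw [← inv_div, hld, ← inv_inv c, ← mul_inv, Finset.mul_sum]
    congr 1
    refine Finset.sum_congr rfl fun j _ => ?_
    rw [inv_inv, mul_inv]
    ring
  rw [hrw]
  apply hinv
  rw [Complex.re_sum]
  have : Nonempty (Fin s) := ⟨⟨0, by omega⟩⟩
  refine Finset.sum_pos (fun j _ => ?_) Finset.univ_nonempty
  have h2 := hinv _ (hz j)
  have h3 : (0 : ℝ) < n j := by exact_mod_cast hn j
  have : ((n j : ℂ) * (c * (z - α j))⁻¹).re = n j * ((c * (z - α j))⁻¹).re := by
    rw [← Complex.ofReal_natCast, Complex.re_ofReal_mul]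
  rw [this]
  positivity

/-- Any path of steepest descent for `|f|` (parameterized in
reverse by `γ` with `f (γ t) = t • f β`) starting from a point `β` of the
convex hull `K` of the roots of `f` remains in `K`. -/
theorem steepest_descent_stays_in_hull
    (s : ℕ) (hs : 2 ≤ s)
    (α : Fin s → ℂ) (hα : Function.Injective α)
    (n : Fin s → ℕ) (hn : ∀ j, 1 ≤ n j)
    (f : Polynomial ℂ) (hf : f = ∏ j, (X - C (α j)) ^ n j)
    (K : Set ℂ) (hK : K = convexHull ℝ (Set.range α))
    (β : ℂ) (hβ : β ∈ K)
    (γ : ℝ → ℂ) (hγcont : ContinuousOn γ (Set.Icc 0 1))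
    (hγ1 : γ 1 = β)
    (hγf : ∀ t ∈ Set.Icc (0 : ℝ) 1, f.eval (γ t) = (t : ℂ) * f.eval β) :
    ∀ t ∈ Set.Icc (0 : ℝ) 1, γ t ∈ K := by
  have hroot : ∀ z, f.eval z = 0 → z ∈ K := by
    intro z hz
    rw [hf, eval_prod] at hz
    obtain ⟨j, _, hj⟩ := Finset.prod_eq_zero_iff.mp hz
    have h1 : z - α j = 0 := by
      have h2 : (z - α j) ^ n j = 0 := by simpa using hj
      exact pow_eq_zero_iff (by have := hn j; omega) |>.mp h2
    rw [sub_eq_zero.mp h1, hK]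
    exact subset_convexHull ℝ _ ⟨j, rfl⟩
  have hαK : ∀ j, α j ∈ K := fun j => hK ▸ subset_convexHull ℝ _ ⟨j, rfl⟩
  intro t₀ ht₀
  by_contra hnot
  have hconv : Convex ℝ K := hK ▸ convex_convexHull ℝ _
  have hclosed : IsClosed K := by
    rw [hK]
    exact ((Set.finite_range α).isCompact_convexHull ℝ).isClosed
  obtain ⟨l, u, hl, hu⟩ := geometric_hahn_banach_closed_point hconv hclosed hnot
  obtain ⟨c, hc⟩ : ∃ c : ℂ, ∀ z, l z = (c * z).re := by
    refine ⟨⟨l 1, -l I⟩, fun z => ?_⟩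
    have hz : z = z.re • (1 : ℂ) + z.im • I := by
      apply Complex.ext <;> simp
    conv_lhs => rw [hz]
    rw [map_add, map_smul, map_smul]
    simp [Complex.mul_re]
    ring
  obtain ⟨τ, hτ, hmax⟩ := isCompact_Icc.exists_isMaxOn (⟨t₀, ht₀⟩ : (Icc (0:ℝ) 1).Nonempty)
    (l.continuous.comp_continuousOn hγcont)
  have hτu : u < l (γ τ) := lt_of_lt_of_le hu (hmax ht₀)
  have hτK : γ τ ∉ K := fun h => absurd (hl _ h) (not_lt.mpr hτu.le)
  have hτ0 : 0 < τ := by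
    refine lt_of_le_of_ne hτ.1 fun h => hτK (hroot _ ?_)
    rw [hγf τ hτ, ← h]
    simp
  have hτ1 : τ < 1 := by
    refine lt_of_le_of_ne hτ.2 fun h => hτK ?_
    rw [h, hγ1]
    exact hβ
  have hpos : 0 < (c * (f.eval (γ τ) / (derivative f).eval (γ τ))).re := by
    rw [hf]
    refine steepest_aux_logDeriv s hs α n hn c (γ τ) fun j => ?_
    rw [← hc, map_sub]
    have := hl _ (hαK j)
    linarith
  have hdne : (derivative f).eval (γ τ) ≠ 0 := by
    intro h
    simp [h] at hpos
  have hpos' : 0 < (c * (f.eval β / (derivative f).eval (γ τ))).re := by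
    have h1 : c * (f.eval (γ τ) / (derivative f).eval (γ τ)) =
        (τ : ℂ) * (c * (f.eval β / (derivative f).eval (γ τ))) := by
      rw [hγf τ hτ]
      ring
    rw [h1, Complex.re_ofReal_mul] at hpos
    exact (mul_pos_iff_of_pos_left hτ0).mp hpos
  obtain ⟨q, hq⟩ : (X - C (γ τ)) ∣ f - C (f.eval (γ τ)) := by
    rw [dvd_iff_isRoot]
    simp
  have hqd : q.eval (γ τ) = (derivative f).eval (γ τ) := by
    have := congrArg (fun p => (derivative p).eval (γ τ)) hq
    simpa using this.symm
  rw [← hqd] at hpos' hdne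
  have hγat : ContinuousAt γ τ := hγcont.continuousAt (Icc_mem_nhds hτ0 hτ1)
  have hqc : ContinuousAt (fun t => q.eval (γ t)) τ :=
    ContinuousAt.comp (g := fun z => q.eval z) q.continuous.continuousAt hγat
  have hcc : ContinuousAt (fun t => (c * (f.eval β / q.eval (γ t))).re) τ :=
    Complex.continuous_re.continuousAt.comp
      (continuousAt_const.mul (continuousAt_const.div hqc hdne))
  have hev : ∀ᶠ t in nhds τ, 0 < (c * (f.eval β / q.eval (γ t))).re ∧ q.eval (γ t) ≠ 0 ∧ t < 1 :=
    (hcc.eventually (lt_mem_nhds hpos')).and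
      ((hqc.eventually_ne hdne).and (gt_mem_nhds hτ1))
  obtain ⟨t, ⟨h1, h2, h3⟩, h4⟩ :=
    ((hev.filter_mono nhdsWithin_le_nhds).and (self_mem_nhdsWithin (s := Ioi τ))).exists
  have h4 : τ < t := h4
  have ht : t ∈ Icc (0 : ℝ) 1 := ⟨(hτ0.trans h4).le, h3.le⟩
  have hle : l (γ t) ≤ l (γ τ) := hmax ht
  have heq : ((t - τ : ℝ) : ℂ) * f.eval β = (γ t - γ τ) * q.eval (γ t) := by
    have := congrArg (fun p => p.eval (γ t)) hq
    simp only [eval_sub, eval_mul, eval_C, eval_X] at this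
    rw [← this, hγf t ht, hγf τ hτ]
    push_cast
    ring
  have heq2 : c * (γ t - γ τ) = ((t - τ : ℝ) : ℂ) * (c * (f.eval β / q.eval (γ t))) := by
    rw [eq_comm, ← mul_div_cancel_right₀ (γ t - γ τ) h2, ← heq]
    ring
  have h5 : l (γ t) - l (γ τ) = (t - τ) * (c * (f.eval β / q.eval (γ t))).re := by
    rw [← map_sub, hc, heq2, Complex.re_ofReal_mul]
  have h6 := mul_pos (sub_pos.mpr h4) h1
  linarith
end

section
/- Let β ∈ 𝒦 and let γ : [0,1] → ℂ be a continuous, piecewise continuously differentiable map with γ(1) = β and f(γ(t)) = t·f(β) for all t ∈ [0,1]. Then the length of γ satisfies ∫₀¹ |γ′(t)| dt ≤ π·N·R. -/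
open Polynomial Complex Set

/-- A map `γ : ℝ → ℂ` is continuous and piecewise continuously differentiable
on `[a, b]` if it is continuous on `[a, b]` and there is a finite partition
`a = t₀ < t₁ < ⋯ < t_k = b` such that `γ` is `C¹` on each subinterval
`[tᵢ, tᵢ₊₁]`. -/
def PiecewiseC1On (γ : ℝ → ℂ) (a b : ℝ) : Prop :=
  ContinuousOn γ (Set.Icc a b) ∧
    ∃ (k : ℕ) (t : Fin (k + 1) → ℝ), StrictMono t ∧ t 0 = a ∧ t (Fin.last k) = b ∧
      ∀ i : Fin k, ContDiffOn ℝ 1 γ (Set.Icc (t i.castSucc) (t i.succ))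


lemma aux_B (u : ℝ → ℝ) (hu : ContinuousOn u (Icc 0 1)) (a b : ℝ) (hab : a ≤ b)
    (hr : ∀ t ∈ Icc (0:ℝ) 1, u t ∈ Icc a b) (N : ℕ)
    (hN : ∀ y : ℝ, ∀ S : Finset ℝ, (∀ t ∈ S, t ∈ Icc (0:ℝ) 1 ∧ u t = y) → S.card ≤ N)
    (p : ℕ → ℝ) (hp : Monotone p) (hpm : ∀ i, p i ∈ Icc (0:ℝ) 1) (m : ℕ) :
    ∑ i ∈ Finset.range m, |u (p (i+1)) - u (p i)| ≤ N * (b - a) := by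
  classical
  set J : ℕ → Set ℝ := fun i => Ioo (min (u (p i)) (u (p (i+1)))) (max (u (p i)) (u (p (i+1)))) with hJ
  have hvol : ∀ i, |u (p (i+1)) - u (p i)| = ∫ y in Icc a b, (J i).indicator (fun _ => (1:ℝ)) y := by
    intro i
    rw [MeasureTheory.setIntegral_indicator measurableSet_Ioo, inter_eq_self_of_subset_right]
    · simp only [MeasureTheory.integral_const, smul_eq_mul, mul_one, MeasureTheory.measureReal_restrict_apply_univ]
      rw [Real.volume_real_Ioo_of_le min_le_max, max_sub_min_eq_abs]
    · intro y hy
      have h1 := hr _ (hpm i)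
      have h2 := hr _ (hpm (i+1))
      refine ⟨(le_min h1.1 h2.1).trans hy.1.le, hy.2.le.trans (max_le h1.2 h2.2)⟩
  have hint : ∀ i, MeasureTheory.Integrable ((J i).indicator (fun _ => (1:ℝ))) (MeasureTheory.volume.restrict (Icc a b)) := by
    intro i
    exact (MeasureTheory.integrable_const _).indicator measurableSet_Ioo
  simp_rw [hvol]
  rw [← MeasureTheory.integral_finsetSum _ (fun i _ => hint i)]
  have hpt : ∀ y, ∑ i ∈ Finset.range m, (J i).indicator (fun _ => (1:ℝ)) y ≤ N := by
    intro y
    have hτ : ∀ i, y ∈ J i → ∃ τ ∈ Ioo (p i) (p (i+1)), u τ = y := by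
      intro i hy
      have hle : p i ≤ p (i+1) := hp (Nat.le_succ i)
      have hc : ContinuousOn u (uIcc (p i) (p (i+1))) := by
        rw [uIcc_of_le hle]
        exact hu.mono (Icc_subset_Icc (hpm i).1 (hpm (i+1)).2)
      obtain ⟨τ, h1, h2⟩ := intermediate_value_uIcc hc (show y ∈ uIcc _ _ from ⟨hy.1.le, hy.2.le⟩)
      rw [uIcc_of_le hle] at h1
      refine ⟨τ, ⟨lt_of_le_of_ne h1.1 ?_, lt_of_le_of_ne h1.2 ?_⟩, h2⟩
      · rintro rfl
        rcases le_total (u (p i)) (u (p (i+1))) with h | h <;> simp [hJ, h, ← h2] at hy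
      · rintro rfl
        rcases le_total (u (p i)) (u (p (i+1))) with h | h <;> simp [hJ, h, ← h2] at hy
    choose! τ hτ1 hτ2 using hτ
    set T := (Finset.range m).filter (fun i => y ∈ J i) with hT
    have hinj : Set.InjOn τ T := by
      have key : ∀ i ∈ T, ∀ j ∈ T, i < j → τ i < τ j := by
        intro i hi j hj hij
        have h1 := hτ1 i (Finset.mem_filter.1 hi).2
        have h2 := hτ1 j (Finset.mem_filter.1 hj).2
        exact h1.2.trans_le ((hp hij).trans h2.1.le)
      intro i hi j hj hij
      rcases lt_trichotomy i j with h | h | h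
      · exact absurd hij (key i hi j hj h).ne
      · exact h
      · exact absurd hij (key j hj i hi h).ne'
    have hcard := hN y (T.image τ) (by
      intro t ht
      obtain ⟨i, hi, rfl⟩ := Finset.mem_image.1 ht
      have hy := (Finset.mem_filter.1 hi).2
      have h1 := hτ1 i hy
      exact ⟨⟨(hpm i).1.trans h1.1.le, h1.2.le.trans (hpm (i+1)).2⟩, hτ2 i hy⟩)
    rw [Finset.card_image_of_injOn hinj] at hcard
    have : ∑ i ∈ Finset.range m, (J i).indicator (fun _ => (1:ℝ)) y = (T.card : ℝ) := by
      simp only [Set.indicator_apply, hT]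
      exact Finset.sum_boole _ _
    rw [this]
    exact_mod_cast hcard
  calc ∫ y in Icc a b, ∑ i ∈ Finset.range m, (J i).indicator (fun _ => (1:ℝ)) y
      ≤ ∫ y in Icc a b, (N:ℝ) := by
        apply MeasureTheory.integral_mono
        · exact MeasureTheory.integrable_finsetSum _ (fun i _ => hint i)
        · exact MeasureTheory.integrable_const _
        · exact hpt
    _ = N * (b - a) := by
        simp [Real.volume_real_Icc_of_le hab, mul_comm]

lemma aux_C (w : ℂ) : ∫ θ in (0:ℝ)..Real.pi, |(Complex.exp (-(θ:ℂ) * I) * w).re| = 2 * ‖w‖ := by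
  have h1 : ∀ θ : ℝ, |(Complex.exp (-(θ:ℂ) * I) * w).re| = ‖w‖ * |Real.cos (θ - w.arg)| := by
    intro θ
    conv_lhs => rw [← Complex.norm_mul_exp_arg_mul_I w]
    rw [mul_left_comm, ← Complex.exp_add, Complex.re_ofReal_mul, abs_mul, abs_of_nonneg (norm_nonneg w)]
    congr 2
    rw [← add_mul, show (-(θ:ℂ) + (w.arg:ℂ)) = ((-(θ - w.arg) : ℝ) : ℂ) by push_cast; ring, Complex.exp_ofReal_mul_I_re, Real.cos_neg]
  simp_rw [h1]
  rw [intervalIntegral.integral_const_mul, intervalIntegral.integral_comp_sub_right (fun x => |Real.cos x|)]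
  have hper : Function.Periodic (fun x => |Real.cos x|) Real.pi := by
    intro x; simp [Real.cos_add_pi]
  have := hper.intervalIntegral_add_eq (0 - w.arg) (-(Real.pi/2))
  rw [show Real.pi - w.arg = 0 - w.arg + Real.pi by ring, this]
  have h2 : ∫ x in (-(Real.pi/2))..(-(Real.pi/2) + Real.pi), |Real.cos x| = ∫ x in (-(Real.pi/2))..(Real.pi/2), Real.cos x := by
    rw [show -(Real.pi/2) + Real.pi = Real.pi/2 by ring]
    apply intervalIntegral.integral_congr
    intro x hx
    rw [uIcc_of_le (by linarith [Real.pi_pos])] at hx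
    exact abs_of_nonneg (Real.cos_nonneg_of_mem_Icc hx)
  rw [h2, integral_cos]
  simp; ring

lemma aux_E (c : ℂ) (hc : c ≠ 0) (N : ℕ) (hN : N ≠ 0) :
    {θ : ℝ | (c * Complex.exp ((θ:ℂ) * I) ^ N).im = 0}.Countable := by
  refine (countable_range (fun k : ℤ => (k * Real.pi - c.arg) / N)).mono ?_
  intro θ hθ
  have hN' : (N:ℝ) ≠ 0 := by exact_mod_cast hN
  change (c * Complex.exp ((θ:ℂ) * I) ^ N).im = 0 at hθ
  rw [← Complex.norm_mul_exp_arg_mul_I c, ← Complex.exp_nat_mul, mul_assoc, ← Complex.exp_add,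
    Complex.im_ofReal_mul] at hθ
  rw [show ((c.arg:ℂ) * I + N * (θ * I)) = ((c.arg + N * θ : ℝ) : ℂ) * I by push_cast; ring,
    Complex.exp_ofReal_mul_I_im] at hθ
  have h := (mul_eq_zero.1 hθ).resolve_left (norm_ne_zero_iff.2 hc)
  obtain ⟨k, hk⟩ := Real.sin_eq_zero_iff.1 h
  refine ⟨k, ?_⟩
  simp only
  rw [hk]; field_simp; ring

lemma aux_F (γ : ℝ → ℂ) (V : ℝ) (hV : 0 ≤ V) (h : eVariationOn γ (Icc 0 1) ≤ ENNReal.ofReal V) :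
    ∫ t in (0 : ℝ)..1, ‖deriv γ t‖ ≤ V := by
  have hfin : ∀ s ⊆ Icc (0:ℝ) 1, eVariationOn γ s ≠ ⊤ := fun s hs =>
    ((eVariationOn.mono γ hs).trans h).trans_lt ENNReal.ofReal_lt_top |>.ne
  set v : ℝ → ℝ := fun t => (eVariationOn γ (Icc 0 t)).toReal with hv
  have hadd : ∀ x y, 0 ≤ x → x ≤ y → y ≤ 1 → v x + ‖γ y - γ x‖ ≤ v y := by
    intro x y h0 hxy h1
    have e := eVariationOn.Icc_add_Icc γ (s := univ) h0 hxy (mem_univ _)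
    simp only [univ_inter] at e
    simp only [hv]
    rw [← e, ENNReal.toReal_add (hfin _ (Icc_subset_Icc le_rfl (hxy.trans h1))) (hfin _ (Icc_subset_Icc h0 h1))]
    gcongr
    rw [← dist_eq_norm, dist_edist]
    apply ENNReal.toReal_mono (hfin _ (Icc_subset_Icc h0 h1))
    exact eVariationOn.edist_le γ ⟨hxy, le_rfl⟩ ⟨le_rfl, hxy⟩
  have hmono : MonotoneOn v (Icc 0 1) := by
    intro x hx y hy hxy
    have := hadd x y hx.1 hxy hy.2
    linarith [norm_nonneg (γ y - γ x)]
  have hmono' : MonotoneOn v (uIcc 0 1) := by rwa [uIcc_of_le zero_le_one]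
  have hint := hmono'.intervalIntegrable_deriv
  have hle := hmono'.intervalIntegral_deriv_mem_uIcc
  have hv0 : 0 ≤ v 0 := ENNReal.toReal_nonneg
  have hv1 : v 1 ≤ V := ENNReal.toReal_le_of_le_ofReal hV h
  have hv01 : v 0 ≤ v 1 := hmono (by simp) (by simp) zero_le_one
  rw [uIcc_of_le (by linarith)] at hle
  refine le_trans ?_ (hle.2.trans (by linarith))
  rw [intervalIntegral.integral_of_le zero_le_one, intervalIntegral.integral_of_le zero_le_one]
  rw [intervalIntegrable_iff_integrableOn_Ioc_of_le zero_le_one] at hint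
  apply MeasureTheory.integral_mono_of_nonneg
  · exact Filter.Eventually.of_forall fun t => norm_nonneg _
  · exact hint
  rw [← MeasureTheory.restrict_Ioo_eq_restrict_Ioc]
  have hd := hmono.ae_differentiableWithinAt measurableSet_Icc
  rw [MeasureTheory.ae_restrict_iff' measurableSet_Icc] at hd
  filter_upwards [MeasureTheory.ae_restrict_mem measurableSet_Ioo, MeasureTheory.ae_restrict_of_ae hd] with t ht hdt
  have hnh : Icc (0:ℝ) 1 ∈ nhds t := Icc_mem_nhds ht.1 ht.2
  have hvd : HasDerivAt v (deriv v t) t := ((hdt ⟨ht.1.le, ht.2.le⟩).differentiableAt hnh).hasDerivAt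
  by_cases hg : DifferentiableAt ℝ γ t
  · have h1 := (hasDerivAt_iff_tendsto_slope.1 hg.hasDerivAt).norm
    have h2 := hasDerivAt_iff_tendsto_slope.1 hvd
    refine le_of_tendsto_of_tendsto h1 h2 ?_
    filter_upwards [mem_nhdsWithin_of_mem_nhds hnh, self_mem_nhdsWithin] with y hy hne
    rw [slope_def_module, slope_def_field, norm_smul, norm_inv, Real.norm_eq_abs]
    rcases lt_or_gt_of_ne hne with hlt | hlt
    · have := hadd y t hy.1 hlt.le ht.2.le
      rw [abs_of_neg (by linarith), norm_sub_rev, ← neg_div_neg_eq, div_eq_inv_mul]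
      have : 0 < -(y - t) := by linarith
      gcongr
      linarith
    · have := hadd t y ht.1.le (le_of_lt hlt) hy.2
      have h0 : 0 < y - t := sub_pos.2 hlt
      rw [abs_of_pos h0, div_eq_inv_mul]
      gcongr
      linarith
  · rw [deriv_zero_of_not_differentiableAt hg, norm_zero]
    have := hmono.derivWithin_nonneg (x := t)
    rwa [derivWithin_of_mem_nhds hnh] at this

/-- Half-plane invariance. -/
lemma aux_A (s : ℕ) (hs : 2 ≤ s) (α : Fin s → ℂ) (n : Fin s → ℕ) (hn : ∀ j, 1 ≤ n j)
    (f : Polynomial ℂ) (hf : f = ∏ j, (X - C (α j)) ^ n j)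
    (β : ℂ) (hfβ : f.eval β ≠ 0) (γ : ℝ → ℂ) (hγ : ContinuousOn γ (Icc 0 1)) (hγ1 : γ 1 = β)
    (hγf : ∀ t ∈ Set.Icc (0 : ℝ) 1, f.eval (γ t) = (t : ℂ) * f.eval β)
    (c : ℂ) (M : ℝ) (hα : ∀ j, (c * α j).re ≤ M) (hβ : (c * β).re ≤ M) :
    ∀ t ∈ Icc (0:ℝ) 1, (c * γ t).re ≤ M := by
  have hc0 : ∀ z : ℂ, M < (c * z).re → c ≠ 0 := by
    rintro z hz rfl
    have := hα ⟨0, by omega⟩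
    simp at this hz
    linarith
  have hpos : ∀ z : ℂ, M < (c * z).re → ∀ j, 0 < (c * (z - α j)).re := by
    intro z hz j
    have := hα j
    rw [mul_sub, sub_re]; linarith
  have hev : ∀ z, f.eval z = ∏ j, (z - α j) ^ n j := by
    intro z; rw [hf, eval_prod]; simp
  have hne : ∀ z : ℂ, M < (c * z).re → ∀ j, z - α j ≠ 0 := by
    intro z hz j h0
    have := hpos z hz j
    simp [h0] at this
  have hfne : ∀ z : ℂ, M < (c * z).re → f.eval z ≠ 0 := by
    intro z hz
    rw [hev, Finset.prod_ne_zero_iff]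
    exact fun j _ => pow_ne_zero _ (hne z hz j)
  have hld : ∀ z : ℂ, M < (c * z).re → 
      f.derivative.eval z / f.eval z = ∑ j, (n j : ℂ) / (z - α j) := by
    intro z hz
    have : (fun z => f.eval z) = fun z => ∏ j, (z - α j) ^ n j := funext hev
    have h2 : logDeriv (fun z => f.eval z) z = ∑ j, (n j : ℂ) / (z - α j) := by
      rw [this, logDeriv_prod]
      · refine Finset.sum_congr rfl fun j _ => ?_
        rw [logDeriv_fun_pow (by fun_prop), logDeriv_apply]
        simp [div_eq_mul_inv]
      · intro j _; exact pow_ne_zero _ (hne z hz j)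
      · intro j _; fun_prop
    rw [← h2, logDeriv_apply, Polynomial.deriv]
  have hre : ∀ z : ℂ, M < (c * z).re → 0 < (c * (f.eval z / f.derivative.eval z)).re := by
    intro z hz
    have h1 : 0 < (f.derivative.eval z / f.eval z / c).re := by
      rw [hld z hz, Finset.sum_div, re_sum]
      apply Finset.sum_pos
      · intro j _
        have hp := hpos z hz j
        rw [div_div, mul_comm _ c, div_eq_mul_inv, ← ofReal_natCast, re_ofReal_mul, inv_re]
        have hnj : (0:ℝ) < n j := by exact_mod_cast hn j
        have : 0 < normSq (c * (z - α j)) := normSq_pos.2 (by intro h; simp [h] at hp)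
        positivity
      · exact ⟨⟨0, by omega⟩, Finset.mem_univ _⟩
    have h2 : c * (f.eval z / f.derivative.eval z) = (f.derivative.eval z / f.eval z / c)⁻¹ := by
      rw [inv_div, div_div_eq_mul_div, mul_div_assoc]
    rw [h2, inv_re]
    exact div_pos h1 (normSq_pos.2 (by intro h; simp [h] at h1))
  intro t ht
  by_contra! hlt
  have hd : ∀ x ∈ Ioo (0:ℝ) 1, M < (c * γ x).re → 0 < deriv (fun t => (c * γ t).re) x := by
    intro x hx hM
    have hxI : x ∈ Icc (0:ℝ) 1 := ⟨hx.1.le, hx.2.le⟩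
    have hf' : f.derivative.eval (γ x) ≠ 0 := by
      intro h0
      have := hre _ hM
      simp [h0] at this
    have hsd : HasStrictDerivAt (fun z => f.eval z) (f.derivative.eval (γ x)) (γ x) := f.hasStrictDerivAt _
    have hcx : ContinuousAt γ x := hγ.continuousAt (Icc_mem_nhds hx.1 hx.2)
    have hinv := hsd.to_localInverse hf'
    have hleft := (hsd.hasStrictFDerivAt_equiv hf').eventually_left_inverse
    have hev2 := hcx.eventually hleft
    set g := hsd.localInverse (fun z => f.eval z) _ _ hf' with hg
    have heq : γ =ᶠ[nhds x] fun t => g ((t:ℂ) * f.eval β) := by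
      filter_upwards [hev2, Icc_mem_nhds hx.1 hx.2] with y hy hyI
      rw [← hγf y hyI]; exact hy.symm
    have hlin : HasDerivAt (fun t : ℝ => (t:ℂ) * f.eval β) (f.eval β) x := by
      simpa using (Complex.ofRealCLM.hasDerivAt (x := x)).mul_const (f.eval β)
    have hinv' : HasDerivAt g (f.derivative.eval (γ x))⁻¹ ((x:ℂ) * f.eval β) := by
      rw [← hγf x hxI]; exact hinv.hasDerivAt
    have hγd : HasDerivAt γ ((f.derivative.eval (γ x))⁻¹ * f.eval β) x :=
      (hinv'.comp x hlin).congr_of_eventuallyEq heq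
    have hud : HasDerivAt (fun t => (c * γ t).re) (c * ((f.derivative.eval (γ x))⁻¹ * f.eval β)).re x := by
      have := (hγd.const_mul c)
      exact Complex.reCLM.hasFDerivAt.comp_hasDerivAt x this
    rw [hud.deriv]
    have h3 : c * ((f.derivative.eval (γ x))⁻¹ * f.eval β) = ((x⁻¹ : ℝ) : ℂ) * (c * (f.eval (γ x) / f.derivative.eval (γ x))) := by
      rw [hγf x hxI]
      have : (x:ℂ) ≠ 0 := by exact_mod_cast hx.1.ne'
      push_cast
      field_simp
    rw [h3, re_ofReal_mul]
    exact mul_pos (inv_pos.2 hx.1) (hre _ hM)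
  set u := fun t => (c * γ t).re with hu
  have huc : ContinuousOn u (Icc 0 1) := by
    exact Complex.continuous_re.comp_continuousOn (continuousOn_const.mul hγ)
  have ht0 : 0 < t := by
    rcases ht.1.eq_or_lt with h | h
    · subst h
      have := hfne _ hlt
      rw [hγf 0 ht] at this; simp at this
    · exact h
  set S := Icc t 1 ∩ u ⁻¹' Iic M with hS
  have hSc : IsClosed S := (huc.mono (Icc_subset_Icc ht.1 le_rfl)).preimage_isClosed_of_isClosed isClosed_Icc isClosed_Iic
  have hSn : S.Nonempty := ⟨1, ⟨ht.2, le_rfl⟩, by simpa [hu, hγ1] using hβ⟩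
  have hSb : BddBelow S := ⟨t, fun x hx => hx.1.1⟩
  have hmem := hSc.csInf_mem hSn hSb
  set t1 := sInf S with ht1
  have hlt1 : t < t1 := by
    rcases hmem.1.1.eq_or_lt with h | h
    · have := hmem.2
      rw [← h] at this
      exact absurd this (not_le.2 hlt)
    · exact h
  have hsm : StrictMonoOn u (Icc t t1) := by
    apply strictMonoOn_of_deriv_pos (convex_Icc _ _)
    · exact huc.mono (Icc_subset_Icc ht.1 hmem.1.2)
    · intro x hx
      rw [interior_Icc] at hx
      have hx1 : x < 1 := hx.2.trans_le hmem.1.2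
      refine hd x ⟨ht0.trans hx.1, hx1⟩ ?_
      by_contra! hle
      exact absurd (csInf_le hSb (show x ∈ S from ⟨⟨hx.1.le, hx1.le⟩, hle⟩)) (not_le.2 hx.2)
  have h1 := hsm ⟨le_rfl, hlt1.le⟩ ⟨hlt1.le, le_rfl⟩ hlt1
  have h2 : u t1 ≤ M := hmem.2
  have h3 : M < u t := hlt
  linarith

lemma aux_D (f : Polynomial ℂ) (N : ℕ) (hmon : f.Monic) (hdeg : f.natDegree = N)
    (β : ℂ) (hfβ : f.eval β ≠ 0) (γ : ℝ → ℂ)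
    (hγf : ∀ t ∈ Set.Icc (0 : ℝ) 1, f.eval (γ t) = (t : ℂ) * f.eval β)
    (θ : ℝ) (hθ : (I ^ N / f.eval β * Complex.exp ((θ:ℂ) * I) ^ N).im ≠ 0) (y : ℝ) (S : Finset ℝ)
    (hS : ∀ t ∈ S, t ∈ Icc (0:ℝ) 1 ∧ (Complex.exp (-(θ:ℂ) * I) * γ t).re = y) : S.card ≤ N := by
  classical
  set e := Complex.exp ((θ:ℂ) * I) with he
  have he0 : e ≠ 0 := Complex.exp_ne_zero _
  have hee : e * Complex.exp (-(θ:ℂ) * I) = 1 := by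
    rw [he, ← Complex.exp_add]; simp
  set ℓ : Polynomial ℂ := C (e * I) * X + C (e * y) with hℓ
  have heI : e * I ≠ 0 := mul_ne_zero he0 I_ne_zero
  have hℓd : ℓ.natDegree = 1 := natDegree_linear heI
  have hℓl : ℓ.leadingCoeff = e * I := leadingCoeff_linear heI
  set q : Polynomial ℂ := C (f.eval β)⁻¹ * f.comp ℓ with hq
  have hqd : q.natDegree ≤ N := by
    refine (natDegree_C_mul_le _ _).trans ?_
    rw [natDegree_comp, hℓd, hdeg, mul_one]
  have hqc : q.coeff N = I ^ N / f.eval β * e ^ N := by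
    have := coeff_comp_degree_mul_degree (p := f) (q := ℓ) (by rw [hℓd]; simp)
    rw [hℓd, mul_one, hdeg, hmon.leadingCoeff, hℓl] at this
    rw [hq, coeff_C_mul, this]
    rw [mul_pow]; field_simp
  set Q : Polynomial ℂ := q - q.map (starRingEnd ℂ) with hQ
  have hQd : Q.natDegree ≤ N := (natDegree_sub_le _ _).trans (max_le hqd (natDegree_map_le.trans hqd))
  have hQ0 : Q ≠ 0 := by
    intro h0
    have : Q.coeff N = 0 := by rw [h0]; simp
    rw [hQ, coeff_sub, coeff_map, sub_eq_zero, hqc] at this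
    exact hθ (Complex.conj_eq_iff_im.1 this.symm)
  set φ : ℝ → ℂ := fun t => (((Complex.exp (-(θ:ℂ) * I) * γ t).im : ℝ) : ℂ) with hφ
  have hrec : ∀ t ∈ S, γ t = ℓ.eval (φ t) := by
    intro t ht
    have h1 := Complex.re_add_im (Complex.exp (-(θ:ℂ) * I) * γ t)
    rw [(hS t ht).2] at h1
    simp only [hℓ, hφ, eval_add, eval_mul, eval_C, eval_X]
    calc γ t = e * (Complex.exp (-(θ:ℂ) * I) * γ t) := by rw [← mul_assoc, hee, one_mul]
      _ = _ := by rw [← h1]; simp; ring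
  have hqe : ∀ t ∈ S, q.eval (φ t) = t := by
    intro t ht
    rw [hq, eval_mul, eval_C, eval_comp, ← hrec t ht, hγf t (hS t ht).1]
    field_simp
  have hroot : ∀ t ∈ S, φ t ∈ Q.roots.toFinset := by
    intro t ht
    rw [Multiset.mem_toFinset, mem_roots hQ0, IsRoot.def, hQ, eval_sub, sub_eq_zero]
    have h1 : φ t = (starRingEnd ℂ) (φ t) := by simp [hφ]
    have h2 : (q.map (starRingEnd ℂ)).eval (φ t) = (starRingEnd ℂ) (q.eval (φ t)) := by
      conv_lhs => rw [h1]
      rw [eval_map, eval₂_hom]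
    rw [h2, hqe t ht]; simp
  have hinj : Set.InjOn φ S := by
    intro a ha b hb hab
    have := hqe a ha
    rw [hab, hqe b hb] at this
    exact_mod_cast this.symm
  calc S.card ≤ Q.roots.toFinset.card := Finset.card_le_card_of_injOn φ hroot hinj
    _ ≤ Q.roots.card := Multiset.toFinset_card_le _
    _ ≤ Q.natDegree := card_roots' _
    _ ≤ N := hQd

lemma aux_var (s : ℕ) (hs : 2 ≤ s) (α : Fin s → ℂ) (n : Fin s → ℕ) (hn : ∀ j, 1 ≤ n j)
    (N : ℕ) (hN : N = ∑ j, n j)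
    (f : Polynomial ℂ) (hf : f = ∏ j, (X - C (α j)) ^ n j)
    (z₀ : ℂ) (R : ℝ) (hR : 0 < R) (hα : ∀ j, ‖α j - z₀‖ ≤ R)
    (β : ℂ) (hβ : β ∈ convexHull ℝ (Set.range α)) (hfβ : f.eval β ≠ 0)
    (γ : ℝ → ℂ) (hγ : ContinuousOn γ (Icc 0 1)) (hγ1 : γ 1 = β)
    (hγf : ∀ t ∈ Set.Icc (0 : ℝ) 1, f.eval (γ t) = (t : ℂ) * f.eval β) :
    eVariationOn γ (Icc 0 1) ≤ ENNReal.ofReal (Real.pi * N * R) := by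
  have hN0 : N ≠ 0 := by
    have h1 : n ⟨0, by omega⟩ ≤ ∑ j, n j := Finset.single_le_sum (fun _ _ => Nat.zero_le _) (Finset.mem_univ _)
    have := hn ⟨0, by omega⟩
    omega
  have hmon : f.Monic := by
    rw [hf]; exact monic_prod_of_monic _ _ fun j _ => (monic_X_sub_C _).pow _
  have hdeg : f.natDegree = N := by
    rw [hf, natDegree_prod_of_monic _ _ fun j _ => (monic_X_sub_C _).pow _, hN]
    simp
  -- half-plane consequences
  have hhalf : ∀ c : ℂ, ‖c‖ = 1 → ∀ t ∈ Icc (0:ℝ) 1, (c * γ t).re ≤ (c * z₀).re + R := by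
    intro c hc
    have hα' : ∀ j, (c * α j).re ≤ (c * z₀).re + R := by
      intro j
      have h1 : (c * (α j - z₀)).re ≤ ‖c * (α j - z₀)‖ := Complex.re_le_norm _
      rw [norm_mul, hc, one_mul, mul_sub, sub_re] at h1
      linarith [hα j]
    refine aux_A s hs α n hn f hf β hfβ γ hγ hγ1 hγf c _ hα' ?_
    have hconv : Convex ℝ {z : ℂ | (c * z).re ≤ (c * z₀).re + R} :=
      convex_halfSpace_le (f := fun z : ℂ => (c * z).re)
        ⟨fun x y => by simp only [mul_add, add_re], fun a x => by simp; ring⟩ _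
    have hsub : Set.range α ⊆ {z : ℂ | (c * z).re ≤ (c * z₀).re + R} := by
      rintro _ ⟨j, rfl⟩; exact hα' j
    exact convexHull_min hsub hconv hβ
  have hnorm : ∀ θ : ℝ, ‖Complex.exp (-(θ:ℂ) * I)‖ = 1 := by
    intro θ
    have := Complex.norm_exp_ofReal_mul_I (-θ)
    simpa using this
  -- the sum bound
  unfold eVariationOn
  refine iSup_le ?_
  rintro ⟨m, p, hp, hpm⟩
  simp only
  have hae : ∀ᵐ θ : ℝ, (I ^ N / f.eval β * Complex.exp ((θ:ℂ) * I) ^ N).im ≠ 0 := by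
    have hc : (I ^ N / f.eval β) ≠ 0 := div_ne_zero (pow_ne_zero _ I_ne_zero) hfβ
    have := (aux_E _ hc N hN0).ae_notMem MeasureTheory.volume
    filter_upwards [this] with θ h
    exact h
  have hdir : ∀ᵐ θ : ℝ, ∑ i ∈ Finset.range m, |(Complex.exp (-(θ:ℂ) * I) * (γ (p (i+1)) - γ (p i))).re|
      ≤ N * (2 * R) := by
    filter_upwards [hae] with θ hθ
    set c := Complex.exp (-(θ:ℂ) * I) with hc
    have huc : ContinuousOn (fun t => (c * γ t).re) (Icc 0 1) :=
      Complex.continuous_re.comp_continuousOn (continuousOn_const.mul hγ)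
    have := aux_B (fun t => (c * γ t).re) huc ((c * z₀).re - R) ((c * z₀).re + R) (by linarith)
      (by
        intro t ht
        refine ⟨?_, hhalf c (hnorm θ) t ht⟩
        have := hhalf (-c) (by rw [norm_neg]; exact hnorm θ) t ht
        simp only [neg_mul, neg_re] at this
        linarith) N
      (fun y S hS => aux_D f N hmon hdeg β hfβ γ hγf θ hθ y S hS) p hp hpm m
    calc _ = ∑ i ∈ Finset.range m, |(c * γ (p (i+1))).re - (c * γ (p i)).re| := by
          refine Finset.sum_congr rfl fun i _ => ?_
          rw [mul_sub, sub_re]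
      _ ≤ _ := this
      _ = _ := by ring
  have hcont : ∀ i, Continuous fun θ : ℝ => |(Complex.exp (-(θ:ℂ) * I) * (γ (p (i+1)) - γ (p i))).re| := by
    intro i; fun_prop
  have hsum : ∑ i ∈ Finset.range m, 2 * ‖γ (p (i+1)) - γ (p i)‖ ≤ 2 * (Real.pi * N * R) := by
    calc _ = ∑ i ∈ Finset.range m, ∫ θ in (0:ℝ)..Real.pi, |(Complex.exp (-(θ:ℂ) * I) * (γ (p (i+1)) - γ (p i))).re| :=
          Finset.sum_congr rfl fun i _ => (aux_C _).symm
      _ = ∫ θ in (0:ℝ)..Real.pi, ∑ i ∈ Finset.range m, |(Complex.exp (-(θ:ℂ) * I) * (γ (p (i+1)) - γ (p i))).re| :=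
          (intervalIntegral.integral_finsetSum fun i _ => (hcont i).intervalIntegrable _ _).symm
      _ ≤ ∫ θ in (0:ℝ)..Real.pi, (N * (2 * R) : ℝ) := by
          apply intervalIntegral.integral_mono_ae Real.pi_pos.le
          · exact (continuous_finsetSum _ fun i _ => hcont i).intervalIntegrable _ _
          · exact intervalIntegrable_const
          · exact hdir
      _ = _ := by simp; ring
  rw [← Finset.mul_sum] at hsum
  have hsum' : ∑ i ∈ Finset.range m, ‖γ (p (i+1)) - γ (p i)‖ ≤ Real.pi * N * R := by linarith
  refine le_trans (le_of_eq ?_) (ENNReal.ofReal_le_ofReal hsum')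
  rw [ENNReal.ofReal_sum_of_nonneg fun i _ => norm_nonneg _]
  refine Finset.sum_congr rfl fun i _ => ?_
  rw [edist_dist, dist_eq_norm]

/-- A path of steepest descent for `|f|` from a point `β` of
the convex hull `K` of the roots of `f` to a root of `f` has length at most
`π N R`, where `R` is the radius of a closed disk containing `K`. -/
theorem steepest_descent_length_le
    (s : ℕ) (hs : 2 ≤ s)
    (α : Fin s → ℂ) (hα : Function.Injective α)
    (n : Fin s → ℕ) (hn : ∀ j, 1 ≤ n j)
    (N : ℕ) (hN : N = ∑ j, n j)
    (f : Polynomial ℂ) (hf : f = ∏ j, (X - C (α j)) ^ n j)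
    (K : Set ℂ) (hK : K = convexHull ℝ (Set.range α))
    (z₀ : ℂ) (R : ℝ) (hR : 0 < R) (hKD : K ⊆ Metric.closedBall z₀ R)
    (β : ℂ) (hβ : β ∈ K)
    (γ : ℝ → ℂ) (hγpc : PiecewiseC1On γ 0 1)
    (hγ1 : γ 1 = β)
    (hγf : ∀ t ∈ Set.Icc (0 : ℝ) 1, f.eval (γ t) = (t : ℂ) * f.eval β) :
    ∫ t in (0 : ℝ)..1, ‖deriv γ t‖ ≤ Real.pi * N * R := by
  have hV : 0 ≤ Real.pi * N * R := by positivity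
  apply aux_F γ _ hV
  have hγ := hγpc.1
  by_cases hfβ : f.eval β = 0
  · have hsub : γ '' Icc 0 1 ⊆ {z | f.IsRoot z} := by
      rintro _ ⟨t, ht, rfl⟩
      change f.eval (γ t) = 0
      rw [hγf t ht, hfβ, mul_zero]
    have hf0 : f ≠ 0 := by
      rw [hf]; exact (monic_prod_of_monic _ _ fun j _ => (monic_X_sub_C _).pow _).ne_zero
    have hfin : (γ '' Icc 0 1).Finite := (finite_setOf_isRoot hf0).subset hsub
    have hpre : IsPreconnected (γ '' Icc 0 1) := isPreconnected_Icc.image _ hγ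
    have hss : (γ '' Icc 0 1).Subsingleton := by
      by_contra h
      rw [Set.not_subsingleton_iff] at h
      exact hpre.infinite_of_nontrivial h hfin
    rw [eVariationOn.constant_on hss]
    exact zero_le
  · subst hK
    refine aux_var s hs α n hn N hN f hf z₀ R hR ?_ β hβ hfβ γ hγ hγ1 hγf
    intro j
    have := hKD (subset_convexHull ℝ _ (mem_range_self j))
    rwa [Metric.mem_closedBall, dist_eq_norm] at this
end

section
/- Let β ∈ 𝒦 and let γ : [0,1] → ℂ be a continuous, piecewise continuously differentiable map with γ(1) = β and f(γ(t)) = t·f(β) for all t ∈ [0,1]. If the root α = γ(0) of f lies on the topological boundary of 𝒦, then the length of γ satisfies ∫₀¹ |γ′(t)| dt ≤ 2π·s·R. -/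
open Polynomial Complex Set

namespace SD

lemma int_const {S : Set ℂ} (hS : IsPreconnected S) (g : ℂ → ℝ) (c : ℝ) (hg : ContinuousOn g S)
    (hk : ∀ z ∈ S, ∃ k : ℤ, g z = k + c) {x y : ℂ} (hx : x ∈ S) (hy : y ∈ S) : g x = g y := by
  have hd : IsDiscrete (Set.range ((↑) : ℤ → ℝ)) := by
    have := Int.isClosedEmbedding_coe_real.isEmbedding
    rw [← Set.image_univ]
    exact IsDiscrete.image (isDiscrete_univ_iff.mpr inferInstance) this.isInducing
  have := hS.constant_of_mapsTo hd (f := fun z => g z - c) (hg.sub continuousOn_const)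
    (fun z hz => by
      obtain ⟨k, hk⟩ := hk z hz
      exact ⟨k, by simp [hk]⟩) hx hy
  simpa using this

noncomputable def A (γ γ' : ℝ → ℂ) (u v : ℝ) (z : ℂ) : ℂ := ∫ t in u..v, γ' t / (γ t - z)

lemma A_cont_integrand {γ γ' : ℝ → ℂ} {u v : ℝ} 
    (hc : ContinuousOn γ (Icc u v)) (hc' : ContinuousOn γ' (Icc u v)) {z : ℂ}
    (hz : z ∉ γ '' Icc u v) : ContinuousOn (fun t => γ' t / (γ t - z)) (Icc u v) := by
  apply hc'.div (hc.sub continuousOn_const)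
  intro t ht h
  have h : γ t - z = 0 := h
  exact hz ⟨t, ht, by linear_combination h⟩

lemma exp_A {γ γ' : ℝ → ℂ} {u v : ℝ} (huv : u < v)
    (hd : ∀ t ∈ Icc u v, HasDerivAt γ (γ' t) t) (hc' : ContinuousOn γ' (Icc u v)) {z : ℂ}
    (hz : z ∉ γ '' Icc u v) : exp (A γ γ' u v z) = (γ v - z) / (γ u - z) := by
  have hc : ContinuousOn γ (Icc u v) := fun t ht => (hd t ht).continuousAt.continuousWithinAt
  have hg := A_cont_integrand hc hc' hz
  have hint : IntervalIntegrable (fun t => γ' t / (γ t - z)) MeasureTheory.volume u v :=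
    (hg.mono (by rw [uIcc_of_le huv.le])).intervalIntegrable
  have hne : ∀ t ∈ Icc u v, γ t - z ≠ 0 := by
    intro t ht h
    exact hz ⟨t, ht, by linear_combination h⟩
  set G : ℝ → ℂ := fun t => ∫ x in u..t, γ' x / (γ x - z) with hG
  have hGc : ContinuousOn G (Icc u v) := by
    have := intervalIntegral.continuousOn_primitive_interval' hint (a := u) (by simp)
    rwa [uIcc_of_le huv.le] at this
  have key := constant_of_has_deriv_right_zero (f := fun t => exp (-G t) * (γ t - z)) (a := u) (b := v)
    ((continuous_exp.comp_continuousOn hGc.neg).mul (hc.sub continuousOn_const)) (by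
      intro x hx
      have hx' : x ∈ Icc u v := ⟨hx.1, hx.2.le⟩
      have h1 : HasDerivWithinAt G (γ' x / (γ x - z)) (Ici x) x := by
        apply intervalIntegral.integral_hasDerivWithinAt_right (t := Ioi x)
        · exact hint.mono_set (by rw [uIcc_of_le huv.le, uIcc_of_le hx.1]; exact Icc_subset_Icc le_rfl hx.2.le)
        · have := hg.mono (Ioo_subset_Icc_self)
          refine ⟨Ioo x v, Ioo_mem_nhdsGT hx.2, ?_⟩
          exact ((hg.mono (fun y hy => ⟨hx.1.trans hy.1.le, hy.2.le⟩)).aestronglyMeasurable measurableSet_Ioo)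
        · have := hg x hx'
          apply this.mono_of_mem_nhdsWithin
          filter_upwards [Ioo_mem_nhdsGT hx.2] with y hy
          exact ⟨hx.1.trans hy.1.le, hy.2.le⟩
      have h2 := (h1.neg.cexp).mul ((hd x hx').hasDerivWithinAt.sub_const z)
      have hnx := hne x hx'
      have h3 : (0 : ℂ) = cexp (-G x) * -(γ' x / (γ x - z)) * (γ x - z) + cexp (-G x) * γ' x := by
        field_simp
        ring
      change HasDerivWithinAt _ (cexp (-G x) * -(γ' x / (γ x - z)) * (γ x - z) + cexp (-G x) * γ' x) _ _ at h2
      rw [← h3] at h2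
      exact h2) v (right_mem_Icc.2 huv.le)
  have h0 : G u = 0 := by simp [hG]
  have hGv : G v = A γ γ' u v z := rfl
  simp only [h0, hGv, neg_zero, exp_zero, one_mul] at key
  rw [eq_div_iff (hne u (left_mem_Icc.2 huv.le)), ← key, ← mul_assoc, ← exp_add]
  simp

lemma A_continuousAt {γ γ' : ℝ → ℂ} {u v : ℝ} (huv : u < v)
    (hc : ContinuousOn γ (Icc u v)) (hc' : ContinuousOn γ' (Icc u v)) {z : ℂ}
    (hz : z ∉ γ '' Icc u v) : ContinuousAt (A γ γ' u v) z := by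
  have hcomp : IsCompact (γ '' Icc u v) := isCompact_Icc.image_of_continuousOn hc
  obtain ⟨δ, hδ, hball⟩ := Metric.isOpen_iff.1 hcomp.isClosed.isOpen_compl z hz
  obtain ⟨M, hM⟩ := isCompact_Icc.exists_bound_of_continuousOn hc'
  have hnear : ∀ᶠ z' in nhds z, dist z' z < δ / 2 := Metric.ball_mem_nhds z (half_pos hδ)
  have hIoc : uIoc u v ⊆ Icc u v := by rw [uIoc_of_le huv.le]; exact Ioc_subset_Icc_self
  apply intervalIntegral.continuousAt_of_dominated_interval (bound := fun _ => M / (δ / 2))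
  · filter_upwards [hnear] with z' hz'
    have h1 : z' ∉ γ '' Icc u v := hball (by rw [Metric.mem_ball]; linarith)
    exact ((A_cont_integrand hc hc' h1).mono hIoc).aestronglyMeasurable measurableSet_uIoc
  · filter_upwards [hnear] with z' hz'
    refine Filter.Eventually.of_forall fun t ht => ?_
    have ht := hIoc ht
    rw [norm_div]
    have h2 : δ ≤ dist (γ t) z := by
      by_contra h
      exact hball (Metric.mem_ball.2 (not_le.1 h)) ⟨t, ht, rfl⟩
    have h3 : δ / 2 ≤ ‖γ t - z'‖ := by
      rw [← dist_eq_norm]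
      linarith [dist_triangle (γ t) z' z]
    have := hM t ht
    exact div_le_div₀ ((norm_nonneg _).trans this) this (half_pos hδ) h3
  · simp
  · refine Filter.Eventually.of_forall fun t ht => ?_
    have ht := hIoc ht
    apply ContinuousAt.div continuousAt_const (continuousAt_const.sub continuousAt_id)
    intro h
    have h : γ t - z = 0 := h
    exact hz ⟨t, ht, by linear_combination h⟩

lemma A_tendsto {γ γ' : ℝ → ℂ} {u v : ℝ} (huv : u < v)
    (hc : ContinuousOn γ (Icc u v)) (hc' : ContinuousOn γ' (Icc u v)) :
    ∀ ε > 0, ∃ B, ∀ z : ℂ, B < ‖z‖ → ‖A γ γ' u v z‖ < ε := by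
  intro ε hε
  obtain ⟨M, hM⟩ := isCompact_Icc.exists_bound_of_continuousOn hc'
  obtain ⟨M2, hM2⟩ := isCompact_Icc.exists_bound_of_continuousOn hc
  have hM0 : 0 ≤ M := (norm_nonneg _).trans (hM u (left_mem_Icc.2 huv.le))
  refine ⟨M2 + (M * (v - u) + 1) / ε, fun z hz => ?_⟩
  have hvu : 0 < v - u := sub_pos.2 huv
  set D := (M * (v - u) + 1) / ε with hD
  have hDpos : 0 < D := by positivity
  have hIoc : uIoc u v ⊆ Icc u v := by rw [uIoc_of_le huv.le]; exact Ioc_subset_Icc_self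
  have := intervalIntegral.norm_integral_le_of_norm_le_const (a := u) (b := v)
    (f := fun t => γ' t / (γ t - z)) (C := M / D) (by
      intro t ht
      have ht := hIoc ht
      rw [norm_div]
      refine div_le_div₀ hM0 (hM t ht) hDpos ?_
      have h1 := norm_sub_norm_le z (γ t)
      rw [norm_sub_rev] at h1
      linarith [hM2 t ht])
  refine lt_of_le_of_lt this ?_
  rw [abs_of_pos hvu, div_mul_eq_mul_div, div_lt_iff₀ hDpos, hD]
  field_simp
  linarith

end SD


namespace SD

section wind

variable (γ γ' : ℝ → ℂ) (u v : ℝ)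

/-- the closing segment -/
def seg (p q : ℂ) : Set ℂ := {z | z.im = p.im ∧ q.re ≤ z.re ∧ z.re ≤ p.re}

def J : Set ℂ := γ '' Icc u v ∪ seg (γ u) (γ v)

noncomputable def W (z : ℂ) : ℝ := (A γ γ' u v z + log ((γ u - z) / (γ v - z))).im / (2 * Real.pi)

noncomputable def W0 (z : ℂ) : ℝ :=
  (A γ γ' u v z + log (-((γ u - z) / (γ v - z)))).im / (2 * Real.pi)

lemma ratio_im {p q z : ℂ} (hpq : p.im = q.im) :
    ((p - z) / (q - z)).im = (p.im - z.im) * (q.re - p.re) / normSq (q - z) := by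
  rw [Complex.div_im]
  simp only [sub_re, sub_im, ← hpq]
  ring

lemma ratio_re {p q z : ℂ} (hpq : p.im = q.im) (hz : z.im = p.im) :
    ((p - z) / (q - z)).re = (p.re - z.re) * (q.re - z.re) / normSq (q - z) := by
  rw [Complex.div_re]
  simp only [sub_re, sub_im, ← hpq, hz]
  ring

lemma normSq_sub_pos {q z : ℂ} (h : z ≠ q) : 0 < normSq (q - z) :=
  normSq_pos.2 (sub_ne_zero.2 h.symm)

lemma ratio_slit {p q z : ℂ} (hpq : p.im = q.im) (hlt : q.re < p.re) (hz : z ∉ seg p q) :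
    (p - z) / (q - z) ∈ slitPlane := by
  have hq : z ≠ q := by
    rintro rfl
    exact hz ⟨hpq.symm, le_rfl, hlt.le⟩
  have hpos := normSq_sub_pos hq
  rw [mem_slitPlane_iff]
  by_cases him : z.im = p.im
  · left
    rw [ratio_re hpq him]
    apply div_pos _ hpos
    have : ¬ (q.re ≤ z.re ∧ z.re ≤ p.re) := fun h => hz ⟨him, h⟩
    rcases lt_or_ge z.re q.re with h | h
    · exact mul_pos (by linarith) (by linarith)
    · have : p.re < z.re := by
        by_contra h'
        exact this ⟨h, not_lt.1 h'⟩
      exact mul_pos_of_neg_of_neg (by linarith) (by linarith)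
  · right
    rw [ratio_im hpq]
    exact div_ne_zero (mul_ne_zero (sub_ne_zero.2 (Ne.symm him)) (by linarith)) hpos.ne'

lemma neg_ratio_slit {p q z : ℂ} (hpq : p.im = q.im) (hlt : q.re < p.re)
    (hz : z.im = p.im → q.re < z.re ∧ z.re < p.re) :
    -((p - z) / (q - z)) ∈ slitPlane := by
  have hq : z ≠ q := by
    rintro rfl
    exact lt_irrefl _ (hz hpq.symm).1
  have hpos := normSq_sub_pos hq
  rw [mem_slitPlane_iff]
  by_cases him : z.im = p.im
  · left
    rw [neg_re, ratio_re hpq him, neg_pos]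
    obtain ⟨h1, h2⟩ := hz him
    apply div_neg_of_neg_of_pos _ hpos
    exact mul_neg_of_pos_of_neg (by linarith) (by linarith)
  · right
    rw [neg_im, ratio_im hpq, neg_ne_zero]
    exact div_ne_zero (mul_ne_zero (sub_ne_zero.2 (Ne.symm him)) (by linarith)) hpos.ne'

variable {γ γ' u v}

lemma W_below (hpq : (γ u).im = (γ v).im) (hlt : (γ v).re < (γ u).re) {z : ℂ} (hz : z.im < (γ u).im) :
    W γ γ' u v z = W0 γ γ' u v z - 1 / 2 := by
  have hq : z ≠ γ v := by
    rintro rfl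
    linarith
  have him : ((γ u - z) / (γ v - z)).im < 0 := by
    rw [ratio_im hpq]
    exact div_neg_of_neg_of_pos (mul_neg_of_pos_of_neg (by linarith) (by linarith)) (normSq_sub_pos hq)
  have := arg_neg_eq_arg_add_pi_of_im_neg him
  simp only [W, W0, add_im, log_im, this]
  have := Real.pi_pos
  field_simp
  ring

lemma W_above (hpq : (γ u).im = (γ v).im) (hlt : (γ v).re < (γ u).re) {z : ℂ} (hz : (γ u).im < z.im) :
    W γ γ' u v z = W0 γ γ' u v z + 1 / 2 := by
  have hq : z ≠ γ v := by
    rintro rfl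
    linarith
  have him : 0 < ((γ u - z) / (γ v - z)).im := by
    rw [ratio_im hpq]
    exact div_pos (mul_pos_of_neg_of_neg (by linarith) (by linarith)) (normSq_sub_pos hq)
  have := arg_neg_eq_arg_sub_pi_of_im_pos him
  simp only [W, W0, add_im, log_im, this]
  have := Real.pi_pos
  field_simp
  ring

lemma W_int (huv : u < v) (hpq : (γ u).im = (γ v).im) (hlt : (γ v).re < (γ u).re)
    (hd : ∀ t ∈ Icc u v, HasDerivAt γ (γ' t) t) (hc' : ContinuousOn γ' (Icc u v)) {z : ℂ}
    (hz : z ∉ J γ u v) : ∃ k : ℤ, W γ γ' u v z = k := by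
  have h1 := exp_A huv hd hc' (fun h => hz (Or.inl h))
  have hu : γ u - z ≠ 0 := fun h => hz (Or.inl ⟨u, left_mem_Icc.2 huv.le, by linear_combination h⟩)
  have hv : γ v - z ≠ 0 := fun h => hz (Or.inl ⟨v, right_mem_Icc.2 huv.le, by linear_combination h⟩)
  have h2 : exp (A γ γ' u v z + log ((γ u - z) / (γ v - z))) = 1 := by
    rw [exp_add, h1, exp_log (div_ne_zero hu hv)]
    field_simp
  obtain ⟨k, hk⟩ := exp_eq_one_iff.1 h2
  refine ⟨k, ?_⟩
  rw [W, hk]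
  have := Real.pi_pos
  simp

lemma W0_int (huv : u < v) 
    (hd : ∀ t ∈ Icc u v, HasDerivAt γ (γ' t) t) (hc' : ContinuousOn γ' (Icc u v)) {z : ℂ}
    (hz : z ∉ γ '' Icc u v) : ∃ k : ℤ, W0 γ γ' u v z = k + 1 / 2 := by
  have h1 := exp_A huv hd hc' hz
  have hu : γ u - z ≠ 0 := fun h => hz (⟨u, left_mem_Icc.2 huv.le, by linear_combination h⟩)
  have hv : γ v - z ≠ 0 := fun h => hz (⟨v, right_mem_Icc.2 huv.le, by linear_combination h⟩)
  have h2 : exp (A γ γ' u v z + log (-((γ u - z) / (γ v - z))) - Real.pi * I) = 1 := by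
    rw [exp_sub, exp_add, h1, exp_log (neg_ne_zero.2 (div_ne_zero hu hv)), exp_pi_mul_I]
    field_simp
  obtain ⟨k, hk⟩ := exp_eq_one_iff.1 h2
  refine ⟨k, ?_⟩
  rw [W0, sub_eq_iff_eq_add.1 hk]
  have := Real.pi_pos
  simp
  field_simp

lemma W_cont (huv : u < v) (hpq : (γ u).im = (γ v).im) (hlt : (γ v).re < (γ u).re)
    (hc : ContinuousOn γ (Icc u v)) (hc' : ContinuousOn γ' (Icc u v)) {z : ℂ}
    (hz : z ∉ J γ u v) : ContinuousAt (W γ γ' u v) z := by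
  have h1 := A_continuousAt huv hc hc' (fun h => hz (Or.inl h))
  have hv : γ v - z ≠ 0 := fun h => hz (Or.inl ⟨v, right_mem_Icc.2 huv.le, by linear_combination h⟩)
  have h2 : ContinuousAt (fun z => log ((γ u - z) / (γ v - z))) z := by
    refine ContinuousAt.clog ?_ (by exact ratio_slit hpq hlt (fun h => hz (Or.inr h)))
    exact ContinuousAt.div (by fun_prop) (by fun_prop) hv
  exact (continuous_im.continuousAt.comp (h1.add h2)).div_const _

lemma W0_cont (huv : u < v) (hpq : (γ u).im = (γ v).im) (hlt : (γ v).re < (γ u).re)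
    (hc : ContinuousOn γ (Icc u v)) (hc' : ContinuousOn γ' (Icc u v)) {z : ℂ}
    (hz : z ∉ γ '' Icc u v) (hz2 : z.im = (γ u).im → (γ v).re < z.re ∧ z.re < (γ u).re) :
    ContinuousAt (W0 γ γ' u v) z := by
  have h1 := A_continuousAt huv hc hc' hz
  have hv : γ v - z ≠ 0 := fun h => hz (⟨v, right_mem_Icc.2 huv.le, by linear_combination h⟩)
  have h2 : ContinuousAt (fun z => log (-((γ u - z) / (γ v - z)))) z := by
    refine ContinuousAt.clog ?_ (by exact neg_ratio_slit hpq hlt hz2)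
    exact (ContinuousAt.div (by fun_prop) (by fun_prop) hv).neg
  exact (continuous_im.continuousAt.comp (h1.add h2)).div_const _

lemma W_far (huv : u < v) (hpq : (γ u).im = (γ v).im) (hlt : (γ v).re < (γ u).re)
    (hd : ∀ t ∈ Icc u v, HasDerivAt γ (γ' t) t) (hc' : ContinuousOn γ' (Icc u v)) :
    ∃ B, ∀ z, z ∉ J γ u v → B < ‖z‖ → W γ γ' u v z = 0 := by
  have hc : ContinuousOn γ (Icc u v) := fun t ht => (hd t ht).continuousAt.continuousWithinAt
  obtain ⟨B, hB⟩ := A_tendsto huv hc hc' 1 one_pos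
  have hlog : ∀ᶠ w in nhds (1 : ℂ), ‖log w‖ < 1 := by
    have : ContinuousAt (fun w => ‖log w‖) 1 := (continuousAt_clog (by simp)).norm
    have h := this.tendsto
    simp only [log_one, norm_zero] at h
    exact h.eventually (gt_mem_nhds one_pos)
  obtain ⟨δ, hδ, hδ2⟩ := Metric.eventually_nhds_iff.1 hlog
  refine ⟨max B (‖γ v‖ + ‖γ u - γ v‖ / δ), fun z hz hBz => ?_⟩
  obtain ⟨k, hk⟩ := W_int huv hpq hlt hd hc' hz
  have h1 := hB z ((le_max_left _ _).trans_lt hBz)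
  have h2 := (le_max_right _ _).trans_lt hBz
  have hv : γ v - z ≠ 0 := fun h => hz (Or.inl ⟨v, right_mem_Icc.2 huv.le, by linear_combination h⟩)
  have h3 : ‖log ((γ u - z) / (γ v - z))‖ < 1 := by
    apply hδ2
    rw [dist_eq_norm]
    have : (γ u - z) / (γ v - z) - 1 = (γ u - γ v) / (γ v - z) := by
      field_simp
      ring
    rw [this, norm_div, div_lt_iff₀ (norm_pos_iff.2 hv)]
    have h5 := norm_sub_norm_le z (γ v)
    rw [norm_sub_rev] at h5
    have h6 : ‖γ u - γ v‖ / δ < ‖γ v - z‖ := by linarith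
    rw [div_lt_iff₀ hδ] at h6
    linarith
  have h4 : |W γ γ' u v z| < 1 := by
    have hpi := Real.pi_gt_three
    rw [W, abs_div, abs_of_pos (by positivity : (0:ℝ) < 2 * Real.pi), div_lt_one (by positivity)]
    have := (abs_im_le_norm (A γ γ' u v z + log ((γ u - z) / (γ v - z)))).trans (norm_add_le _ _)
    linarith
  rw [hk] at h4 ⊢
  have : |k| < 1 := by exact_mod_cast h4
  rw [Int.abs_lt_one_iff] at this
  simp [this]

end wind
end SD


namespace SD

noncomputable def LL {s : ℕ} (α : Fin s → ℂ) (n : Fin s → ℕ) (z : ℂ) : ℂ :=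
  ∑ j, (n j : ℂ) / (z - α j)

structure GoodPath {s : ℕ} (α : Fin s → ℂ) (n : Fin s → ℕ) (c : ℂ) (γ γ' : ℝ → ℂ) : Prop where
  c0 : c ≠ 0
  npos : ∀ j, 1 ≤ n j
  cont : ContinuousOn γ (Icc 0 1)
  eqF : ∀ t ∈ Icc (0 : ℝ) 1, ∏ j, (γ t - α j) ^ n j = (t : ℂ) * c
  der : ∀ t ∈ Ioo (0 : ℝ) 1, HasDerivAt γ (γ' t) t
  eqL : ∀ t ∈ Ioo (0 : ℝ) 1, γ' t * LL α n (γ t) = ((1 / t : ℝ) : ℂ)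
  out : ∀ ε > 0, ∃ z ν : ℂ, dist z (γ 0) < ε ∧ ∀ t ∈ Icc (0 : ℝ) 1, (ν * γ t).re < (ν * z).re

namespace GoodPath

variable {s : ℕ} {α : Fin s → ℂ} {n : Fin s → ℕ} {c : ℂ} {γ γ' : ℝ → ℂ}

lemma inj (h : GoodPath α n c γ γ') : InjOn γ (Icc 0 1) := by
  intro a ha b hb hab
  have h1 := h.eqF a ha
  rw [hab, h.eqF b hb] at h1
  exact_mod_cast (mul_right_cancel₀ h.c0 h1).symm

lemma avoid (h : GoodPath α n c γ γ') {t : ℝ} (ht : t ∈ Ioc (0 : ℝ) 1) (j : Fin s) : γ t ≠ α j := by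
  intro he
  have h1 := h.eqF t ⟨ht.1.le, ht.2⟩
  rw [Finset.prod_eq_zero (Finset.mem_univ j)] at h1
  · have := mul_ne_zero (ofReal_ne_zero.2 ht.1.ne') h.c0
    exact this h1.symm
  · rw [he, sub_self, zero_pow]
    have := h.npos j
    omega

lemma LL_ne (h : GoodPath α n c γ γ') {t : ℝ} (ht : t ∈ Ioo (0 : ℝ) 1) : LL α n (γ t) ≠ 0 := by
  intro he
  have := h.eqL t ht
  rw [he, mul_zero] at this
  have h2 : (1 / t : ℝ) ≠ 0 := one_div_ne_zero ht.1.ne'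
  exact h2 (ofReal_eq_zero.1 this.symm)

lemma cont' (h : GoodPath α n c γ γ') : ContinuousOn γ' (Ioo 0 1) := by
  have hL : ContinuousOn (fun t => LL α n (γ t)) (Ioo 0 1) := by
    unfold LL
    refine continuousOn_finsetSum _ fun j _ => ?_
    refine ContinuousOn.div continuousOn_const ((h.cont.mono Ioo_subset_Icc_self).sub continuousOn_const) ?_
    intro t ht he
    exact h.avoid ⟨ht.1, ht.2.le⟩ j (sub_eq_zero.1 he)
  have h2 : ContinuousOn (fun t : ℝ => ((1 / t : ℝ) : ℂ)) (Ioo 0 1) := by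
    apply continuous_ofReal.comp_continuousOn
    exact continuousOn_const.div continuousOn_id (fun t ht => ht.1.ne')
  refine (h2.div hL (fun t ht => h.LL_ne ht)).congr fun t ht => ?_
  rw [Pi.div_apply, eq_div_iff (h.LL_ne ht)]
  exact h.eqL t ht

lemma im_pos_of_mul {w l : ℂ} {r : ℝ} (hr : 0 < r) (hl : l.im < 0) (h : w * l = (r : ℂ)) : 0 < w.im := by
  have hl0 : l ≠ 0 := by
    rintro rfl
    simp at hl
  have : w = r / l := by
    rw [← h]; field_simp
  rw [this, Complex.div_im]
  have := normSq_pos.2 hl0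
  simp only [ofReal_im, ofReal_re, zero_mul, zero_div, zero_sub]
  rw [neg_pos]
  exact div_neg_of_neg_of_pos (mul_neg_of_pos_of_neg hr hl) this

lemma exists_cross {g : ℝ → ℝ} {d u : ℝ} (hd : HasDerivAt g d u) (hpos : 0 < d) :
    ∃ δ > 0, ∀ t, |t - u| < δ → (t < u → g t < g u) ∧ (u < t → g u < g t) := by
  have h1 := (hasDerivAt_iff_tendsto_slope.1 hd).eventually (lt_mem_nhds hpos)
  rw [eventually_nhdsWithin_iff, Metric.eventually_nhds_iff] at h1
  obtain ⟨δ, hδ, h⟩ := h1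
  refine ⟨δ, hδ, fun t ht => ⟨fun htu => ?_, fun htu => ?_⟩⟩
  · have := h (y := t) ht htu.ne
    rw [slope_def_field, div_pos_iff] at this
    rcases this with ⟨_, _⟩ | ⟨_, _⟩ <;> linarith
  · have := h (y := t) ht htu.ne'
    rw [slope_def_field, div_pos_iff] at this
    rcases this with ⟨_, _⟩ | ⟨_, _⟩ <;> linarith

/-- The polynomial cannot be real-after-scaling on the boundary of a nonempty bounded open set. -/
lemma no_real_boundary (h : GoodPath α n c γ γ') {U : Set ℂ} (hU : IsOpen U)
    (hb : Bornology.IsBounded U) (hne : U.Nonempty)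
    (hfr : frontier U ⊆ γ '' Icc 0 1) : False := by
  set G : ℂ → ℂ := fun z => (∏ j, (z - α j) ^ n j) / c with hG
  have hGd : Differentiable ℂ G := by
    apply Differentiable.div_const
    fun_prop
  have hGfr : ∀ z ∈ frontier U, (G z).im = 0 := by
    intro z hz
    obtain ⟨t, ht, rfl⟩ := hfr hz
    simp only [hG]
    rw [h.eqF t ht, mul_div_cancel_right₀ _ h.c0, ofReal_im]
  have key : ∀ r : ℝ, ∀ z ∈ U, ((r : ℂ) * I * G z).re ≤ 0 := by
    intro r z hz
    have h1 : Differentiable ℂ (fun z => exp ((r : ℂ) * I * G z)) := (hGd.const_mul _).cexp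
    have := Complex.norm_le_of_forall_mem_frontier_norm_le hb (C := 1) h1.diffContOnCl (by
      intro w hw
      rw [norm_exp]
      simp [hGfr w hw]) (subset_closure hz)
    rw [norm_exp, Real.exp_le_one_iff] at this
    exact this
  have him : ∀ z ∈ U, (G z).im = 0 := by
    intro z hz
    have h1 := key 1 z hz
    have h2 := key (-1) z hz
    simp at h1 h2
    linarith
  obtain ⟨z₁, hz₁⟩ := hne
  have han : AnalyticOnNhd ℂ G univ := hGd.differentiableOn.analyticOnNhd isOpen_univ
  rcases (han z₁ (mem_univ _)).eventually_constant_or_nhds_le_map_nhds with h1 | h1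
  · have h2 := han.eq_of_eventuallyEq (g := fun _ => G z₁) analyticOnNhd_const h1
    have h3 : G (γ 0) = G (γ 1) := by rw [h2]
    simp only [hG] at h3
    rw [h.eqF 0 (by simp), h.eqF 1 (by simp)] at h3
    have := h.c0
    simp [this] at h3
  · have h2 : {w : ℂ | w.im = 0} ∈ nhds (G z₁) := by
      apply h1
      rw [Filter.mem_map]
      filter_upwards [hU.mem_nhds hz₁] with z hz
      exact him z hz
    obtain ⟨ε, hε, hball⟩ := Metric.mem_nhds_iff.1 h2
    have h3 : G z₁ + (ε / 2 : ℝ) * I ∈ Metric.ball (G z₁) ε := by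
      rw [Metric.mem_ball, dist_eq_norm]
      simp [abs_of_pos hε]
      linarith
    have := hball h3
    have h4 := him z₁ hz₁
    simp [h4] at this
    linarith

end GoodPath
end SD


namespace SD
namespace GoodPath

variable {s : ℕ} {α : Fin s → ℂ} {n : Fin s → ℕ} {c : ℂ} {γ γ' : ℝ → ℂ}

/-- sign of the total argument change along the closing segment -/
lemma seg_arg_neg {p q : ℂ} (hpq : p.im = q.im) (hlt : q.re < p.re)
    (hα : ∀ j, (α j).im ≠ p.im)
    (hH : ∀ x ∈ Icc q.re p.re, (LL α n (x + p.im * I)).im < 0) :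
    (∑ j, (n j : ℂ) * log ((p - α j) / (q - α j))).im < 0 := by
  set φ : ℝ → ℂ := fun x => ∑ j, (n j : ℂ) * log ((x + p.im * I - α j) / (q - α j)) with hφ
  have hqne : ∀ j, q - α j ≠ 0 := fun j he => hα j (by rw [hpq, sub_eq_zero.1 he])
  have hd : ∀ x : ℝ, HasDerivAt φ (LL α n (x + p.im * I)) x := by
    intro x
    have : ∀ j ∈ Finset.univ, HasDerivAt (fun x : ℝ => (n j : ℂ) * log ((x + p.im * I - α j) / (q - α j)))
        ((n j : ℂ) / (x + p.im * I - α j)) x := by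
      intro j _
      have hne : (x : ℂ) + p.im * I - α j ≠ 0 := by
        intro he
        apply hα j
        have := congrArg im he
        simp at this
        linarith
      have h1 : HasDerivAt (fun x : ℝ => ((x : ℂ) + p.im * I - α j) / (q - α j)) (1 / (q - α j)) x := by
        have := (((hasDerivAt_id x).ofReal_comp.add_const (p.im * I)).sub_const (α j)).div_const (q - α j)
        simpa using this
      have hs : ((x : ℂ) + p.im * I - α j) / (q - α j) ∈ slitPlane := by
        rw [mem_slitPlane_iff]
        by_cases hx : x = q.re
        · left
          have : (x : ℂ) + p.im * I = q := by
            apply Complex.ext <;> simp [hx, hpq]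
          rw [this, div_self (hqne j)]
          simp
        · right
          rw [ratio_im (by simpa using hpq)]
          refine div_ne_zero (mul_ne_zero ?_ ?_) (normSq_pos.2 (hqne j)).ne'
          · simpa [sub_eq_zero] using (hα j).symm
          · simpa [sub_eq_zero] using Ne.symm hx
      have h2 := (h1.clog_real hs).const_mul (n j : ℂ)
      refine h2.congr_deriv ?_
      have := hqne j
      field_simp
    have := HasDerivAt.fun_sum this
    exact this
  have hdim : ∀ x : ℝ, HasDerivAt (fun x => (φ x).im) (LL α n (x + p.im * I)).im x := by
    intro x
    exact imCLM.hasFDerivAt.comp_hasDerivAt x (hd x)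
  have hanti : StrictAntiOn (fun x => (φ x).im) (Icc q.re p.re) := by
    apply strictAntiOn_of_deriv_neg (convex_Icc _ _)
    · exact fun x _ => (hdim x).continuousAt.continuousWithinAt
    · intro x hx
      rw [(hdim x).deriv]
      exact hH x (interior_subset hx)
  have h1 := hanti (left_mem_Icc.2 hlt.le) (right_mem_Icc.2 hlt.le) hlt
  have hq : φ q.re = 0 := by
    simp only [hφ]
    apply Finset.sum_eq_zero
    intro j _
    have : (q.re : ℂ) + p.im * I = q := by
      apply Complex.ext <;> simp [hpq]
    rw [this, div_self (hqne j)]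
    simp
  have hp : φ p.re = ∑ j, (n j : ℂ) * log ((p - α j) / (q - α j)) := by
    simp only [hφ, re_add_im]
  simp only [hq, hp, zero_im] at h1
  exact h1

lemma sum_A_im (h : GoodPath α n c γ γ') {u v : ℝ} (hu : 0 < u) (huv : u < v) (hv : v < 1) :
    (∑ j, (n j : ℂ) * A γ γ' u v (α j)).im = 0 := by
  have hsub : Icc u v ⊆ Ioo 0 1 := fun t ht => ⟨hu.trans_le ht.1, ht.2.trans_lt hv⟩
  have hc : ContinuousOn γ (Icc u v) := h.cont.mono (hsub.trans Ioo_subset_Icc_self)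
  have hc' : ContinuousOn γ' (Icc u v) := h.cont'.mono hsub
  have hz : ∀ j, α j ∉ γ '' Icc u v := by
    rintro j ⟨t, ht, he⟩
    exact h.avoid ⟨(hsub ht).1, (hsub ht).2.le⟩ j he
  have h1 : ∑ j, (n j : ℂ) * A γ γ' u v (α j) = ∫ t in u..v, ((1 / t : ℝ) : ℂ) := by
    unfold A
    simp_rw [← intervalIntegral.integral_const_mul]
    rw [← intervalIntegral.integral_finsetSum]
    · apply intervalIntegral.integral_congr
      intro t ht
      rw [uIcc_of_le huv.le] at ht
      simp only
      rw [← h.eqL t (hsub ht), LL, Finset.mul_sum]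
      refine Finset.sum_congr rfl fun j _ => ?_
      ring
    · intro j _
      apply ContinuousOn.intervalIntegrable
      rw [uIcc_of_le huv.le]
      exact continuousOn_const.mul (A_cont_integrand hc hc' (hz j))
  rw [h1, intervalIntegral.integral_ofReal, ofReal_im]

lemma core_false (h : GoodPath α n c γ γ') {u v : ℝ} (hu : 0 < u) (huv : u < v) (hv : v < 1)
    (hpq : (γ u).im = (γ v).im) (hlt : (γ v).re < (γ u).re)
    (hno : ∀ t ∈ Icc (0 : ℝ) 1, (γ t).im = (γ u).im → ¬ ((γ v).re < (γ t).re ∧ (γ t).re < (γ u).re))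
    (hα : ∀ j, (α j).im ≠ (γ u).im)
    (hH : ∀ x ∈ Icc (γ v).re (γ u).re, (LL α n (x + (γ u).im * I)).im < 0) : False := by
  have hsub : Icc u v ⊆ Ioo 0 1 := fun t ht => ⟨hu.trans_le ht.1, ht.2.trans_lt hv⟩
  have hsub' : Icc u v ⊆ Icc 0 1 := hsub.trans Ioo_subset_Icc_self
  have hc : ContinuousOn γ (Icc u v) := h.cont.mono hsub'
  have hc' : ContinuousOn γ' (Icc u v) := h.cont'.mono hsub
  have hd : ∀ t ∈ Icc u v, HasDerivAt γ (γ' t) t := fun t ht => h.der t (hsub ht)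
  have hu01 : u ∈ Icc (0 : ℝ) 1 := ⟨hu.le, by linarith⟩
  have hv01 : v ∈ Icc (0 : ℝ) 1 := ⟨by linarith, hv.le⟩
  set p := γ u with hp
  set q := γ v with hq
  have hImgcl : IsClosed (γ '' Icc u v) := (isCompact_Icc.image_of_continuousOn hc).isClosed
  have hsegcl : IsClosed (seg p q) := by
    apply IsClosed.inter
    · exact isClosed_eq continuous_im continuous_const
    · exact (isClosed_le continuous_const continuous_re).inter (isClosed_le continuous_re continuous_const)
  have hJcl : IsClosed (J γ u v) := hImgcl.union hsegcl
  have hWcont : ∀ z, z ∉ J γ u v → ContinuousAt (W γ γ' u v) z := fun z hz => W_cont huv hpq hlt hc hc' hz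
  have hWint : ∀ z, z ∉ J γ u v → ∃ k : ℤ, W γ γ' u v z = k := fun z hz => W_int huv hpq hlt hd hc' hz
  have hWconst : ∀ S : Set ℂ, IsPreconnected S → (∀ z ∈ S, z ∉ J γ u v) → ∀ x ∈ S, ∀ y ∈ S,
      W γ γ' u v x = W γ γ' u v y := by
    intro S hS hSJ x hx y hy
    refine int_const hS _ 0 (fun z hz => (hWcont z (hSJ z hz)).continuousWithinAt) ?_ hx hy
    intro z hz
    simpa using hWint z (hSJ z hz)
  -- the early part of the path does not meet `J`
  have hearly : ∀ t ∈ Ico 0 u, γ t ∉ J γ u v := by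
    intro t ht hJ
    have ht01 : t ∈ Icc (0 : ℝ) 1 := ⟨ht.1, by linarith [ht.2]⟩
    rcases hJ with ⟨t', ht', he⟩ | ⟨h1, h2, h3⟩
    · have := h.inj (hsub' ht') ht01 he
      linarith [ht.2, ht'.1]
    · apply hno t ht01 h1
      refine ⟨lt_of_le_of_ne h2 ?_, lt_of_le_of_ne h3 ?_⟩
      · intro he
        have := h.inj hv01 ht01 (Complex.ext he (by rw [h1]; exact hpq.symm))
        linarith [ht.2]
      · intro he
        have := h.inj ht01 hu01 (Complex.ext he h1)
        linarith [ht.2]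
  -- winding number is zero at the start
  have hW0 : W γ γ' u v (γ 0) = 0 := by
    have h0 := hearly 0 ⟨le_rfl, hu⟩
    obtain ⟨ε, hε, hball⟩ := Metric.isOpen_iff.1 hJcl.isOpen_compl _ h0
    obtain ⟨z, ν, hz, hν⟩ := h.out ε hε
    have e1 := hWconst _ (convex_ball (γ 0) ε).isPreconnected (fun z hz => hball hz) _
      (Metric.mem_ball_self hε) z hz
    rw [e1]
    have hν0 : ν ≠ 0 := by
      rintro rfl
      have := hν 0 (by simp)
      simp at this
    have hhalf : ∀ w, (ν * z).re ≤ (ν * w).re → w ∉ J γ u v := by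
      rintro w hw (⟨t, ht, rfl⟩ | ⟨h1, h2, h3⟩)
      · exact absurd (hν t (hsub' ht)) (not_lt.2 hw)
      · have hpν := hν u hu01
        have hqν := hν v hv01
        simp only [mul_re] at hw hpν hqν
        rw [← hp] at hpν
        rw [← hq, ← hpq] at hqν
        rw [h1] at hw
        rcases le_or_gt 0 ν.re with h0 | h0
        · nlinarith
        · nlinarith
    obtain ⟨B, hB⟩ := W_far huv hpq hlt hd hc'
    have hconv : Convex ℝ {w : ℂ | (ν * z).re ≤ (ν * w).re} := by
      have : IsLinearMap ℝ (fun w : ℂ => (ν * w).re) :=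
        ⟨fun a b => by simp [mul_add], fun a b => by simp; ring⟩
      exact convex_halfSpace_ge this _
    have hνn : 0 < normSq ν := normSq_pos.2 hν0
    have hνp : 0 < ‖ν‖ := norm_pos_iff.2 hν0
    obtain ⟨r, hr0, hr⟩ : ∃ r : ℝ, 0 ≤ r ∧ B + ‖z‖ < r * ‖ν‖ := by
      refine ⟨(|B| + ‖z‖ + 1) / ‖ν‖, by positivity, ?_⟩
      rw [div_mul_cancel₀ _ hνp.ne']
      linarith [le_abs_self B]
    set w : ℂ := z + r * (starRingEnd ℂ) ν with hw
    have hwmem : (ν * z).re ≤ (ν * w).re := by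
      rw [hw, mul_add, add_re]
      have : ν * (r * (starRingEnd ℂ) ν) = ((r * normSq ν : ℝ) : ℂ) := by
        rw [mul_left_comm, mul_conj]
        push_cast; rfl
      rw [this, ofReal_re]
      have := mul_nonneg hr0 hνn.le
      linarith
    rw [hWconst _ hconv.isPreconnected (fun w hw => hhalf w hw) z (le_refl (ν * z).re) w hwmem]
    apply hB w (hhalf w hwmem)
    have h5 : ‖(r : ℂ) * (starRingEnd ℂ) ν‖ = r * ‖ν‖ := by
      rw [norm_mul, RCLike.norm_conj, norm_real, Real.norm_of_nonneg hr0]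
    have h6 := norm_sub_le w z
    have h7 : w - z = (r : ℂ) * (starRingEnd ℂ) ν := by rw [hw]; ring
    rw [h7, h5] at h6
    linarith
  have hWearly : ∀ t ∈ Ico 0 u, W γ γ' u v (γ t) = 0 := by
    intro t ht
    rw [← hW0]
    have hpre : IsPreconnected (γ '' Ico 0 u) :=
      isPreconnected_Ico.image _ (h.cont.mono (fun x hx => ⟨hx.1, by linarith [hx.2]⟩))
    refine hWconst _ hpre ?_ _ ⟨t, ht, rfl⟩ _ ⟨0, ⟨le_rfl, hu⟩, rfl⟩
    rintro _ ⟨x, hx, rfl⟩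
    exact hearly x hx
  -- crossing direction
  have hpeq : (p.re : ℂ) + p.im * I = γ u := by rw [re_add_im]
  have hup : 0 < (γ' u).im := by
    have h1 := hH p.re (right_mem_Icc.2 hlt.le)
    rw [hpeq] at h1
    exact im_pos_of_mul (one_div_pos.2 hu) h1 (h.eqL u ⟨hu, by linarith⟩)
  obtain ⟨δ, hδ, hcross⟩ := exists_cross
    (show HasDerivAt (fun t => (γ t).im) (γ' u).im u from
      imCLM.hasFDerivAt.comp_hasDerivAt u (h.der u ⟨hu, by linarith⟩)) hup
  -- the lower half ball
  obtain ⟨ρ, hρ, hρball⟩ : ∃ ρ > 0, ∀ z ∈ Metric.ball p ρ, z ∉ γ '' Icc (u + δ / 2) v := by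
    have hcl : IsClosed (γ '' Icc (u + δ / 2) v) :=
      (isCompact_Icc.image_of_continuousOn (hc.mono (Icc_subset_Icc (by linarith) le_rfl))).isClosed
    have hpn : p ∈ (γ '' Icc (u + δ / 2) v)ᶜ := by
      rintro ⟨t, ht, he⟩
      have := h.inj (hsub' ⟨by linarith [ht.1], ht.2⟩) hu01 he
      linarith [ht.1]
    obtain ⟨ρ, hρ, hb⟩ := Metric.isOpen_iff.1 hcl.isOpen_compl p hpn
    exact ⟨ρ, hρ, fun z hz => hb hz⟩
  have hLBJ : ∀ z ∈ Metric.ball p ρ ∩ {z | z.im < p.im}, z ∉ J γ u v := by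
    rintro z ⟨hz1, hz2⟩ (⟨t, ht, rfl⟩ | ⟨h1, _⟩)
    · have hz2 : (γ t).im < p.im := hz2
      rcases lt_or_ge t (u + δ / 2) with h1 | h1
      · rcases eq_or_lt_of_le ht.1 with h2 | h2
        · rw [← h2] at hz2
          exact lt_irrefl _ hz2
        · have := (hcross t (by rw [abs_lt]; constructor <;> linarith)).2 h2
          exact lt_asymm this hz2
      · exact hρball _ hz1 ⟨t, ⟨h1, ht.2⟩, rfl⟩
    · have hz2 : z.im < p.im := hz2
      exact hz2.ne h1
  have hLBpre : IsPreconnected (Metric.ball p ρ ∩ {z | z.im < p.im}) := by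
    apply Convex.isPreconnected
    apply (convex_ball p ρ).inter
    exact convex_halfSpace_im_lt _
  have hWLB : ∀ z ∈ Metric.ball p ρ ∩ {z | z.im < p.im}, W γ γ' u v z = 0 := by
    have h1 : ∀ᶠ t in nhdsWithin u (Iio u), γ t ∈ Metric.ball p ρ :=
      ((h.der u ⟨hu, by linarith⟩).continuousAt.eventually (Metric.ball_mem_nhds p hρ)).filter_mono
        nhdsWithin_le_nhds
    have h2 : ∀ᶠ t in nhdsWithin u (Iio u), t ∈ Ioo (max 0 (u - δ)) u :=
      Ioo_mem_nhdsLT (max_lt hu (by linarith))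
    obtain ⟨t, ht1, ht2⟩ := (h1.and h2).exists
    have h3 := (max_lt_iff.1 ht2.1)
    have h4 := (hcross t (by rw [abs_lt]; constructor <;> linarith [ht2.2])).1 ht2.2
    intro z hz
    rw [hWconst _ hLBpre hLBJ z hz (γ t) ⟨ht1, h4⟩]
    exact hWearly t ⟨h3.1.le, ht2.2⟩
  -- the open segment
  set O : Set ℂ := {z | z.im = p.im ∧ q.re < z.re ∧ z.re < p.re} with hO
  have hOimg : ∀ z ∈ O, z ∉ γ '' Icc u v := by
    rintro _ ⟨h1, h2⟩ ⟨t, ht, rfl⟩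
    exact hno t (hsub' ht) h1 h2
  have hOcont : ∀ z ∈ O, ContinuousAt (W0 γ γ' u v) z := fun z hz =>
    W0_cont huv hpq hlt hc hc' (hOimg z hz) (fun _ => hz.2)
  have hOloc : ∀ z ∈ O, ∀ᶠ z' in nhds z, W0 γ γ' u v z' = W0 γ γ' u v z := by
    intro z hz
    obtain ⟨k, hk⟩ := W0_int huv hd hc' (hOimg z hz)
    filter_upwards [hImgcl.isOpen_compl.mem_nhds (hOimg z hz),
      Metric.continuousAt_iff'.1 (hOcont z hz) 1 one_pos] with z' hz1 hz2
    obtain ⟨k', hk'⟩ := W0_int huv hd hc' hz1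
    rw [Real.dist_eq, hk, hk'] at hz2
    have h1 : |((k' - k : ℤ) : ℝ)| < 1 := by
      push_cast
      convert hz2 using 2
      ring
    have h2 : |k' - k| < 1 := by exact_mod_cast h1
    rw [Int.abs_lt_one_iff, sub_eq_zero] at h2
    rw [hk, hk', h2]
  have hOpre : IsPreconnected O := by
    apply Convex.isPreconnected
    apply Convex.inter
    · have he : {z : ℂ | z.im ≤ p.im} ∩ {z : ℂ | p.im ≤ z.im} = (fun z : ℂ => z.im = p.im) := by
        ext z
        exact (le_antisymm_iff (a := z.im) (b := p.im)).symm
      rw [← he]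
      exact (convex_halfSpace_im_le p.im).inter (convex_halfSpace_im_ge p.im)
    · exact (convex_halfSpace_re_gt q.re).inter (convex_halfSpace_re_lt p.re)
  have hW0O : ∀ z ∈ O, W0 γ γ' u v z = 1 / 2 := by
    set η := min (ρ / 2) ((p.re - q.re) / 2) with hη
    have hη0 : 0 < η := lt_min (by linarith) (by linarith)
    have hη1 : η ≤ ρ / 2 := min_le_left _ _
    have hη2 : η ≤ (p.re - q.re) / 2 := min_le_right _ _
    have hx0 : p - η ∈ O := by
      refine ⟨by simp, ?_, ?_⟩ <;> simp <;> linarith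
    have hx0b : p - η ∈ Metric.ball p ρ := by
      rw [Metric.mem_ball, dist_eq_norm]
      simp [abs_of_pos hη0]
      linarith
    have htend : Filter.Tendsto (fun ε : ℝ => (p - η) - ε * I) (nhdsWithin 0 (Ioi 0)) (nhds (p - η)) := by
      have : Continuous (fun ε : ℝ => (p - η) - ε * I) := by fun_prop
      have := this.tendsto 0
      simp only [ofReal_zero, zero_mul, sub_zero] at this
      exact this.mono_left nhdsWithin_le_nhds
    have h1 := htend.eventually ((hOloc _ hx0).and (Metric.isOpen_ball.mem_nhds hx0b))
    obtain ⟨ε, ⟨h2, h3⟩, h4⟩ := (h1.and self_mem_nhdsWithin).exists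
    have h4 : 0 < ε := h4
    have him : ((p - η) - ε * I).im < p.im := by simp [h4]
    have h5 := hWLB _ ⟨h3, him⟩
    rw [W_below hpq hlt him, h2] at h5
    intro z hz
    have := int_const hOpre (W0 γ γ' u v) (1 / 2) (fun z hz => (hOcont z hz).continuousWithinAt)
      (fun z hz => W0_int huv hd hc' (hOimg z hz)) hz hx0
    linarith
  -- nonnegativity
  have hWnn : ∀ z, z ∉ J γ u v → 0 ≤ W γ γ' u v z := by
    by_contra! hcon
    obtain ⟨z₁, hz₁, hz₁'⟩ := hcon
    set U : Set ℂ := {z | z ∉ J γ u v ∧ W γ γ' u v z < 0} with hU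
    have hUo : IsOpen U := by
      rw [isOpen_iff_mem_nhds]
      rintro z ⟨h1, h2⟩
      filter_upwards [hJcl.isOpen_compl.mem_nhds h1, (hWcont z h1).eventually (gt_mem_nhds h2)] with z' a b
      exact ⟨a, b⟩
    have hUle : ∀ z ∈ U, W γ γ' u v z ≤ -1 := by
      rintro z ⟨h1, h2⟩
      obtain ⟨k, hk⟩ := hWint z h1
      rw [hk] at h2 ⊢
      have : k < 0 := by exact_mod_cast h2
      have : k ≤ -1 := by omega
      exact_mod_cast this
    obtain ⟨B, hB⟩ := W_far huv hpq hlt hd hc'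
    refine h.no_real_boundary hUo ?_ ⟨z₁, hz₁, hz₁'⟩ ?_
    · refine (Metric.isBounded_closedBall (x := (0 : ℂ)) (r := B)).subset ?_
      rintro z ⟨h1, h2⟩
      rw [mem_closedBall_zero_iff]
      by_contra h3
      rw [hB z h1 (not_le.1 h3)] at h2
      exact lt_irrefl _ h2
    · intro z hz
      by_contra hzn
      have hzn' : z ∉ γ '' Icc u v := fun hh => hzn (image_mono hsub' hh)
      have hzcl : ∃ᶠ z' in nhds z, z' ∈ U := mem_closure_iff_frequently.1 (frontier_subset_closure hz)
      have hzU : z ∉ U := by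
        have := hz.2
        rwa [hUo.interior_eq] at this
      by_cases hzJ : z ∈ J γ u v
      · rcases hzJ with h1 | ⟨h1, h2, h3⟩
        · exact hzn' h1
        have hzO : z ∈ O := by
          refine ⟨h1, lt_of_le_of_ne h2 ?_, lt_of_le_of_ne h3 ?_⟩
          · intro he
            exact hzn' ⟨v, right_mem_Icc.2 huv.le, Complex.ext he (by rw [h1]; exact hpq.symm)⟩
          · intro he
            exact hzn' ⟨u, left_mem_Icc.2 huv.le, Complex.ext he.symm h1.symm⟩
        have hre : ∀ᶠ z' in nhds z, q.re < z'.re ∧ z'.re < p.re :=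
          (continuous_re.continuousAt.eventually (lt_mem_nhds hzO.2.1)).and
            (continuous_re.continuousAt.eventually (gt_mem_nhds hzO.2.2))
        obtain ⟨z', ⟨h4, h5⟩, h6, h7⟩ := (hzcl.and_eventually (hre.and (hOloc z hzO))).exists
        rw [hW0O z hzO] at h7
        rcases lt_trichotomy z'.im p.im with h8 | h8 | h8
        · rw [W_below hpq hlt h8] at h5
          linarith
        · exact h4 (Or.inr ⟨h8, h6.1.le, h6.2.le⟩)
        · rw [W_above hpq hlt h8] at h5
          linarith
      · have h1 : 0 ≤ W γ γ' u v z := by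
          by_contra h2
          exact hzU ⟨hzJ, not_le.1 h2⟩
        have h2 := (hWcont z hzJ).eventually (lt_mem_nhds (show (-1 : ℝ) < _ by linarith))
        obtain ⟨z', h3, h4⟩ := (hzcl.and_eventually h2).exists
        linarith [hUle z' h3]
  -- contradiction
  have hαJ : ∀ j, α j ∉ J γ u v := by
    rintro j (⟨t, ht, he⟩ | ⟨h1, _⟩)
    · exact h.avoid ⟨(hsub ht).1, (hsub ht).2.le⟩ j he
    · exact hα j h1
  have h1 := seg_arg_neg hpq hlt hα hH
  have h2 := h.sum_A_im hu huv hv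
  have h3 : 0 ≤ ∑ j, (n j : ℝ) * W γ γ' u v (α j) :=
    Finset.sum_nonneg fun j _ => mul_nonneg (Nat.cast_nonneg _) (hWnn _ (hαJ j))
  have h4 : (∑ j, (n j : ℝ) * W γ γ' u v (α j)) * (2 * Real.pi) =
      (∑ j, (n j : ℂ) * A γ γ' u v (α j)).im + (∑ j, (n j : ℂ) * log ((p - α j) / (q - α j))).im := by
    rw [im_sum, im_sum, ← Finset.sum_add_distrib, Finset.sum_mul]
    refine Finset.sum_congr rfl fun j _ => ?_
    have : W γ γ' u v (α j) * (2 * Real.pi) = (A γ γ' u v (α j) + log ((p - α j) / (q - α j))).im := by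
      rw [W, div_mul_cancel₀]
      positivity
    rw [mul_assoc, this, add_im]
    simp
    ring
  rw [h2] at h4
  have := mul_nonneg h3 (by positivity : 0 ≤ 2 * Real.pi)
  linarith

end GoodPath
end SD


namespace SD
namespace GoodPath

variable {s : ℕ} {α : Fin s → ℂ} {n : Fin s → ℕ} {c : ℂ} {γ γ' : ℝ → ℂ}

lemma LL_rot {e : ℂ} (z : ℂ) :
    LL (fun j => e * α j) n (e * z) = e⁻¹ * LL α n z := by
  unfold LL
  rw [Finset.mul_sum]
  refine Finset.sum_congr rfl fun j _ => ?_
  rw [← mul_sub, div_eq_mul_inv, div_eq_mul_inv, mul_inv]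
  ring

lemma rot (h : GoodPath α n c γ γ') {e : ℂ} (he : ‖e‖ = 1) :
    GoodPath (fun j => e * α j) n ((∏ j, e ^ n j) * c) (fun t => e * γ t) (fun t => e * γ' t) where
  c0 := by
    have he0 : e ≠ 0 := by rintro rfl; simp at he
    exact mul_ne_zero (Finset.prod_ne_zero_iff.2 fun j _ => pow_ne_zero _ he0) h.c0
  npos := h.npos
  cont := continuousOn_const.mul h.cont
  eqF := by
    intro t ht
    simp_rw [← mul_sub, mul_pow, Finset.prod_mul_distrib, h.eqF t ht]
    ring
  der := fun t ht => (h.der t ht).const_mul e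
  eqL := by
    intro t ht
    have he0 : e ≠ 0 := by rintro rfl; simp at he
    rw [LL_rot, ← h.eqL t ht]
    field_simp
  out := by
    intro ε hε
    have he0 : e ≠ 0 := by rintro rfl; simp at he
    obtain ⟨z, ν, h1, h2⟩ := h.out ε hε
    refine ⟨e * z, ν * e⁻¹, ?_, fun t ht => ?_⟩
    · rw [dist_eq_norm, ← mul_sub, norm_mul, he, one_mul, ← dist_eq_norm]
      exact h1
    · have := h2 t ht
      rwa [mul_assoc, mul_assoc, inv_mul_cancel_left₀ he0, inv_mul_cancel_left₀ he0]

lemma LL_refl (z : ℂ) :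
    LL (fun j => -(starRingEnd ℂ) (α j)) n (-(starRingEnd ℂ) z) = -(starRingEnd ℂ) (LL α n z) := by
  unfold LL
  rw [map_sum, ← Finset.sum_neg_distrib]
  refine Finset.sum_congr rfl fun j _ => ?_
  rw [map_div₀, map_sub, map_natCast, ← div_neg]
  congr 1
  ring

lemma refl (h : GoodPath α n c γ γ') :
    GoodPath (fun j => -(starRingEnd ℂ) (α j)) n ((∏ j, (-1 : ℂ) ^ n j) * (starRingEnd ℂ) c)
      (fun t => -(starRingEnd ℂ) (γ t)) (fun t => -(starRingEnd ℂ) (γ' t)) where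
  c0 := by
    refine mul_ne_zero (Finset.prod_ne_zero_iff.2 fun j _ => pow_ne_zero _ (by simp)) ?_
    simpa using h.c0
  npos := h.npos
  cont := (continuous_conj.comp_continuousOn h.cont).neg
  eqF := by
    intro t ht
    have : ∀ j, -(starRingEnd ℂ) (γ t) - -(starRingEnd ℂ) (α j) = (-1) * (starRingEnd ℂ) (γ t - α j) := by
      intro j
      rw [map_sub]; ring
    simp_rw [this, mul_pow, Finset.prod_mul_distrib, ← map_pow, ← map_prod, h.eqF t ht]
    simp
    ring
  der := fun t ht => (conjCLE.toContinuousLinearMap.hasFDerivAt.comp_hasDerivAt t (h.der t ht)).neg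
  eqL := by
    intro t ht
    rw [LL_refl, neg_mul_neg, ← map_mul, h.eqL t ht, conj_ofReal]
  out := by
    intro ε hε
    obtain ⟨z, ν, h1, h2⟩ := h.out ε hε
    refine ⟨-(starRingEnd ℂ) z, -(starRingEnd ℂ) ν, ?_, fun t ht => ?_⟩
    · rw [dist_neg_neg, dist_eq_norm, ← map_sub, RCLike.norm_conj, ← dist_eq_norm]
      exact h1
    · have := h2 t ht
      simpa using this

lemma key_neg (h : GoodPath α n c γ γ') {u v : ℝ} (hu : u ∈ Ioo (0 : ℝ) 1) (hv : v ∈ Ioo (0 : ℝ) 1)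
    (hpq : (γ u).im = (γ v).im) (hlt : (γ u).re < (γ v).re)
    (hno : ∀ t ∈ Icc (0 : ℝ) 1, (γ t).im = (γ u).im → ¬ ((γ u).re < (γ t).re ∧ (γ t).re < (γ v).re))
    (hα : ∀ j, (α j).im ≠ (γ u).im)
    (hH : ∀ x ∈ Icc (γ u).re (γ v).re, (LL α n (x + (γ u).im * I)).im < 0) : False := by
  rcases lt_trichotomy u v with h1 | h1 | h1
  · refine h.refl.core_false hu.1 h1 hv.2 (by simpa using hpq) (by simpa using hlt) ?_ ?_ ?_
    · intro t ht h2 h3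
      simp at h2 h3
      exact hno t ht h2 ⟨h3.2, h3.1⟩
    · intro j
      simpa using hα j
    · intro x hx
      simp only [neg_re, conj_re, neg_im, conj_im, neg_neg] at hx ⊢
      have h2 := hH (-x) ⟨by linarith [hx.2], by linarith [hx.1]⟩
      have h3 : (x : ℂ) + (γ u).im * I = -(starRingEnd ℂ) (((-x : ℝ) : ℂ) + (γ u).im * I) := by
        apply Complex.ext <;> simp
      rw [h3, LL_refl]
      simpa using h2
  · rw [h1] at hlt
    exact lt_irrefl _ hlt
  · refine h.core_false hv.1 h1 hu.2 hpq.symm hlt ?_ ?_ ?_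
    · intro t ht h2
      exact hno t ht (h2.trans hpq.symm)
    · rw [← hpq]; exact hα
    · rw [← hpq]; exact hH

lemma key_pos (h : GoodPath α n c γ γ') {u v : ℝ} (hu : u ∈ Ioo (0 : ℝ) 1) (hv : v ∈ Ioo (0 : ℝ) 1)
    (hpq : (γ u).im = (γ v).im) (hlt : (γ u).re < (γ v).re)
    (hno : ∀ t ∈ Icc (0 : ℝ) 1, (γ t).im = (γ u).im → ¬ ((γ u).re < (γ t).re ∧ (γ t).re < (γ v).re))
    (hα : ∀ j, (α j).im ≠ (γ u).im)
    (hH : ∀ x ∈ Icc (γ u).re (γ v).re, 0 < (LL α n (x + (γ u).im * I)).im) : False := by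
  refine (h.rot (e := -1) (by simp)).key_neg hv hu (by simpa using hpq.symm) (by simpa using hlt) ?_ ?_ ?_
  · intro t ht h2 h3
    simp at h2 h3
    exact hno t ht (h2.trans hpq.symm) ⟨h3.2, h3.1⟩
  · intro j
    simpa [← hpq] using hα j
  · intro x hx
    simp only [neg_re, neg_im, neg_mul, one_mul] at hx
    have h2 := hH (-x) ⟨by linarith [hx.2], by linarith [hx.1]⟩
    have h3 : (x : ℂ) + (((-1) * γ v).im : ℝ) * I = (-1) * (((-x : ℝ) : ℂ) + (γ u).im * I) := by
      apply Complex.ext <;> simp [hpq]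
    rw [h3, LL_rot]
    simpa using h2

noncomputable def numer (α : Fin s → ℂ) (n : Fin s → ℕ) (y : ℝ) : ℝ[X] :=
  ∑ j, C ((n j : ℝ) * ((α j).im - y)) *
    ∏ k ∈ Finset.univ.erase j, ((X - C (α k).re) ^ 2 + C ((y - (α k).im) ^ 2))

lemma numer_natDegree (y : ℝ) : (numer α n y).natDegree ≤ 2 * (s - 1) := by
  refine natDegree_sum_le_of_forall_le _ _ fun j _ => ?_
  refine (natDegree_C_mul_le _ _).trans ?_
  refine (natDegree_prod_le _ _).trans ?_
  have : ∀ k ∈ Finset.univ.erase j,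
      ((X - C (α k).re) ^ 2 + C ((y - (α k).im) ^ 2) : ℝ[X]).natDegree ≤ 2 := by
    intro k _
    compute_degree
  refine (Finset.sum_le_card_nsmul _ _ 2 this).trans ?_
  simp
  omega

lemma LL_im_mul {y : ℝ} (hα : ∀ j, (α j).im ≠ y) (x : ℝ) :
    (LL α n (x + y * I)).im * ∏ k, ((x - (α k).re) ^ 2 + (y - (α k).im) ^ 2) =
      (numer α n y).eval x := by
  unfold LL numer
  rw [im_sum, Finset.sum_mul, eval_finset_sum]
  refine Finset.sum_congr rfl fun j _ => ?_
  rw [← Finset.mul_prod_erase Finset.univ _ (Finset.mem_univ j)]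
  simp only [eval_mul, eval_C, eval_prod, eval_add, eval_pow, eval_sub, eval_X]
  rw [← mul_assoc]
  congr 1
  have hpos : 0 < (x - (α j).re) ^ 2 + (y - (α j).im) ^ 2 := by
    have := sq_pos_of_ne_zero (sub_ne_zero.2 (hα j).symm)
    have := sq_nonneg (x - (α j).re)
    linarith
  rw [Complex.div_im]
  have hn : normSq ((x : ℂ) + y * I - α j) = (x - (α j).re) ^ 2 + (y - (α j).im) ^ 2 := by
    rw [normSq_apply]
    simp
    ring
  rw [hn]
  simp
  field_simp
  ring

lemma LL_im_cont {y : ℝ} (hα : ∀ j, (α j).im ≠ y) :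
    Continuous (fun x : ℝ => (LL α n (x + y * I)).im) := by
  apply continuous_im.comp
  unfold LL
  refine continuous_finsetSum _ fun j _ => ?_
  refine Continuous.div continuous_const (by fun_prop) ?_
  intro x he
  apply hα j
  have := congrArg im he
  simp at this
  linarith

lemma count (h : GoodPath α n c γ γ') (hs : 1 ≤ s) {y : ℝ} (hα : ∀ j, (α j).im ≠ y)
    (h0 : (γ 0).im ≠ y) (h1 : (γ 1).im ≠ y)
    (ht : ∀ t ∈ Ioo (0 : ℝ) 1, (γ t).im = y → (γ' t).im ≠ 0) :
    {t | t ∈ Icc (0 : ℝ) 1 ∧ (γ t).im = y}.Finite ∧ {t | t ∈ Icc (0 : ℝ) 1 ∧ (γ t).im = y}.ncard ≤ 2 * s := by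
  set T := {t | t ∈ Icc (0 : ℝ) 1 ∧ (γ t).im = y} with hT
  have hTo : ∀ t ∈ T, t ∈ Ioo (0 : ℝ) 1 := by
    rintro t ⟨⟨h2, h3⟩, h4⟩
    refine ⟨lt_of_le_of_ne h2 ?_, lt_of_le_of_ne h3 ?_⟩
    · rintro rfl; exact h0 h4
    · rintro rfl; exact h1 h4
  have hTc : IsClosed T := by
    have : T = Icc 0 1 ∩ (fun t => (γ t).im) ⁻¹' {y} := by ext; rfl
    rw [this]
    exact (continuous_im.comp_continuousOn h.cont).preimage_isClosed_of_isClosed isClosed_Icc isClosed_singleton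
  have hfin : T.Finite := by
    by_contra hinf
    have hcomp : IsCompact T := isCompact_Icc.of_isClosed_subset hTc (fun t ht => ht.1)
    obtain ⟨x, hx, hacc⟩ := Set.Infinite.exists_accPt_of_subset_isCompact hinf hcomp subset_rfl
    have hd : HasDerivAt (fun t => (γ t).im) (γ' x).im x :=
      imCLM.hasFDerivAt.comp_hasDerivAt x (h.der x (hTo x hx))
    have h2 := hd.eventually_ne (c := y) (ht x (hTo x hx) hx.2)
    rw [accPt_iff_frequently_nhdsNE] at hacc
    obtain ⟨t, h3, h4⟩ := (hacc.and_eventually h2).exists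
    exact h4 h3.2
  refine ⟨hfin, ?_⟩
  have hinj : InjOn (fun t => (γ t).re) T := by
    intro a ha b hb hab
    exact h.inj ha.1 hb.1 (Complex.ext hab (ha.2.trans hb.2.symm))
  have hLne : ∀ t ∈ T, (LL α n ((γ t).re + y * I)).im ≠ 0 := by
    intro t htT he
    have h2 : ((γ t).re : ℂ) + y * I = γ t := by rw [← htT.2, re_add_im]
    rw [h2] at he
    apply ht t (hTo t htT) htT.2
    have h3 := h.eqL t (hTo t htT)
    have h4 := congrArg im h3
    rw [mul_im, he, ofReal_im, mul_zero, zero_add] at h4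
    rcases mul_eq_zero.1 h4 with h5 | h5
    · exact h5
    · exact absurd (Complex.ext h5 he) (h.LL_ne (hTo t htT))
  set S : Finset ℝ := hfin.toFinset.image (fun t => (γ t).re) with hS
  have hcard : T.ncard = S.card := by
    rw [hS, Finset.card_image_of_injOn (by simpa using hinj), Set.ncard_eq_toFinset_card T hfin]
  rw [hcard]
  rcases T.eq_empty_or_nonempty with hemp | ⟨t₀, ht₀⟩
  · rw [← hcard, hemp]; simp
  have hPne : numer α n y ≠ 0 := by
    intro he
    have h2 := LL_im_mul (n := n) hα (γ t₀).re
    rw [he, eval_zero] at h2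
    rcases mul_eq_zero.1 h2 with h3 | h3
    · exact hLne t₀ ht₀ h3
    · rw [Finset.prod_eq_zero_iff] at h3
      obtain ⟨j, _, hj⟩ := h3
      have := sq_pos_of_ne_zero (sub_ne_zero.2 (hα j).symm)
      have := sq_nonneg ((γ t₀).re - (α j).re)
      linarith
  have hle : S.card ≤ (numer α n y).roots.toFinset.card + 1 := by
    apply Finset.card_le_of_interleaved
    intro a ha b hb hab hbet
    rw [hS, Finset.mem_image] at ha hb
    obtain ⟨u, hu, rfl⟩ := ha
    obtain ⟨v, hv, rfl⟩ := hb
    rw [hfin.mem_toFinset] at hu hv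
    by_contra! hcon
    have hHne : ∀ x ∈ Icc (γ u).re (γ v).re, (LL α n (x + y * I)).im ≠ 0 := by
      intro x hx he
      rcases eq_or_lt_of_le hx.1 with h2 | h2
      · rw [← h2] at he; exact hLne u hu he
      rcases eq_or_lt_of_le hx.2 with h3 | h3
      · rw [h3] at he; exact hLne v hv he
      have h4 : x ∈ (numer α n y).roots.toFinset := by
        rw [Multiset.mem_toFinset, mem_roots hPne, IsRoot, ← LL_im_mul hα, he, zero_mul]
      exact absurd (hcon x h4 h2) (not_le.2 h3)
    have hno : ∀ t ∈ Icc (0 : ℝ) 1, (γ t).im = (γ u).im → ¬ ((γ u).re < (γ t).re ∧ (γ t).re < (γ v).re) := by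
      intro t ht1 ht2 ht3
      refine hbet (γ t).re ?_ ht3
      rw [hS, Finset.mem_image]
      exact ⟨t, by rw [hfin.mem_toFinset]; exact ⟨ht1, ht2.trans hu.2⟩, rfl⟩
    have hsign : (∀ x ∈ Icc (γ u).re (γ v).re, (LL α n (x + y * I)).im < 0) ∨
        (∀ x ∈ Icc (γ u).re (γ v).re, 0 < (LL α n (x + y * I)).im) := by
      by_contra! hcon2
      obtain ⟨⟨x1, hx1, h2⟩, ⟨x2, hx2, h3⟩⟩ := hcon2
      obtain ⟨x, hx, h4⟩ := isPreconnected_Icc.intermediate_value hx2 hx1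
        (LL_im_cont (n := n) hα).continuousOn (show (0 : ℝ) ∈ Icc _ _ from ⟨h3, h2⟩)
      exact hHne x hx h4
    have huy := hu.2
    have hpq : (γ u).im = (γ v).im := hu.2.trans hv.2.symm
    rcases hsign with h2 | h2
    · exact h.key_neg (hTo u hu) (hTo v hv) hpq hab hno (by rwa [huy]) (by rwa [huy])
    · exact h.key_pos (hTo u hu) (hTo v hv) hpq hab hno (by rwa [huy]) (by rwa [huy])
  have h2 := Multiset.toFinset_card_le (numer α n y).roots
  have h3 := card_roots' (numer α n y)
  have h4 := numer_natDegree (α := α) (n := n) y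
  omega

lemma count_ae (h : GoodPath α n c γ γ') (hs : 1 ≤ s) :
    ∀ᵐ y : ℝ, {t | t ∈ Icc (0 : ℝ) 1 ∧ (γ t).im = y}.Finite ∧
      {t | t ∈ Icc (0 : ℝ) 1 ∧ (γ t).im = y}.ncard ≤ 2 * s := by
  have hnull : MeasureTheory.volume ((fun t => (γ t).im) '' {t | t ∈ Ioo (0 : ℝ) 1 ∧ (γ' t).im = 0}) = 0 := by
    refine MeasureTheory.addHaar_image_eq_zero_of_det_fderivWithin_eq_zero MeasureTheory.volume
      (f' := fun t => ContinuousLinearMap.toSpanSingleton ℝ (γ' t).im) ?_ ?_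
    · rintro t ⟨h1, h2⟩
      have hd : HasDerivAt (fun t => (γ t).im) (γ' t).im t :=
        imCLM.hasFDerivAt.comp_hasDerivAt t (h.der t h1)
      exact hd.hasFDerivAt.hasFDerivWithinAt
    · rintro t ⟨h1, h2⟩
      simp [h2]
  have hcount : ({(γ 0).im, (γ 1).im} ∪ Set.range (fun j => (α j).im)).Countable :=
    ((Set.toFinite _).union (Set.finite_range _)).countable
  filter_upwards [MeasureTheory.measure_eq_zero_iff_ae_notMem.1 hnull, hcount.ae_notMem _] with y h1 h2
  simp only [mem_union, mem_insert_iff, mem_singleton_iff, mem_range, not_or, not_exists] at h2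
  refine h.count hs h2.2 (Ne.symm h2.1.1) (Ne.symm h2.1.2) ?_
  intro t ht1 ht2 ht3
  exact h1 ⟨t, ⟨ht1, ht3⟩, ht2⟩

end GoodPath
end SD


namespace SD
open MeasureTheory

lemma poly_var {g : ℝ → ℝ} (hg : ContinuousOn g (Icc 0 1)) {c R : ℝ}
    (hgR : ∀ t ∈ Icc (0:ℝ) 1, |g t - c| ≤ R) {m : ℕ}
    (hm : ∀ᵐ y : ℝ, {t | t ∈ Icc (0:ℝ) 1 ∧ g t = y}.Finite ∧
      {t | t ∈ Icc (0:ℝ) 1 ∧ g t = y}.ncard ≤ m)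
    {τ : ℕ → ℝ} (hτ : Monotone τ) (h01 : ∀ i, τ i ∈ Icc (0:ℝ) 1) (k : ℕ) :
    ∑ i ∈ Finset.range k, |g (τ (i + 1)) - g (τ i)| ≤ m * (2 * R) := by
  have hR : 0 ≤ R := le_trans (abs_nonneg _) (hgR 0 (by simp))
  have e1 : ∀ i, |g (τ (i + 1)) - g (τ i)| =
      ∫ y, (uIoc (g (τ i)) (g (τ (i+1)))).indicator (fun _ => (1:ℝ)) y := by
    intro i
    rw [integral_indicator measurableSet_uIoc]
    simp [Measure.real, uIoc, Real.volume_Ioc, max_sub_min_eq_abs]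
  have e2 : (m:ℝ) * (2 * R) =
      ∫ y, (Icc (c - R) (c + R)).indicator (fun _ => (m:ℝ)) y := by
    rw [integral_indicator measurableSet_Icc]
    simp [Measure.real, Real.volume_Icc]
    rw [ENNReal.toReal_ofReal (by linarith)]; ring
  have hi : ∀ i, Integrable
      (fun y => (uIoc (g (τ i)) (g (τ (i+1)))).indicator (fun _ => (1:ℝ)) y) := by
    intro i
    refine (integrable_indicator_iff measurableSet_uIoc).2 ?_
    simp [uIoc]
  rw [e2, Finset.sum_congr rfl (fun i _ => e1 i), ← integral_finsetSum _ (fun i _ => hi i)]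
  refine integral_mono_ae (integrable_finsetSum _ (fun i _ => hi i)) ?_ ?_
  · refine (integrable_indicator_iff measurableSet_Icc).2 ?_
    simp
  have hne : ∀ᵐ y : ℝ, ∀ i, y ≠ g (τ i) := by
    rw [ae_all_iff]; intro i
    exact Measure.ae_ne volume _
  filter_upwards [hm, hne] with y hy hyne
  classical
  have hS : ∑ i ∈ Finset.range k, (uIoc (g (τ i)) (g (τ (i+1)))).indicator (fun _ => (1:ℝ)) y
      = ((Finset.range k).filter (fun i => y ∈ uIoc (g (τ i)) (g (τ (i+1))))).card := by
    simp [indicator_apply]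
  have ht : ∀ i, ∃ t, y ∈ uIoc (g (τ i)) (g (τ (i+1))) → t ∈ Ioo (τ i) (τ (i+1)) ∧ g t = y := by
    intro i
    by_cases h : y ∈ uIoc (g (τ i)) (g (τ (i+1)))
    · have hle := hτ (Nat.le_succ i)
      have := intermediate_value_uIcc (a := τ i) (b := τ (i+1)) (f := g)
        (hg.mono (by rw [uIcc_of_le hle]; exact Icc_subset_Icc (h01 i).1 (h01 (i+1)).2))
        (uIoc_subset_uIcc h)
      rw [uIcc_of_le hle] at this
      obtain ⟨t, ht, rfl⟩ := this
      refine ⟨t, fun _ => ⟨⟨lt_of_le_of_ne ht.1 ?_, lt_of_le_of_ne ht.2 ?_⟩, rfl⟩⟩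
      · intro h; exact hyne i (by rw [h])
      · intro h; exact hyne (i+1) (by rw [h])
    · exact ⟨0, fun h' => absurd h' h⟩
  choose t ht using ht
  have hm01 : ∀ i, y ∈ uIoc (g (τ i)) (g (τ (i+1))) → t i ∈ Icc (0:ℝ) 1 := fun i hi =>
    ⟨(h01 i).1.trans (ht i hi).1.1.le, (ht i hi).1.2.le.trans (h01 (i+1)).2⟩
  simp only [hS]
  by_cases hyI : y ∈ Icc (c - R) (c + R)
  · rw [indicator_of_mem hyI]
    norm_cast
    refine le_trans ?_ hy.2
    rw [ncard_eq_toFinset_card _ hy.1]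
    refine Finset.card_le_card_of_injOn t ?_ ?_
    · intro i hi
      simp only [Finset.coe_filter, mem_ofPred_eq] at hi
      simp only [Finset.mem_coe, Finite.mem_toFinset]
      exact ⟨hm01 i hi.2, (ht i hi.2).2⟩
    · have key : ∀ i j, i < j → y ∈ uIoc (g (τ i)) (g (τ (i+1))) →
          y ∈ uIoc (g (τ j)) (g (τ (j+1))) → t i < t j := by
        intro i j hij h1 h2
        exact ((ht i h1).1.2.trans_le (hτ hij)).trans (ht j h2).1.1
      intro i hi j hj hij
      simp only [Finset.coe_filter, mem_ofPred_eq] at hi hj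
      rcases lt_trichotomy i j with h | h | h
      · exact absurd hij (key i j h hi.2 hj.2).ne
      · exact h
      · exact absurd hij (key j i h hj.2 hi.2).ne'
  · rw [indicator_of_notMem hyI]
    norm_cast
    rw [Nat.le_zero, Finset.card_eq_zero, Finset.filter_eq_empty_iff]
    intro i _ h
    apply hyI
    have := abs_le.1 (hgR _ (hm01 i h))
    rw [(ht i h).2] at this
    constructor <;> linarith [this.1, this.2]

lemma norm_eq_int (w : ℂ) :
    ‖w‖ = (1/2) * ∫ θ in (0:ℝ)..Real.pi, |(Complex.exp (-(θ:ℂ) * I) * w).im| := by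
  have h1 : ∀ θ : ℝ, |(Complex.exp (-(θ:ℂ) * I) * w).im| = ‖w‖ * |Real.sin (θ - w.arg)| := by
    intro θ
    have hw : w = ‖w‖ * Complex.exp (w.arg * I) := (Complex.norm_mul_exp_arg_mul_I w).symm
    have : (Complex.exp (-(θ:ℂ) * I) * w) = ‖w‖ * Complex.exp (((-(θ - w.arg) : ℝ) : ℂ) * I) := by
      conv_lhs => rw [hw]
      rw [mul_left_comm, ← Complex.exp_add]
      congr 2; push_cast; ring
    rw [this, Complex.im_ofReal_mul,
      Complex.exp_ofReal_mul_I_im, Real.sin_neg, abs_mul, abs_neg, abs_norm]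
  simp_rw [h1]
  rw [intervalIntegral.integral_const_mul,
    intervalIntegral.integral_comp_sub_right (fun x => |Real.sin x|)]
  have hp : Function.Periodic (fun x => |Real.sin x|) Real.pi := by
    intro x; simp [Real.sin_add_pi]
  have : (∫ x in (0 - w.arg)..(Real.pi - w.arg), |Real.sin x|) = 2 := by
    have := hp.intervalIntegral_add_eq (0 - w.arg) 0
    rw [show Real.pi - w.arg = 0 - w.arg + Real.pi by ring, this, zero_add]
    rw [show (2:ℝ) = ∫ x in (0:ℝ)..Real.pi, Real.sin x by rw [integral_sin]; norm_num]
    refine intervalIntegral.integral_congr ?_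
    intro x hx
    rw [uIcc_of_le Real.pi_pos.le] at hx
    exact abs_of_nonneg (Real.sin_nonneg_of_mem_Icc hx)
  rw [this]; ring

lemma GoodPath.poly_len {s : ℕ} {α : Fin s → ℂ} {n : Fin s → ℕ} {c : ℂ} {γ γ' : ℝ → ℂ}
    (h : GoodPath α n c γ γ') (hs : 1 ≤ s) {z₀ : ℂ} {R : ℝ}
    (hR : ∀ t ∈ Icc (0:ℝ) 1, ‖γ t - z₀‖ ≤ R)
    {τ : ℕ → ℝ} (hτ : Monotone τ) (h01 : ∀ i, τ i ∈ Icc (0:ℝ) 1) (k : ℕ) :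
    ∑ i ∈ Finset.range k, ‖γ (τ (i + 1)) - γ (τ i)‖ ≤ 2 * Real.pi * s * R := by
  have hc : ∀ w : ℂ, IntervalIntegrable
      (fun θ : ℝ => |(Complex.exp (-(θ:ℂ) * I) * w).im|) volume 0 Real.pi := by
    intro w
    apply Continuous.intervalIntegrable
    fun_prop
  rw [Finset.sum_congr rfl (fun i _ => norm_eq_int _), ← Finset.mul_sum,
    ← intervalIntegral.integral_finsetSum (fun i _ => hc _)]
  have hb : ∀ θ : ℝ, ∑ i ∈ Finset.range k,
      |(Complex.exp (-(θ:ℂ) * I) * (γ (τ (i + 1)) - γ (τ i))).im| ≤ (2 * s : ℕ) * (2 * R) := by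
    intro θ
    have he : ‖Complex.exp (-(θ:ℂ) * I)‖ = 1 := by
      have := Complex.norm_exp_ofReal_mul_I (-θ); push_cast at this; exact this
    have hr := h.rot he
    have := poly_var (g := fun t => (Complex.exp (-(θ:ℂ) * I) * γ t).im)
      (c := (Complex.exp (-(θ:ℂ) * I) * z₀).im) (R := R) (m := 2 * s)
      (Complex.continuous_im.comp_continuousOn hr.cont) ?_ (hr.count_ae hs) hτ h01 k
    · refine le_trans (le_of_eq (Finset.sum_congr rfl fun i _ => ?_)) this
      rw [mul_sub, Complex.sub_im]
    · intro t ht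
      rw [← Complex.sub_im, ← mul_sub]
      refine (Complex.abs_im_le_norm _).trans ?_
      rw [norm_mul, he, one_mul]; exact hR t ht
  have : (∫ θ in (0:ℝ)..Real.pi, ∑ i ∈ Finset.range k,
      |(Complex.exp (-(θ:ℂ) * I) * (γ (τ (i + 1)) - γ (τ i))).im|) ≤
      ∫ θ in (0:ℝ)..Real.pi, ((2 * s : ℕ) * (2 * R) : ℝ) := by
    refine intervalIntegral.integral_mono_on Real.pi_pos.le ?_ (by simp) (fun θ _ => hb θ)
    apply Continuous.intervalIntegrable
    fun_prop
  rw [intervalIntegral.integral_const] at this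
  simp only [smul_eq_mul, sub_zero] at this
  push_cast at this
  linarith

/-- Length on a compact subinterval. -/
lemma len_le {γ γ' : ℝ → ℂ} {M : ℝ}
    (hd : ∀ t ∈ Ioo (0:ℝ) 1, HasDerivAt γ (γ' t) t) (hc : ContinuousOn γ' (Ioo 0 1))
    (hM : ∀ (τ : ℕ → ℝ), Monotone τ → (∀ i, τ i ∈ Icc (0:ℝ) 1) → ∀ k,
      ∑ i ∈ Finset.range k, ‖γ (τ (i + 1)) - γ (τ i)‖ ≤ M)
    {a b : ℝ} (ha : 0 < a) (hab : a ≤ b) (hb : b < 1) :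
    ∫ t in a..b, ‖γ' t‖ ≤ M := by
  have hsub : Icc a b ⊆ Ioo 0 1 := fun x hx => ⟨ha.trans_le hx.1, hx.2.trans_lt hb⟩
  have hcI : ContinuousOn γ' (Icc a b) := hc.mono hsub
  have huc := isCompact_Icc.uniformContinuousOn_of_continuous hcI
  rw [Metric.uniformContinuousOn_iff] at huc
  refine le_of_forall_pos_le_add fun ε hε => ?_
  obtain ⟨δ, hδ, hu⟩ := huc (ε / 2) (by positivity)
  obtain ⟨k, hk⟩ := exists_nat_gt ((b - a) / δ)
  have hk0 : (0:ℝ) < k := lt_of_le_of_lt (div_nonneg (by linarith) hδ.le) hk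
  set d := (b - a) / k with hd'
  have hd0 : 0 ≤ d := div_nonneg (by linarith) hk0.le
  have hdδ : d < δ := by
    rw [div_lt_iff₀ hδ] at hk; rw [hd', div_lt_iff₀ hk0]; linarith
  have hkd : a + k * d = b := by rw [hd']; field_simp; ring
  set τ : ℕ → ℝ := fun i => min (a + i * d) b with hτ
  have hmono : Monotone τ := by
    intro i j hij
    apply min_le_min_right
    have : (i:ℝ) ≤ j := by exact_mod_cast hij
    nlinarith
  have hτI : ∀ i, τ i ∈ Icc a b := fun i =>
    ⟨le_min (by have : (0:ℝ) ≤ i * d := by positivity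
                linarith) hab, min_le_right _ _⟩
  have hstep : ∀ i, τ (i+1) - τ i ≤ d := by
    intro i
    have h1 : τ (i+1) ≤ a + i * d + d := (min_le_left _ _).trans (by push_cast; linarith)
    have h2 : τ (i+1) ≤ b := min_le_right _ _
    have : τ (i+1) - d ≤ τ i := le_min (by linarith) (by linarith)
    linarith
  have h0 : τ 0 = a := by simp [hτ, hab]
  have hkk : τ k = b := by simp [hτ, hkd]
  have hII : ∀ x y, x ∈ Icc a b → y ∈ Icc a b → IntervalIntegrable γ' volume x y := by
    intro x y hx hy
    exact (hcI.mono (uIcc_subset_Icc hx hy)).intervalIntegrable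
  have hsplit : ∫ t in a..b, ‖γ' t‖ = ∑ i ∈ Finset.range k, ∫ t in τ i..τ (i+1), ‖γ' t‖ := by
    rw [intervalIntegral.sum_integral_adjacent_intervals, h0, hkk]
    intro i _
    exact (hII _ _ (hτI i) (hτI (i+1))).norm
  have hpiece : ∀ i, ∫ t in τ i..τ (i+1), ‖γ' t‖ ≤
      ‖γ (τ (i+1)) - γ (τ i)‖ + ε * (τ (i+1) - τ i) := by
    intro i
    have hle := hmono (Nat.le_succ i)
    have hint := hII _ _ (hτI i) (hτI (i+1))
    have hftc : ∫ t in τ i..τ (i+1), γ' t = γ (τ (i+1)) - γ (τ i) := by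
      refine intervalIntegral.integral_eq_sub_of_hasDerivAt (fun x hx => ?_) hint
      exact hd x (hsub (uIcc_subset_Icc (hτI i) (hτI (i+1)) hx))
    have hclose : ∀ x ∈ Icc (τ i) (τ (i+1)), ‖γ' x - γ' (τ i)‖ ≤ ε / 2 := by
      intro x hx
      have hxI : x ∈ Icc a b := ⟨(hτI i).1.trans hx.1, hx.2.trans (hτI (i+1)).2⟩
      have := hu x hxI (τ i) (hτI i) (by
        rw [Real.dist_eq, abs_of_nonneg (by linarith [hx.1])]
        linarith [hx.2, hstep i])
      rw [dist_eq_norm] at this; exact this.le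
    have h1 : ∫ t in τ i..τ (i+1), ‖γ' t‖ ≤ ∫ t in τ i..τ (i+1), (‖γ' (τ i)‖ + ε / 2) := by
      refine intervalIntegral.integral_mono_on hle hint.norm (by simp) fun x hx => ?_
      have := norm_sub_norm_le (γ' x) (γ' (τ i))
      linarith [hclose x hx]
    rw [intervalIntegral.integral_const, smul_eq_mul] at h1
    have h2 : ‖(∫ t in τ i..τ (i+1), (γ' t - γ' (τ i)))‖ ≤ ε / 2 * |τ (i+1) - τ i| := by
      refine intervalIntegral.norm_integral_le_of_norm_le_const fun x hx => ?_
      rw [uIoc_of_le hle] at hx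
      exact hclose x ⟨hx.1.le, hx.2⟩
    rw [intervalIntegral.integral_sub hint (by simp), hftc, intervalIntegral.integral_const,
      abs_of_nonneg (by linarith)] at h2
    have h3 := norm_sub_norm_le ((τ (i+1) - τ i) • γ' (τ i)) (γ (τ (i+1)) - γ (τ i))
    rw [norm_smul, Real.norm_of_nonneg (by linarith), norm_sub_rev (_ • _)] at h3
    nlinarith
  rw [hsplit]
  refine (Finset.sum_le_sum fun i _ => hpiece i).trans ?_
  rw [Finset.sum_add_distrib, ← Finset.mul_sum, Finset.sum_range_sub, h0, hkk]
  have := hM τ hmono (fun i => Ioo_subset_Icc_self (hsub (hτI i))) k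
  have h5 : ε * (b - a) ≤ ε * 1 := by
    apply mul_le_mul_of_nonneg_left _ hε.le; linarith
  linarith

lemma len_full {γ' : ℝ → ℂ} {M : ℝ} (hM0 : 0 ≤ M)
    (h : ∀ a b : ℝ, 0 < a → a ≤ b → b < 1 → ∫ t in a..b, ‖γ' t‖ ≤ M) :
    ∫ t in (0:ℝ)..1, ‖γ' t‖ ≤ M := by
  by_cases hi : IntervalIntegrable (fun t => ‖γ' t‖) volume 0 1
  · have hcont := intervalIntegral.continuousOn_primitive_interval' hi (left_mem_uIcc)
    rw [uIcc_of_le zero_le_one] at hcont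
    have hsplit : ∀ a ∈ Ioo (0:ℝ) (1/2), (∫ t in (0:ℝ)..(1-a), ‖γ' t‖) - ∫ t in (0:ℝ)..a, ‖γ' t‖ ≤ M := by
      intro a ha
      have hs1 : IntervalIntegrable (fun t => ‖γ' t‖) volume 0 a :=
        hi.mono_set (by rw [uIcc_of_le ha.1.le, uIcc_of_le zero_le_one]; exact Icc_subset_Icc le_rfl (by linarith [ha.2]))
      have hs2 : IntervalIntegrable (fun t => ‖γ' t‖) volume 0 (1-a) :=
        hi.mono_set (by rw [uIcc_of_le (by linarith [ha.2]), uIcc_of_le zero_le_one]; exact Icc_subset_Icc le_rfl (by linarith [ha.1]))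
      rw [intervalIntegral.integral_interval_sub_left hs2 hs1]
      exact h a (1-a) ha.1 (by linarith [ha.2]) (by linarith [ha.1])
    have t1 : Filter.Tendsto (fun a : ℝ => ∫ t in (0:ℝ)..(1-a), ‖γ' t‖) (nhdsWithin 0 (Ioi 0))
        (nhds (∫ t in (0:ℝ)..1, ‖γ' t‖)) := by
      have := (hcont 1 (by simp))
      refine this.tendsto.comp ?_
      refine tendsto_nhdsWithin_iff.2 ⟨?_, ?_⟩
      · have : Filter.Tendsto (fun a : ℝ => 1 - a) (nhds 0) (nhds (1 - 0)) :=
          (continuous_const.sub continuous_id).tendsto 0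
        rw [sub_zero] at this
        exact this.mono_left nhdsWithin_le_nhds
      · filter_upwards [Ioo_mem_nhdsGT (show (0:ℝ) < 1 by norm_num)] with a ha
        exact ⟨by linarith [ha.2], by linarith [ha.1]⟩
    have t2 : Filter.Tendsto (fun a : ℝ => ∫ t in (0:ℝ)..a, ‖γ' t‖) (nhdsWithin 0 (Ioi 0))
        (nhds (∫ t in (0:ℝ)..0, ‖γ' t‖)) := by
      have := (hcont 0 (by simp))
      refine this.tendsto.comp ?_
      refine tendsto_nhdsWithin_iff.2 ⟨Filter.tendsto_id.mono_left nhdsWithin_le_nhds, ?_⟩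
      · filter_upwards [Ioo_mem_nhdsGT (show (0:ℝ) < 1 by norm_num)] with a ha
        exact ⟨ha.1.le, ha.2.le⟩
    have t3 := t1.sub t2
    rw [intervalIntegral.integral_same, sub_zero] at t3
    refine le_of_tendsto t3 ?_
    filter_upwards [Ioo_mem_nhdsGT (show (0:ℝ) < 1/2 by norm_num)] with a ha
    exact hsplit a ha
  · rw [intervalIntegral.integral_undef hi]; exact hM0

end SD


namespace SD

lemma fin_step {k : ℕ} {P : Fin (k+1) → Prop} (h0 : P 0) (hl : ¬ P (Fin.last k)) :
    ∃ i : Fin k, P i.castSucc ∧ ¬ P i.succ := by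
  by_contra hcon
  push Not at hcon
  exact hl (Fin.induction (motive := P) h0 (fun i hi => hcon i hi) (Fin.last k))

lemma one_sided {γ : ℝ → ℂ} {k : ℕ} {t : Fin (k + 1) → ℝ} (h0 : t 0 = 0)
    (h1 : t (Fin.last k) = 1)
    (hC : ∀ i : Fin k, ContDiffOn ℝ 1 γ (Set.Icc (t i.castSucc) (t i.succ)))
    {x : ℝ} (hx : x ∈ Ioo (0:ℝ) 1) :
    (∃ d, HasDerivWithinAt γ d (Ici x) x) ∧ ∃ d, HasDerivWithinAt γ d (Iic x) x := by
  constructor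
  · obtain ⟨i, hi1, hi2⟩ := fin_step (P := fun j => t j ≤ x) (by rw [h0]; exact hx.1.le)
      (by rw [h1]; exact not_le.2 hx.2)
    rw [not_le] at hi2
    have hd := ((hC i).differentiableOn one_ne_zero x ⟨hi1, hi2.le⟩).hasDerivWithinAt
    exact ⟨_, hd.mono_of_mem_nhdsWithin (Icc_mem_nhdsGE_of_mem ⟨hi1, hi2⟩)⟩
  · obtain ⟨i, hi1, hi2⟩ := fin_step (P := fun j => t j < x) (by rw [h0]; exact hx.1)
      (by rw [h1]; exact not_lt.2 hx.2.le)
    rw [not_lt] at hi2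
    have hd := ((hC i).differentiableOn one_ne_zero x ⟨hi1.le, hi2⟩).hasDerivWithinAt
    exact ⟨_, hd.mono_of_mem_nhdsWithin (Icc_mem_nhdsLE_of_mem ⟨hi1, hi2⟩)⟩

lemma side_eq {γ : ℝ → ℂ} {f : Polynomial ℂ} {c : ℂ}
    (hγf : ∀ t ∈ Set.Icc (0 : ℝ) 1, f.eval (γ t) = (t : ℂ) * c)
    {x : ℝ} (hx : x ∈ Ioo (0:ℝ) 1) {S : Set ℝ} (hS : UniqueDiffWithinAt ℝ S x)
    {d : ℂ} (hd : HasDerivWithinAt γ d S x) :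
    f.derivative.eval (γ x) * d = c := by
  have h1 := (f.hasDerivAt (γ x)).comp_hasDerivWithinAt x hd
  have h2 : HasDerivWithinAt (fun t : ℝ => (t:ℂ) * c) (1 * c) S x :=
    ((Complex.ofRealCLM.hasDerivAt (x := x)).mul_const c).hasDerivWithinAt
  have h3 : HasDerivWithinAt (fun t : ℝ => (t:ℂ) * c) (f.derivative.eval (γ x) * d) S x := by
    refine h1.congr_of_eventuallyEq ?_ ?_
    · have : Icc (0:ℝ) 1 ∈ nhdsWithin x S := mem_nhdsWithin_of_mem_nhds (Icc_mem_nhds hx.1 hx.2)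
      filter_upwards [this] with y hy
      exact (hγf y hy).symm
    · exact (hγf x (Ioo_subset_Icc_self hx)).symm
  have := hS.eq_deriv S h3 h2
  simpa using this

lemma hasDeriv {γ : ℝ → ℂ} (hpc : PiecewiseC1On γ 0 1) {f : Polynomial ℂ} {c : ℂ} (hc : c ≠ 0)
    (hγf : ∀ t ∈ Set.Icc (0 : ℝ) 1, f.eval (γ t) = (t : ℂ) * c)
    {x : ℝ} (hx : x ∈ Ioo (0:ℝ) 1) :
    HasDerivAt γ (deriv γ x) x ∧ f.derivative.eval (γ x) * deriv γ x = c := by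
  obtain ⟨_, k, t, _, h0, h1, hC⟩ := hpc
  obtain ⟨⟨d, hd⟩, ⟨d', hd'⟩⟩ := one_sided h0 h1 hC hx
  have e1 := side_eq hγf hx (uniqueDiffWithinAt_Ici x) hd
  have e2 := side_eq hγf hx (uniqueDiffWithinAt_Iic x) hd'
  have hne : f.derivative.eval (γ x) ≠ 0 := by
    intro h; rw [h, zero_mul] at e1; exact hc e1.symm
  have : d' = d := mul_left_cancel₀ hne (e2.trans e1.symm)
  subst this
  have hu := hd'.union hd
  rw [Iic_union_Ici, hasDerivWithinAt_univ] at hu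
  rw [hu.deriv]
  exact ⟨hu, e1⟩

lemma deriv_LL {s : ℕ} (α : Fin s → ℂ) (n : Fin s → ℕ) {z : ℂ} (hz : ∀ j, z ≠ α j) :
    (∏ j, (X - C (α j)) ^ n j : Polynomial ℂ).derivative.eval z =
      (∏ j, (z - α j) ^ n j) * LL α n z := by
  rw [Polynomial.derivative_prod_finset, Polynomial.eval_finsetSum, LL, Finset.mul_sum]
  refine Finset.sum_congr rfl fun j _ => ?_
  have hne : z - α j ≠ 0 := sub_ne_zero.2 (hz j)
  rw [← Finset.mul_prod_erase Finset.univ (fun j => (z - α j) ^ n j) (Finset.mem_univ j)]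
  simp only [Polynomial.eval_mul, Polynomial.eval_prod, Polynomial.eval_pow, Polynomial.eval_sub,
    Polynomial.eval_X, Polynomial.eval_C, Polynomial.derivative_X_sub_C_pow]
  rcases Nat.eq_zero_or_pos (n j) with h | h
  · simp [h]
  · obtain ⟨m, hm⟩ := Nat.exists_eq_succ_of_ne_zero h.ne'
    rw [hm]; simp [pow_succ]; field_simp

lemma sep {K : Set ℂ} (hcv : Convex ℝ K) (hcl : IsClosed K) {z : ℂ} (hz : z ∉ K) :
    ∃ (ν : ℂ) (u : ℝ), (∀ a ∈ K, (ν * a).re < u) ∧ u < (ν * z).re := by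
  obtain ⟨φ, u, h1, h2⟩ := RCLike.geometric_hahn_banach_closed_point (𝕜 := ℂ) hcv hcl hz
  have hφ : ∀ a, φ a = φ 1 * a := by
    intro a
    have := φ.map_smul a 1
    simp only [smul_eq_mul, mul_one] at this
    rw [this, mul_comm]
  refine ⟨φ 1, u, fun a ha => ?_, ?_⟩
  · rw [← hφ]; exact h1 a ha
  · rw [← hφ]; exact h2

lemma in_hull {s : ℕ} (hs : 1 ≤ s) {α : Fin s → ℂ} {n : Fin s → ℕ} (hn : ∀ j, 1 ≤ n j)
    {K : Set ℂ} (hcv : Convex ℝ K) (hcl : IsClosed K) (hαK : ∀ j, α j ∈ K)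
    {γ γ' : ℝ → ℂ} (hc : ContinuousOn γ (Icc 0 1)) (h0 : γ 0 ∈ K) (h1 : γ 1 ∈ K)
    (der : ∀ t ∈ Ioo (0:ℝ) 1, HasDerivAt γ (γ' t) t)
    (eqL : ∀ t ∈ Ioo (0:ℝ) 1, γ' t * LL α n (γ t) = ((1 / t : ℝ) : ℂ)) :
    ∀ t ∈ Icc (0:ℝ) 1, γ t ∈ K := by
  intro t1 ht1
  by_contra hK
  obtain ⟨ν, u, hlt, hgt⟩ := sep hcv hcl hK
  have hgc : ContinuousOn (fun t => (ν * γ t).re) (Icc 0 1) :=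
    Complex.continuous_re.comp_continuousOn (continuousOn_const.mul hc)
  obtain ⟨t2, ht2, hmax⟩ := isCompact_Icc.exists_isMaxOn (nonempty_Icc.2 zero_le_one) hgc
  have hb : u < (ν * γ t2).re := lt_of_lt_of_le hgt (hmax ht1)
  have ht2' : t2 ∈ Ioo (0:ℝ) 1 := by
    refine ⟨lt_of_le_of_ne ht2.1 ?_, lt_of_le_of_ne ht2.2 ?_⟩
    · rintro rfl; exact lt_asymm hb (hlt _ h0)
    · rintro rfl; exact lt_asymm hb (hlt _ h1)
  have hloc : IsLocalMax (fun t => (ν * γ t).re) t2 := hmax.isLocalMax (Icc_mem_nhds ht2'.1 ht2'.2)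
  have hder : HasDerivAt (fun t => (ν * γ t).re) (ν * γ' t2).re t2 :=
    Complex.reCLM.hasFDerivAt.comp_hasDerivAt t2 ((der t2 ht2').const_mul ν)
  have hz := hloc.hasDerivAt_eq_zero hder
  have hpos : ∀ j, 0 < (ν * (γ t2 - α j)).re := by
    intro j
    rw [mul_sub, Complex.sub_re]
    linarith [hlt _ (hαK j)]
  have hν : ν ≠ 0 := by
    intro h
    have := hpos ⟨0, hs⟩
    simp [h] at this
  have hinv : ∀ w : ℂ, 0 < w.re → 0 < (w⁻¹).re := by
    intro w hw
    rw [Complex.inv_re]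
    have : w ≠ 0 := by rintro rfl; simp at hw
    have := Complex.normSq_pos.2 this
    positivity
  have hL : 0 < (LL α n (γ t2) / ν).re := by
    rw [LL, Finset.sum_div, Complex.re_sum]
    refine Finset.sum_pos (fun j _ => ?_) ⟨⟨0, hs⟩, Finset.mem_univ _⟩
    have : (n j : ℂ) / (γ t2 - α j) / ν = ((n j : ℝ) : ℂ) * (ν * (γ t2 - α j))⁻¹ := by
      rw [div_div, div_eq_mul_inv, mul_comm ν]; push_cast; rfl
    rw [this, Complex.re_ofReal_mul]
    have h1 : (0:ℝ) < n j := by exact_mod_cast hn j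
    exact mul_pos h1 (hinv _ (hpos j))
  have hL0 : LL α n (γ t2) / ν ≠ 0 := by intro h; rw [h] at hL; simp at hL
  have : ν * γ' t2 = ((1 / t2 : ℝ) : ℂ) * (LL α n (γ t2) / ν)⁻¹ := by
    rw [← eqL t2 ht2']
    have : LL α n (γ t2) ≠ 0 := by intro h; rw [h] at hL0; simp at hL0
    field_simp
  rw [this, Complex.re_ofReal_mul] at hz
  have h3 : 0 < 1 / t2 := one_div_pos.2 ht2'.1
  exact (mul_pos h3 (hinv _ hL)).ne' hz

end SD

/-- A path of steepest descent for `|f|` from a point `β` of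
the convex hull `K` of the roots of `f` to a root of `f` lying on the boundary
of `K` has length at most `2 π s R`. -/
theorem steepest_descent_length_le_of_boundary_root
    (s : ℕ) (hs : 2 ≤ s)
    (α : Fin s → ℂ) (hα : Function.Injective α)
    (n : Fin s → ℕ) (hn : ∀ j, 1 ≤ n j)
    (N : ℕ) (hN : N = ∑ j, n j)
    (f : Polynomial ℂ) (hf : f = ∏ j, (X - C (α j)) ^ n j)
    (K : Set ℂ) (hK : K = convexHull ℝ (Set.range α))
    (z₀ : ℂ) (R : ℝ) (hR : 0 < R) (hKD : K ⊆ Metric.closedBall z₀ R)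
    (β : ℂ) (hβ : β ∈ K)
    (γ : ℝ → ℂ) (hγpc : PiecewiseC1On γ 0 1)
    (hγ1 : γ 1 = β)
    (hγf : ∀ t ∈ Set.Icc (0 : ℝ) 1, f.eval (γ t) = (t : ℂ) * f.eval β)
    (hα0 : γ 0 ∈ frontier K) :
    ∫ t in (0 : ℝ)..1, ‖deriv γ t‖ ≤ 2 * Real.pi * s * R := by
  have hM0 : 0 ≤ 2 * Real.pi * s * R := by have := Real.pi_pos; positivity
  refine SD.len_full hM0 ?_
  have hfe : ∀ z, f.eval z = ∏ j, (z - α j) ^ n j := by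
    intro z; rw [hf]; simp [Polynomial.eval_prod]
  by_cases hc : f.eval β = 0
  · -- degenerate case: the path is constant
    have hmaps : MapsTo γ (Icc (0:ℝ) 1) (Set.range α) := by
      intro t ht
      have h1 := hγf t ht
      rw [hc, mul_zero, hfe, Finset.prod_eq_zero_iff] at h1
      obtain ⟨j, _, hj⟩ := h1
      exact ⟨j, (sub_eq_zero.1 ((pow_eq_zero_iff (by have := hn j; omega)).1 hj)).symm⟩
    have hconst : ∀ x ∈ Icc (0:ℝ) 1, ∀ y ∈ Icc (0:ℝ) 1, γ x = γ y := by
      intro x hx y hy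
      exact isPreconnected_Icc.constant_of_mapsTo (Set.finite_range α).isDiscrete hγpc.1 hmaps hx hy
    intro a b ha hab hb
    have : ∫ t in a..b, ‖deriv γ t‖ = ∫ t in a..b, (0:ℝ) := by
      refine intervalIntegral.integral_congr fun t ht => ?_
      rw [uIcc_of_le hab] at ht
      have ht0 : 0 < t := ha.trans_le ht.1
      have ht1 : t < 1 := ht.2.trans_lt hb
      have : γ =ᶠ[nhds t] fun _ => γ 0 := by
        filter_upwards [Icc_mem_nhds ht0 ht1] with y hy
        exact hconst y hy 0 (by simp)
      simp [this.deriv_eq]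
    rw [this]; simpa using hM0
  · have hs1 : 1 ≤ s := by omega
    have hcv : Convex ℝ K := hK ▸ convex_convexHull ℝ _
    have hcl : IsClosed K := by
      rw [hK]; exact ((Set.finite_range α).isCompact_convexHull ℝ).isClosed
    have hαK : ∀ j, α j ∈ K := fun j => hK ▸ subset_convexHull ℝ _ ⟨j, rfl⟩
    have hder := fun t ht => SD.hasDeriv hγpc hc hγf (x := t) ht
    have eqL : ∀ t ∈ Ioo (0:ℝ) 1, deriv γ t * SD.LL α n (γ t) = ((1 / t : ℝ) : ℂ) := by
      intro t ht
      have e := (hder t ht).2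
      have hft := hγf t (Ioo_subset_Icc_self ht)
      have ht0 : (t:ℂ) ≠ 0 := by exact_mod_cast ht.1.ne'
      have hne : ∀ j, γ t ≠ α j := by
        intro j hj
        have h0 : f.eval (γ t) = 0 := by
          rw [hfe]; refine Finset.prod_eq_zero (Finset.mem_univ j) ?_
          rw [hj, sub_self, zero_pow (by have := hn j; omega)]
        rw [h0] at hft
        exact mul_ne_zero ht0 hc hft.symm
      have hd := SD.deriv_LL α n hne
      rw [← hf, ← hfe, hft] at hd
      rw [hd] at e
      have : ((t:ℂ) * (deriv γ t * SD.LL α n (γ t))) = 1 := by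
        apply mul_left_cancel₀ hc
        linear_combination e
      push_cast
      rw [eq_div_iff ht0]; linear_combination this
    have hin := SD.in_hull hs1 hn hcv hcl hαK hγpc.1 (hcl.frontier_subset hα0) (hγ1 ▸ hβ)
      (fun t ht => (hder t ht).1) eqL
    have hg : SD.GoodPath α n (f.eval β) γ (deriv γ) :=
      { c0 := hc
        npos := hn
        cont := hγpc.1
        eqF := fun t ht => by rw [← hfe]; exact hγf t ht
        der := fun t ht => (hder t ht).1
        eqL := eqL
        out := by
          intro ε hε
          rw [frontier_eq_closure_inter_closure] at hα0
          obtain ⟨z, hz, hd⟩ := Metric.mem_closure_iff.1 hα0.2 ε hε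
          obtain ⟨ν, u, h1, h2⟩ := SD.sep hcv hcl hz
          exact ⟨z, ν, by rwa [dist_comm], fun t ht => (h1 _ (hin t ht)).trans h2⟩ }
    intro a b ha hab hb
    refine SD.len_le (fun t ht => (hder t ht).1) hg.cont' ?_ ha hab hb
    intro τ hτ h01 k
    refine hg.poly_len hs1 (z₀ := z₀) (fun t ht => ?_) hτ h01 k
    have := hKD (hin t ht)
    rwa [Metric.mem_closedBall, dist_eq_norm] at this
end

section
/- For every β ∈ ℂ with f(β) ≠ 0 there exists a continuous map γ : ℝ → ℂ such that γ(1) = β and f(γ(t)) = t·f(β) for every t ∈ ℝ. -/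
open Polynomial Complex Set

lemma aux_prod (z : ℂ) (δ : ℝ) (hδ : 0 ≤ δ) (S : Multiset ℂ) (hS : S ≠ 0)
    (h : ∀ a ∈ S, δ < ‖z - a‖) :
    δ ^ (Multiset.card S) < ‖(S.map (fun a => z - a)).prod‖ := by
  induction S using Multiset.induction with
  | empty => exact absurd rfl hS
  | cons a S ih =>
    have ha : δ < ‖z - a‖ := h a (by simp)
    rw [Multiset.card_cons, Multiset.map_cons, Multiset.prod_cons, norm_mul, pow_succ']
    by_cases hS0 : S = 0
    · subst hS0; simpa using ha
    · have := ih hS0 (fun b hb => h b (Multiset.mem_cons_of_mem hb))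
      have h1 : 0 ≤ δ ^ (Multiset.card S) := by positivity
      exact mul_lt_mul'' ha this hδ h1

lemma aux_near (g : ℂ[X]) (hg : g.Monic) (hN : 1 ≤ g.natDegree) (z : ℂ) (δ : ℝ) (hδ : 0 ≤ δ)
    (h : ‖g.eval z‖ ≤ δ ^ g.natDegree) : ∃ a ∈ g.roots, ‖z - a‖ ≤ δ := by
  by_contra! hc
  have hsp : g.Splits := IsAlgClosed.splits g
  have hcard : g.natDegree = Multiset.card g.roots := hsp.natDegree_eq_card_roots
  have hev : g.eval z = (g.roots.map (fun a => z - a)).prod := by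
    have := hsp.eval_eq_prod_roots z
    rw [hg.leadingCoeff, one_mul] at this
    exact this
  have hne : g.roots ≠ 0 := by
    intro h0; rw [h0] at hcard; simp at hcard; omega
  have := aux_prod z δ hδ g.roots hne hc
  rw [← hev, ← hcard] at this
  linarith

lemma aux_chain (δ : ℝ) (hδ : 0 ≤ δ) : ∀ (n : ℕ) (S : Finset ℂ), S.card = n →
    ∀ (L : ℕ) (z : ℕ → ℂ), (∀ k ≤ L, ∃ a ∈ S, ‖z k - a‖ ≤ δ) →
    (∀ k < L, ‖z (k+1) - z k‖ ≤ δ) → ‖z L - z 0‖ ≤ 3 * n * δ := by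
  classical
  intro n
  induction n with
  | zero =>
    intro S hS L z h _
    obtain ⟨a, ha, _⟩ := h 0 (Nat.zero_le _)
    rw [Finset.card_eq_zero] at hS
    simp [hS] at ha
  | succ n ih =>
    intro S hS L z h hstep
    obtain ⟨a, ha, h0⟩ := h 0 (Nat.zero_le _)
    let j := Nat.findGreatest (fun k => ‖z k - a‖ ≤ δ) L
    have hj : ‖z j - a‖ ≤ δ :=
      Nat.findGreatest_spec (P := fun k => ‖z k - a‖ ≤ δ) (Nat.zero_le L) h0
    have hjL : j ≤ L := Nat.findGreatest_le L
    have hj0 : ‖z j - z 0‖ ≤ 2 * δ := by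
      have e : z j - z 0 = (z j - a) - (z 0 - a) := by ring
      rw [e]; linarith [norm_sub_le (z j - a) (z 0 - a)]
    have hnn : (0:ℝ) ≤ n * δ := by positivity
    rcases hjL.eq_or_lt with hjL | hjL
    · rw [hjL] at hj0
      push_cast
      nlinarith
    · have key := ih (S.erase a) (by rw [Finset.card_erase_of_mem ha, hS]; rfl) (L - (j+1))
        (fun k => z (j + 1 + k)) (by
          intro k hk
          obtain ⟨b, hb, hbz⟩ := h (j+1+k) (by omega)
          refine ⟨b, Finset.mem_erase.2 ⟨?_, hb⟩, hbz⟩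
          rintro rfl
          exact Nat.findGreatest_is_greatest (P := fun k => ‖z k - b‖ ≤ δ) (n := L)
            (k := j+1+k) (by change j < _; omega) (by omega) hbz)
        (by
          intro k hk
          exact hstep (j+1+k) (by omega))
      simp only [add_zero] at key
      rw [show j + 1 + (L - (j+1)) = L by omega] at key
      have hs := hstep j hjL
      have e : z L - z 0 = (z L - z (j+1)) + (z (j+1) - z j) + (z j - z 0) := by ring
      rw [e]
      have := norm_add₃_le (a := z L - z (j+1)) (b := z (j+1) - z j) (c := z j - z 0)
      push_cast
      nlinarith

lemma aux_sub (f : ℂ[X]) (hf : f.Monic) (hN : 1 ≤ f.natDegree) (w : ℂ) :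
    (f - C w).Monic ∧ (f - C w).natDegree = f.natDegree := by
  constructor
  · apply hf.sub_of_left
    refine lt_of_le_of_lt degree_C_le ?_
    exact natDegree_pos_iff_degree_pos.1 hN
  · exact natDegree_sub_C

lemma aux_root (f : ℂ[X]) (hf : f.Monic) (hN : 1 ≤ f.natDegree) (w z : ℂ) (δ : ℝ) (hδ : 0 ≤ δ)
    (h : ‖f.eval z - w‖ ≤ δ ^ f.natDegree) :
    ∃ a ∈ (f - C w).roots, ‖z - a‖ ≤ δ := by
  obtain ⟨h1, h2⟩ := aux_sub f hf hN w
  apply aux_near _ h1 (by rw [h2]; exact hN) z δ hδ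
  rw [h2]; simpa using h

/-- Discrete chains. -/
lemma aux_disc (f : ℂ[X]) (hf : f.Monic) (hN : 1 ≤ f.natDegree) (β e : ℂ) :
    ∃ z : ℕ → ℂ, z 0 = β ∧ (∀ k : ℕ, f.eval (z k) = f.eval β + k * e) ∧
      ∀ k l : ℕ, k ≤ l → ‖z l - z k‖ ≤
        3 * f.natDegree * (‖e‖ * ((l:ℝ) - k + 1)) ^ ((f.natDegree : ℝ)⁻¹) := by
  classical
  set N := f.natDegree with hNdef
  have hN0 : N ≠ 0 := by omega
  have step : ∀ z : ℂ, ∃ z' : ℂ, f.eval z' = f.eval z + e ∧ ‖z' - z‖ ≤ ‖e‖ ^ ((N:ℝ)⁻¹) := by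
    intro z
    obtain ⟨a, ha, h⟩ := aux_root f hf hN (f.eval z + e) z (‖e‖ ^ ((N:ℝ)⁻¹)) (by positivity)
      (by rw [← hNdef, Real.rpow_inv_natCast_pow (norm_nonneg _) hN0]; simp)
    refine ⟨a, ?_, by rwa [norm_sub_rev]⟩
    have := isRoot_of_mem_roots ha
    simpa [IsRoot, sub_eq_zero] using this
  choose nx hnx1 hnx2 using step
  let z : ℕ → ℂ := fun k => Nat.rec β (fun _ w => nx w) k
  have hz0 : z 0 = β := rfl
  have hzs : ∀ k, z (k+1) = nx (z k) := fun k => rfl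
  have hev : ∀ k : ℕ, f.eval (z k) = f.eval β + k * e := by
    intro k
    induction k with
    | zero => simp [hz0]
    | succ k ih => rw [hzs, hnx1, ih]; push_cast; ring
  refine ⟨z, hz0, hev, ?_⟩
  intro k l hkl
  have hkl' : (k:ℝ) ≤ l := by exact_mod_cast hkl
  set δ := (‖e‖ * ((l:ℝ) - k + 1)) ^ ((N : ℝ)⁻¹) with hδ
  have hb : 0 ≤ ‖e‖ * ((l:ℝ) - k + 1) := mul_nonneg (norm_nonneg _) (by linarith)
  have hδ0 : 0 ≤ δ := Real.rpow_nonneg hb _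
  have hδN : δ ^ N = ‖e‖ * ((l:ℝ) - k + 1) := Real.rpow_inv_natCast_pow hb hN0
  have key := aux_chain δ hδ0 _ (f - C (f.eval (z k))).roots.toFinset rfl (l - k)
    (fun i => z (k + i)) (by
      intro i hi
      obtain ⟨a, ha, h⟩ := aux_root f hf hN (f.eval (z k)) (z (k+i)) δ hδ0 (by
        rw [← hNdef, hδN, hev, hev]
        have : f.eval β + ((k+i : ℕ):ℂ) * e - (f.eval β + k * e) = (i:ℂ) * e := by
          push_cast; ring
        rw [this, norm_mul, Complex.norm_natCast, mul_comm]
        apply mul_le_mul_of_nonneg_left _ (norm_nonneg _)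
        have : ((i + k : ℕ):ℝ) ≤ l := by exact_mod_cast (by omega)
        push_cast at this
        linarith)
      exact ⟨a, by simpa using ha, h⟩)
    (by
      intro i _
      change ‖z (k + i + 1) - z (k+i)‖ ≤ δ
      rw [hzs]
      refine (hnx2 _).trans ?_
      apply Real.rpow_le_rpow (norm_nonneg _) _ (by positivity)
      nlinarith [norm_nonneg e])
  simp only [add_zero] at key
  rw [show k + (l - k) = l by omega] at key
  refine key.trans ?_
  apply mul_le_mul_of_nonneg_right _ hδ0
  have h1 : (f - C (f.eval (z k))).roots.toFinset.card ≤ N := by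
    refine (Multiset.toFinset_card_le _).trans ?_
    refine (card_roots' _).trans ?_
    rw [(aux_sub f hf hN _).2]
  have : ((f - C (f.eval (z k))).roots.toFinset.card : ℝ) ≤ N := by exact_mod_cast h1
  linarith

lemma aux_half (f : ℂ[X]) (hf : f.Monic) (hN : 1 ≤ f.natDegree) (β d : ℂ) :
    ∃ γ : ℝ → ℂ, Continuous γ ∧ γ 0 = β ∧
      ∀ t : ℝ, 0 ≤ t → f.eval (γ t) = f.eval β + t * d := by
  set N := f.natDegree with hNdef
  have hN0 : N ≠ 0 := by omega
  have hNinv : (0:ℝ) < (N:ℝ)⁻¹ := by positivity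
  choose z hz0 hzev hzb using fun m : ℕ => aux_disc f hf hN β (d / ((m:ℂ) + 1))
  let G : ℕ → ℝ → ℂ := fun m t => z m ⌊t * ((m:ℝ) + 1)⌋₊
  have hnorm : ∀ m : ℕ, ‖d / ((m:ℂ) + 1)‖ = ‖d‖ / ((m:ℝ) + 1) := by
    intro m
    rw [norm_div]
    congr 1
    have : ((m:ℂ) + 1) = ((m + 1 : ℕ) : ℂ) := by push_cast; rfl
    rw [this, Complex.norm_natCast]; push_cast; rfl
  have hG1 : ∀ (m : ℕ) (s t : ℝ), s ≤ t → ‖G m t - G m s‖ ≤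
      3 * N * (‖d‖ * (t - s + 2 / ((m:ℝ) + 1))) ^ ((N : ℝ)⁻¹) := by
    intro m s t hst
    have hm : (0:ℝ) < (m:ℝ) + 1 := by positivity
    have hst' : s * ((m:ℝ)+1) ≤ t * ((m:ℝ)+1) := mul_le_mul_of_nonneg_right hst hm.le
    have hfl := Nat.floor_le_floor hst'
    have hflr : ((⌊s * ((m:ℝ)+1)⌋₊ : ℕ) : ℝ) ≤ ⌊t * ((m:ℝ)+1)⌋₊ := by exact_mod_cast hfl
    refine (hzb m _ _ hfl).trans ?_
    apply mul_le_mul_of_nonneg_left _ (by positivity)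
    apply Real.rpow_le_rpow (mul_nonneg (norm_nonneg _) (by linarith)) _ hNinv.le
    rw [hnorm]
    have e : ‖d‖ * (t - s + 2 / ((m:ℝ) + 1)) =
      ‖d‖ / ((m:ℝ) + 1) * (t * ((m:ℝ)+1) - s * ((m:ℝ)+1) + 2) := by field_simp
    rw [e]
    apply mul_le_mul_of_nonneg_left _ (by positivity)
    have h1 := Nat.lt_floor_add_one (s * ((m:ℝ)+1))
    rcases le_total 0 (t * ((m:ℝ)+1)) with h | h
    · have h2 := Nat.floor_le h
      linarith
    · rw [Nat.floor_of_nonpos h] at *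
      have : ((⌊s * ((m:ℝ)+1)⌋₊ : ℕ) : ℝ) ≥ 0 := by positivity
      push_cast
      linarith
  have hG : ∀ (m : ℕ) (s t : ℝ), ‖G m t - G m s‖ ≤
      3 * N * (‖d‖ * (|t - s| + 2 / ((m:ℝ) + 1))) ^ ((N : ℝ)⁻¹) := by
    intro m s t
    rcases le_total s t with h | h
    · rw [abs_of_nonneg (by linarith)]; exact hG1 m s t h
    · rw [abs_sub_comm, norm_sub_rev, abs_of_nonneg (by linarith)]; exact hG1 m t s h
  have hG0 : ∀ m, G m 0 = β := by intro m; simp [G, hz0]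
  let U : Ultrafilter ℕ := Filter.hyperfilter ℕ
  have hU : (U : Filter ℕ) ≤ Filter.atTop := by
    rw [← Nat.cofinite_eq_atTop]; exact Filter.hyperfilter_le_cofinite
  have hlim : ∀ t : ℝ, ∃ x : ℂ, Filter.Tendsto (fun m => G m t) U (nhds x) := by
    intro t
    let R := 3 * N * (‖d‖ * (|t| + 2)) ^ ((N : ℝ)⁻¹)
    have hmem : ∀ m, G m t ∈ Metric.closedBall β R := by
      intro m
      rw [mem_closedBall_iff_norm, ← hG0 m]
      refine (hG m 0 t).trans ?_
      apply mul_le_mul_of_nonneg_left _ (by positivity)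
      apply Real.rpow_le_rpow (by positivity) _ hNinv.le
      apply mul_le_mul_of_nonneg_left _ (norm_nonneg _)
      have : 2 / ((m:ℝ) + 1) ≤ 2 := by
        apply div_le_self (by norm_num); linarith [Nat.cast_nonneg (α := ℝ) m]
      simp only [sub_zero]; linarith
    obtain ⟨x, _, hx⟩ := (isCompact_closedBall β R).ultrafilter_le_nhds
      (U.map (fun m => G m t)) (by
        rw [Filter.le_principal_iff, Ultrafilter.mem_coe, Ultrafilter.mem_map]
        exact Filter.mem_of_superset Filter.univ_mem (fun m _ => hmem m))
    exact ⟨x, hx⟩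
  choose γ hγ using hlim
  have hinv : Filter.Tendsto (fun m : ℕ => 2 / ((m:ℝ) + 1)) U (nhds 0) := by
    have := (tendsto_one_div_add_atTop_nhds_zero_nat (𝕜 := ℝ)).const_mul 2
    simp only [mul_zero, mul_one_div] at this
    exact this.mono_left hU
  have hH : ∀ s t : ℝ, ‖γ t - γ s‖ ≤ 3 * N * (‖d‖ * |t - s|) ^ ((N : ℝ)⁻¹) := by
    intro s t
    have h1 := ((hγ t).sub (hγ s)).norm
    have h2 : Filter.Tendsto (fun m : ℕ =>
        3 * N * (‖d‖ * (|t - s| + 2 / ((m:ℝ) + 1))) ^ ((N : ℝ)⁻¹)) U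
        (nhds (3 * N * (‖d‖ * (|t - s| + 0)) ^ ((N : ℝ)⁻¹))) :=
      (((hinv.const_add _).const_mul _).rpow_const (Or.inr hNinv.le)).const_mul _
    rw [add_zero] at h2
    exact le_of_tendsto_of_tendsto' h1 h2 (fun m => hG m s t)
  refine ⟨γ, ?_, ?_, ?_⟩
  · rw [continuous_iff_continuousAt]
    intro s
    rw [ContinuousAt, tendsto_iff_norm_sub_tendsto_zero]
    refine squeeze_zero (fun _ => norm_nonneg _) (fun t => hH s t) ?_
    have : Continuous (fun t : ℝ => 3 * N * (‖d‖ * |t - s|) ^ ((N : ℝ)⁻¹)) := by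
      apply Continuous.mul continuous_const
      apply Continuous.rpow_const (by fun_prop)
      intro _; exact Or.inr hNinv.le
    have h := this.tendsto s
    simpa [Real.zero_rpow hNinv.ne'] using h
  · refine tendsto_nhds_unique (hγ 0) ?_
    simp only [hG0]
    exact tendsto_const_nhds
  · intro t ht
    have h1 : Filter.Tendsto (fun m => f.eval (G m t)) U (nhds (f.eval (γ t))) :=
      (f.continuous.tendsto _).comp (hγ t)
    refine tendsto_nhds_unique h1 ?_
    have h2 : Filter.Tendsto (fun m : ℕ => ((⌊t * ((m:ℝ) + 1)⌋₊ : ℝ) / ((m:ℝ) + 1)))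
        U (nhds t) := by
      have h3 := (tendsto_nat_floor_mul_div_atTop ht).comp
        (Filter.tendsto_atTop_add_const_right _ (1:ℝ) (tendsto_natCast_atTop_atTop (R := ℝ)))
      exact h3.mono_left hU
    have h4 := (((Complex.continuous_ofReal.tendsto t).comp h2).mul_const d).const_add (f.eval β)
    refine h4.congr ?_
    intro m
    simp only [G, hzev, Function.comp]
    push_cast
    ring

/-- For every `β` with `f β ≠ 0`, there is a global continuous
lift `γ : ℝ → ℂ` of the line `t ↦ t • f β` through `f`, with `γ 1 = β`. -/
theorem exists_global_lift
    (s : ℕ) (hs : 2 ≤ s)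
    (α : Fin s → ℂ) (hα : Function.Injective α)
    (n : Fin s → ℕ) (hn : ∀ j, 1 ≤ n j)
    (f : Polynomial ℂ) (hf : f = ∏ j, (X - C (α j)) ^ n j)
    (β : ℂ) (hβ : f.eval β ≠ 0) :
    ∃ γ : ℝ → ℂ, Continuous γ ∧ γ 1 = β ∧
      ∀ t : ℝ, f.eval (γ t) = (t : ℂ) * f.eval β := by
  have hm : f.Monic := by
    rw [hf]; exact monic_prod_of_monic _ _ (fun j _ => (monic_X_sub_C _).pow _)
  have hN : 1 ≤ f.natDegree := by
    rw [hf, natDegree_prod_of_monic _ _ (fun j _ => (monic_X_sub_C _).pow _)]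
    have h1 := hn ⟨0, by omega⟩
    refine le_trans ?_ (Finset.single_le_sum (fun _ _ => Nat.zero_le _)
      (Finset.mem_univ (⟨0, by omega⟩ : Fin s)))
    simpa using h1
  obtain ⟨γ₁, hc₁, h₁, he₁⟩ := aux_half f hm hN β (f.eval β)
  obtain ⟨γ₂, hc₂, h₂, he₂⟩ := aux_half f hm hN β (-f.eval β)
  refine ⟨fun t => if t ≤ 1 then γ₂ (1 - t) else γ₁ (t - 1), ?_, ?_, ?_⟩
  · apply Continuous.if_le (by fun_prop) (by fun_prop) continuous_id continuous_const
    intro t ht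
    simp only [id] at ht
    subst ht
    simp [h₁, h₂]
  · simp [h₂]
  · intro t
    by_cases ht : t ≤ 1
    · simp only [ht, if_true]
      rw [he₂ _ (by linarith)]; push_cast; ring
    · simp only [ht, if_false]
      rw [he₁ _ (by linarith)]; push_cast; ring
end

section
/- Let β ∈ ℂ with f(β) ≠ 0 and let γ : [0,1] → ℂ be a continuous map with γ(1) = β and f(γ(t)) = t·f(β) for all t ∈ [0,1]. If t ∈ (0,1) is such that γ is differentiable at t and f′(γ(t)) ≠ 0, then there exists a real number λ > 0 such that γ′(t) = λ · f(γ(t)) · conj(f′(γ(t))); that is, γ′(t) is a positive real multiple of the gradient of the function z ↦ |f(z)| at the point γ(t). -/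
open Polynomial Complex Set

/-- Along a (reverse parameterized) path of steepest descent
`γ` for `|f|`, at any interior time `t` where `γ` is differentiable and
`f' (γ t) ≠ 0`, the velocity `γ'(t)` is a positive real multiple of
`f(γ(t)) ⬝ conj (f'(γ(t)))`, the gradient of `z ↦ |f z|` at `γ t` (up to a
positive factor). -/
theorem deriv_is_positive_multiple_of_gradient
    (s : ℕ) (hs : 2 ≤ s)
    (α : Fin s → ℂ) (hα : Function.Injective α)
    (n : Fin s → ℕ) (hn : ∀ j, 1 ≤ n j)
    (f : Polynomial ℂ) (hf : f = ∏ j, (X - C (α j)) ^ n j)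
    (β : ℂ) (hβ : f.eval β ≠ 0)
    (γ : ℝ → ℂ) (hγcont : ContinuousOn γ (Set.Icc 0 1))
    (hγ1 : γ 1 = β)
    (hγf : ∀ t ∈ Set.Icc (0 : ℝ) 1, f.eval (γ t) = (t : ℂ) * f.eval β)
    (t : ℝ) (ht : t ∈ Set.Ioo (0 : ℝ) 1)
    (hdiff : DifferentiableAt ℝ γ t)
    (hf' : (derivative f).eval (γ t) ≠ 0) :
    ∃ lam : ℝ, 0 < lam ∧
      deriv γ t = (lam : ℂ) * f.eval (γ t) * starRingEnd ℂ ((derivative f).eval (γ t)) := by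
  have h1 : HasDerivAt (fun u : ℝ => f.eval (γ u)) ((derivative f).eval (γ t) * deriv γ t) t :=
    HasDerivAt.comp_of_eq t (f.hasDerivAt (γ t)) hdiff.hasDerivAt rfl
  have h2 : HasDerivAt (fun u : ℝ => (u : ℂ) * f.eval β) (1 * f.eval β) t :=
    (Complex.ofRealCLM.hasDerivAt (x := t)).mul_const (f.eval β)
  have h3 : (fun u : ℝ => f.eval (γ u)) =ᶠ[nhds t] (fun u : ℝ => (u : ℂ) * f.eval β) := by
    filter_upwards [Icc_mem_nhds ht.1 ht.2] with u hu using hγf u hu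
  have h4 := h1.unique (h2.congr_of_eventuallyEq h3)
  have ht0 : (t : ℂ) ≠ 0 := by exact_mod_cast ht.1.ne'
  have hn0 : 0 < Complex.normSq ((derivative f).eval (γ t)) := Complex.normSq_pos.mpr hf'
  have hn1 : ((Complex.normSq ((derivative f).eval (γ t)) : ℝ) : ℂ) ≠ 0 := by
    exact_mod_cast hn0.ne'
  refine ⟨(t * Complex.normSq ((derivative f).eval (γ t)))⁻¹,
    inv_pos.mpr (mul_pos ht.1 hn0), ?_⟩
  rw [hγf t ⟨ht.1.le, ht.2.le⟩]
  apply mul_left_cancel₀ hf'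
  rw [h4]
  have h5 := Complex.mul_conj ((derivative f).eval (γ t))
  push_cast
  rw [mul_left_comm, h5]
  field_simp
end

section
/- Let z ∈ ℂ with z ∉ 𝒦. Then w := ∑_{j=1}^s n_j/(z − α_j) is nonzero, and the ray {z + t·conj(w) : t ≥ 0} meets 𝒦 only in ∅; that is, z + t·conj(w) ∉ 𝒦 for all t ≥ 0. -/
open Polynomial Complex Set

/-- If `z` lies outside the convex hull `K` of the roots of
`f`, then `w = ∑ⱼ nⱼ/(z − αⱼ)` is nonzero and the ray from `z` in the
direction `conj w` does not meet `K`. -/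
theorem ray_away_from_hull
    (s : ℕ) (hs : 2 ≤ s)
    (α : Fin s → ℂ) (hα : Function.Injective α)
    (n : Fin s → ℕ) (hn : ∀ j, 1 ≤ n j)
    (K : Set ℂ) (hK : K = convexHull ℝ (Set.range α))
    (z : ℂ) (hz : z ∉ K) :
    (∑ j, (n j : ℂ) / (z - α j)) ≠ 0 ∧
      ∀ t : ℝ, 0 ≤ t →
        z + (t : ℂ) * starRingEnd ℂ (∑ j, (n j : ℂ) / (z - α j)) ∉ K := by
  subst hK
  have hne : ∀ j, z - α j ≠ 0 := by
    intro j h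
    apply hz
    rw [sub_eq_zero.mp h]
    exact subset_convexHull ℝ _ ⟨j, rfl⟩
  set c : Fin s → ℝ := fun j => (n j : ℝ) / Complex.normSq (z - α j) with hc
  have hcpos : ∀ j, 0 < c j := fun j =>
    div_pos (by exact_mod_cast hn j) (Complex.normSq_pos.mpr (hne j))
  set S : ℝ := ∑ j, c j with hS
  have hSpos : 0 < S :=
    Finset.sum_pos (fun j _ => hcpos j) ⟨⟨0, by omega⟩, Finset.mem_univ _⟩
  set p : ℂ := Finset.univ.centerMass c α with hp
  have hpK : p ∈ convexHull ℝ (Set.range α) :=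
    Finset.centerMass_mem_convexHull _ (fun j _ => (hcpos j).le) hSpos
      (fun j _ => ⟨j, rfl⟩)
  have hSp : (S : ℂ) * p = ∑ j, (c j : ℂ) * α j := by
    have hS0 : (S : ℂ) ≠ 0 := by exact_mod_cast hSpos.ne'
    simp only [hp, Finset.centerMass, ← hS, Complex.real_smul, Complex.ofReal_inv]
    rw [mul_inv_cancel_left₀ hS0]
  have hw : starRingEnd ℂ (∑ j, (n j : ℂ) / (z - α j)) = (S : ℂ) * (z - p) := by
    rw [mul_sub, hSp, hS, Complex.ofReal_sum, Finset.sum_mul, ← Finset.sum_sub_distrib, map_sum]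
    refine Finset.sum_congr rfl fun j _ => ?_
    have h1 : starRingEnd ℂ (z - α j) ≠ 0 := (_root_.map_ne_zero _).mpr (hne j)
    have h2 := hne j
    rw [← mul_sub, map_div₀, hc]
    push_cast
    rw [Complex.normSq_eq_conj_mul_self, map_natCast]
    field_simp
  refine ⟨fun h0 => ?_, fun t ht hq => ?_⟩
  · rw [h0, map_zero] at hw
    have hS0 : (S : ℂ) ≠ 0 := by exact_mod_cast hSpos.ne'
    have := (mul_eq_zero.mp hw.symm).resolve_left hS0
    apply hz
    rw [sub_eq_zero.mp this]
    exact hpK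
  · rw [hw] at hq
    apply hz
    have htS : 0 ≤ t * S := mul_nonneg ht hSpos.le
    have hpos : 0 < 1 + t * S := by linarith
    have hcomb := convex_convexHull ℝ (Set.range α) hq hpK
      (a := 1 / (1 + t * S)) (b := t * S / (1 + t * S)) (by positivity) (by positivity)
      (by field_simp)
    convert hcomb using 1
    have h3 : (1 + (t : ℂ) * S) ≠ 0 := by exact_mod_cast hpos.ne'
    simp only [Complex.real_smul]
    push_cast
    field_simp
    ring
end

section
/- Let β ∈ ℂ with f(β) ≠ 0 and let γ : [0,∞) → ℂ be a continuous, piecewise continuously differentiable map with f(γ(t)) = t·f(β) for all t ≥ 0. If γ(t₀) ∉ 𝒦 for some t₀ > 0, then γ(t) ∉ 𝒦 for every t ≥ t₀. -/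
open Polynomial Complex Set

lemma aux_logDeriv (s : ℕ) (hs : 2 ≤ s) (α : Fin s → ℂ) (n : Fin s → ℕ) (hn : ∀ j, 1 ≤ n j)
    (f : Polynomial ℂ) (hf : f = ∏ j, (X - C (α j)) ^ n j) (z v : ℂ)
    (hpos : ∀ j, 0 < inner ℝ v (z - α j)) :
    0 < (v * (f.derivative.eval z / f.eval z)).re := by
  have hne : ∀ j, z - α j ≠ 0 := by
    intro j h
    have := hpos j
    rw [h, inner_zero_right] at this
    exact lt_irrefl _ this
  have h1 : f.derivative.eval z / f.eval z = ∑ j, (n j : ℂ) * (1 / (z - α j)) := by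
    have h2 : (fun w => f.eval w) = fun w => ∏ j, (w - α j) ^ n j := by
      funext w
      simp [hf, eval_prod]
    have h3 : f.derivative.eval z / f.eval z = logDeriv (fun w => f.eval w) z := by
      rw [logDeriv_apply, Polynomial.deriv]
    rw [h3, h2, logDeriv_prod]
    · refine Finset.sum_congr rfl fun j _ => ?_
      rw [logDeriv_fun_pow (by fun_prop)]
      simp [logDeriv_apply]
    · intro j _
      exact pow_ne_zero _ (hne j)
    · intro j _
      fun_prop
  rw [h1, Finset.mul_sum, Complex.re_sum]
  haveI : Nonempty (Fin s) := ⟨⟨0, by omega⟩⟩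
  refine Finset.sum_pos (fun j _ => ?_) Finset.univ_nonempty
  have hp := hpos j
  have hN : 0 < Complex.normSq (z - α j) := Complex.normSq_pos.2 (hne j)
  have hnj : (0 : ℝ) < n j := by exact_mod_cast hn j
  rw [Complex.inner] at hp
  have : (v * ((n j : ℂ) * (1 / (z - α j)))).re
      = n j * (((z - α j) * (starRingEnd ℂ) v).re / Complex.normSq (z - α j)) := by
    rw [one_div, Complex.inv_def]
    have : v * ((n j : ℂ) * ((starRingEnd ℂ) (z - α j) * (((Complex.normSq (z - α j))⁻¹ : ℝ) : ℂ)))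
      = (((n j : ℝ) * (Complex.normSq (z - α j))⁻¹ : ℝ) : ℂ) * (v * (starRingEnd ℂ) (z - α j)) := by
      push_cast; ring
    rw [this, Complex.re_ofReal_mul]
    simp only [Complex.mul_re, Complex.conj_re, Complex.conj_im]
    ring
  rw [this]
  positivity

lemma aux_hasDerivAt (f : Polynomial ℂ) (b : ℂ) (γ : ℝ → ℂ)
    (hγcont : ContinuousOn γ (Set.Ici 0))
    (hγf : ∀ t : ℝ, 0 ≤ t → f.eval (γ t) = (t : ℂ) * b)
    (t : ℝ) (ht : 0 < t) (hd : f.derivative.eval (γ t) ≠ 0) :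
    HasDerivAt γ ((f.derivative.eval (γ t))⁻¹ * b) t := by
  have hst : HasStrictDerivAt (fun w => f.eval w) (f.derivative.eval (γ t)) (γ t) :=
    f.hasStrictDerivAt (γ t)
  have hinv := (hst.to_localInverse hd).hasDerivAt
  have hleft := hst.eventually_left_inverse hd
  have hc : ContinuousAt γ t := hγcont.continuousAt (Ici_mem_nhds ht)
  have h1 := hc.eventually hleft
  rw [hγf t ht.le] at hinv
  have hline : HasDerivAt (fun r : ℝ => (r : ℂ) * b) b t := by
    simpa using (Complex.ofRealCLM.hasDerivAt (x := t)).mul_const b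
  have hcomp := HasDerivAt.comp t hinv hline
  refine hcomp.congr_of_eventuallyEq ?_
  filter_upwards [h1, Ioi_mem_nhds ht] with r hr hr0
  rw [← hr]
  simp only [Function.comp]
  rw [hγf r (le_of_lt hr0)]

/-- A path of steepest ascent for `|f|` (parameterized by a
lift `γ` of the line `t ↦ t • f β` on `[0, ∞)`) which leaves the convex hull
`K` of the roots of `f` never comes back to `K`. -/
theorem once_out_stays_out
    (s : ℕ) (hs : 2 ≤ s)
    (α : Fin s → ℂ) (hα : Function.Injective α)
    (n : Fin s → ℕ) (hn : ∀ j, 1 ≤ n j)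
    (f : Polynomial ℂ) (hf : f = ∏ j, (X - C (α j)) ^ n j)
    (K : Set ℂ) (hK : K = convexHull ℝ (Set.range α))
    (β : ℂ) (hβ : f.eval β ≠ 0)
    (γ : ℝ → ℂ)
    (hγcont : ContinuousOn γ (Set.Ici 0))
    (hγpc : ∀ b : ℝ, 0 < b → PiecewiseC1On γ 0 b)
    (hγf : ∀ t : ℝ, 0 ≤ t → f.eval (γ t) = (t : ℂ) * f.eval β)
    (t₀ : ℝ) (ht₀ : 0 < t₀) (hout : γ t₀ ∉ K) :
    ∀ t : ℝ, t₀ ≤ t → γ t ∉ K := by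
  have hKc : IsCompact K := by
    rw [hK]; exact (Set.finite_range α).isCompact_convexHull ℝ
  have hKconv : Convex ℝ K := by rw [hK]; exact convex_convexHull ℝ _
  have hαK : ∀ j, α j ∈ K := fun j => by
    rw [hK]; exact subset_convexHull ℝ _ ⟨j, rfl⟩
  have hKne : K.Nonempty := ⟨_, hαK ⟨0, by omega⟩⟩
  intro t₁ ht₁ hin
  -- maximise the distance to K on the interval
  have hcd : ContinuousOn (fun t => Metric.infDist (γ t) K) (Set.Icc t₀ t₁) :=
    (Metric.continuous_infDist_pt K).comp_continuousOn
      (hγcont.mono fun x hx => le_trans ht₀.le hx.1)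
  obtain ⟨t, ht, hmax⟩ := isCompact_Icc.exists_isMaxOn (Set.nonempty_Icc.2 ht₁) hcd
  have hmax' : ∀ r ∈ Set.Icc t₀ t₁, Metric.infDist (γ r) K ≤ Metric.infDist (γ t) K :=
    fun r hr => hmax hr
  have hd0 : 0 < Metric.infDist (γ t₀) K :=
    (hKc.isClosed.notMem_iff_infDist_pos hKne).1 hout
  have hdt : 0 < Metric.infDist (γ t) K := hd0.trans_le (hmax' t₀ ⟨le_rfl, ht₁⟩)
  have htt : t < t₁ := by
    rcases ht.2.lt_or_eq with h | h
    · exact h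
    · rw [h, Metric.infDist_zero_of_mem hin] at hdt
      exact absurd hdt (lt_irrefl _)
  have htpos : 0 < t := ht₀.trans_le ht.1
  obtain ⟨p, hpK, hp⟩ := hKc.exists_infDist_eq_dist hKne (γ t)
  have hproj : ∀ w ∈ K, inner ℝ (γ t - p) (w - p) ≤ 0 := by
    rw [← norm_eq_iInf_iff_real_inner_le_zero hKconv hpK, ← dist_eq_norm, ← hp,
      Metric.infDist_eq_iInf]
    simp only [dist_eq_norm]
  rw [dist_eq_norm] at hp
  set v := γ t - p with hv
  have hvpos : 0 < ‖v‖ := hp ▸ hdt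
  have hpos : ∀ j, 0 < inner ℝ v (γ t - α j) := by
    intro j
    have h1 := hproj _ (hαK j)
    have h2 : γ t - α j = v - (α j - p) := by rw [hv]; ring
    rw [h2, inner_sub_right, real_inner_self_eq_norm_sq]
    nlinarith [sq_pos_of_pos hvpos]
  have hL := aux_logDeriv s hs α n hn f hf (γ t) v hpos
  have hd : f.derivative.eval (γ t) ≠ 0 := by
    intro h
    rw [h] at hL
    simp at hL
  have hder := aux_hasDerivAt f (f.eval β) γ hγcont hγf t htpos hd
  set D := (f.derivative.eval (γ t))⁻¹ * f.eval β with hD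
  have hDpos : 0 < inner ℝ v D := by
    have htc : (t : ℂ) ≠ 0 := by exact_mod_cast htpos.ne'
    set L := f.derivative.eval (γ t) / f.eval (γ t) with hLdef
    have hLne : L ≠ 0 := by
      intro h
      rw [h] at hL
      simp at hL
    have hDL : D = ((t⁻¹ : ℝ) : ℂ) * L⁻¹ := by
      rw [hD, hLdef, hγf t htpos.le]
      push_cast
      field_simp
    have hN : 0 < Complex.normSq L := Complex.normSq_pos.2 hLne
    have : inner ℝ v D = t⁻¹ * (Complex.normSq L)⁻¹ * (v * L).re := by
      rw [Complex.inner, hDL, Complex.inv_def]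
      have : ((t⁻¹ : ℝ) : ℂ) * ((starRingEnd ℂ) L * (((Complex.normSq L)⁻¹ : ℝ) : ℂ))
          * (starRingEnd ℂ) v
          = ((t⁻¹ * (Complex.normSq L)⁻¹ : ℝ) : ℂ) * ((starRingEnd ℂ) (v * L)) := by
        rw [map_mul]; push_cast; ring
      rw [this, Complex.re_ofReal_mul, Complex.conj_re]
    rw [this]
    positivity
  have hφ : HasDerivAt (fun r => inner ℝ v (γ r)) (inner ℝ v D) t := by
    simpa using (hasDerivAt_const t v).inner ℝ hder
  have hslope := (hasDerivAt_iff_tendsto_slope.1 hφ).mono_left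
    (nhdsWithin_mono t (fun x (hx : x ∈ Set.Ioi t) => ne_of_gt hx))
  have hev := (hslope.eventually (lt_mem_nhds hDpos)).and (Ioc_mem_nhdsGT htt)
  obtain ⟨r, hr, hr1⟩ := hev.exists
  have hr2 : inner ℝ v (γ t) < inner ℝ v (γ r) := by
    rw [slope_def_field] at hr
    have := (div_pos_iff_of_pos_right (sub_pos.2 hr1.1)).1 hr
    linarith
  obtain ⟨q, hqK, hq⟩ := hKc.exists_infDist_eq_dist hKne (γ r)
  rw [dist_eq_norm] at hq
  have hle : ‖γ r - q‖ ≤ ‖v‖ := by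
    rw [← hq, ← hp]; exact hmax' r ⟨ht.1.trans hr1.1.le, hr1.2⟩
  have hcs := real_inner_le_norm v (γ r - q)
  have hqp := hproj q hqK
  have hsum : inner ℝ v (γ r) - inner ℝ v (γ t)
      = inner ℝ v (γ r - q) + inner ℝ v (q - p) - ‖v‖ ^ 2 := by
    rw [← real_inner_self_eq_norm_sq, ← inner_sub_right, ← inner_add_right, ← inner_sub_right]
    congr 1
    rw [hv]; ring
  nlinarith [mul_le_mul_of_nonneg_left hle hvpos.le]
end

section
/- Suppose 𝒦 has nonempty interior and let β be a point of the interior of 𝒦 with f(β) ≠ 0. Let γ : [0,∞) → ℂ be a continuous map with γ(1) = β and f(γ(t)) = t·f(β) for all t ≥ 0. Then there exists a unique real number c > 1 such that γ(c) lies on the topological boundary of 𝒦; moreover, γ(t) belongs to the interior of 𝒦 for every t with 0 < t < c, and γ(t) ∉ 𝒦 for every t > c. -/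
open Polynomial Complex Set

/-- Log derivative of the polynomial. -/
lemma aux_logderiv (s : ℕ) (α : Fin s → ℂ) (n : Fin s → ℕ) (w : ℂ)
    (hw : ∀ j, w - α j ≠ 0) :
    (derivative (∏ j, (X - C (α j)) ^ n j)).eval w =
      (∏ j, (X - C (α j)) ^ n j : Polynomial ℂ).eval w * ∑ j, (n j : ℂ) / (w - α j) := by
  have h := logDeriv_prod (s := (Finset.univ : Finset (Fin s)))
    (f := fun j => fun z : ℂ => (z - α j) ^ n j) (x := w)
    (fun j _ => pow_ne_zero _ (hw j)) (fun j _ => by fun_prop)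
  have he : (fun z : ℂ => ∏ j, (z - α j) ^ n j) =
      fun z => (∏ j, (X - C (α j)) ^ n j : Polynomial ℂ).eval z := by
    funext z; simp [eval_prod]
  have h0 : (∏ j, (X - C (α j)) ^ n j : Polynomial ℂ).eval w ≠ 0 := by
    rw [eval_prod]; exact Finset.prod_ne_zero_iff.2 fun j _ => by simpa using fun h => absurd h (hw j)
  have h1 : ∀ j, logDeriv (fun z : ℂ => (z - α j) ^ n j) w = (n j : ℂ) / (w - α j) := by
    intro j
    rw [logDeriv_fun_pow (by fun_prop)]
    simp [logDeriv_apply, div_eq_mul_inv]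
  simp only [h1] at h
  rw [he, logDeriv_apply, Polynomial.deriv, div_eq_iff h0] at h
  rw [h, mul_comm]

lemma aux_inv_re {z : ℂ} (h : 0 < z.re) : 0 < (z⁻¹).re := by
  rw [Complex.inv_re]
  exact div_pos h (Complex.normSq_pos.2 (fun h0 => by simp [h0] at h))

lemma aux_inv_re' {z : ℂ} (h : 0 ≤ z.re) : 0 ≤ (z⁻¹).re := by
  rw [Complex.inv_re]
  exact div_nonneg h (Complex.normSq_nonneg _)

/-- Outward motion. -/
lemma aux_deriv
    (s : ℕ) (α : Fin s → ℂ) (n : Fin s → ℕ) (hn : ∀ j, 1 ≤ n j)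
    (f : Polynomial ℂ) (hf : f = ∏ j, (X - C (α j)) ^ n j)
    (b : ℂ) (hb : b ≠ 0)
    (γ : ℝ → ℂ) (hγcont : ContinuousOn γ (Set.Ici 0))
    (hγf : ∀ t : ℝ, 0 ≤ t → f.eval (γ t) = (t : ℂ) * b)
    (u : ℂ) (t : ℝ) (ht : 0 < t) (hle : ∀ j, (u * α j).re ≤ (u * γ t).re)
    (hlt : ∃ j, (u * α j).re < (u * γ t).re) :
    ∃ d : ℝ, 0 < d ∧ HasDerivAt (fun t => (u * γ t).re) d t := by
  have htC : (t : ℂ) ≠ 0 := by exact_mod_cast ht.ne'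
  have hfw : f.eval (γ t) ≠ 0 := by rw [hγf t ht.le]; exact mul_ne_zero htC hb
  have hw : ∀ j, γ t - α j ≠ 0 := by
    intro j h
    apply hfw
    rw [hf, eval_prod]
    refine Finset.prod_eq_zero (Finset.mem_univ j) ?_
    have : n j ≠ 0 := by have := hn j; omega
    simp [h, this]
  have hu : u ≠ 0 := by
    rintro rfl
    obtain ⟨j, hj⟩ := hlt
    simp at hj
  set S : ℂ := ∑ j, (n j : ℂ) / (γ t - α j) with hS
  have hd := aux_logderiv s α n (γ t) hw
  rw [← hf, ← hS] at hd
  have hterm : ∀ j, ((n j : ℂ) / (γ t - α j) / u).re =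
      n j * ((u * (γ t - α j))⁻¹).re := by
    intro j
    have : (n j : ℂ) / (γ t - α j) / u = ((n j : ℝ) : ℂ) * (u * (γ t - α j))⁻¹ := by
      have := hw j
      push_cast
      field_simp
    rw [this, Complex.re_ofReal_mul]
  have hSu : 0 < (S / u).re := by
    rw [hS, Finset.sum_div, Complex.re_sum]
    refine Finset.sum_pos' (fun j _ => ?_) ?_
    · rw [hterm]
      refine mul_nonneg (Nat.cast_nonneg _) (aux_inv_re' ?_)
      rw [mul_sub, Complex.sub_re]; linarith [hle j]
    · obtain ⟨j, hj⟩ := hlt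
      refine ⟨j, Finset.mem_univ j, ?_⟩
      rw [hterm]
      refine mul_pos (by have := hn j; exact_mod_cast this) (aux_inv_re ?_)
      rw [mul_sub, Complex.sub_re]; linarith
  have hS0 : S ≠ 0 := by intro h; simp [h] at hSu
  have hd0 : (derivative f).eval (γ t) ≠ 0 := by rw [hd]; exact mul_ne_zero hfw hS0
  have hstrict := f.hasStrictDerivAt (γ t)
  have hcont : ContinuousAt γ t := hγcont.continuousAt (Ici_mem_nhds ht)
  have hg := hstrict.to_localInverse hd0
  set g := hstrict.localInverse _ _ _ hd0 with hgdef
  have hleft : ∀ᶠ x in nhds (γ t), g (f.eval x) = x :=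
    hstrict.hasStrictFDerivAt_equiv hd0 |>.eventually_left_inverse
  have hev : (fun t : ℝ => g ((t : ℂ) * b)) =ᶠ[nhds t] γ := by
    filter_upwards [hcont.eventually hleft, Ioi_mem_nhds ht] with x hx hx0
    rw [← hγf x (le_of_lt hx0)]; exact hx
  have hlin : HasDerivAt (fun t : ℝ => (t : ℂ) * b) b t := by
    simpa using (Complex.ofRealCLM.hasDerivAt (x := t)).mul_const b
  have hgd : HasDerivAt g ((derivative f).eval (γ t))⁻¹ ((t : ℂ) * b) := by
    rw [← hγf t ht.le]; exact hg.hasDerivAt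
  have hγd : HasDerivAt γ (((derivative f).eval (γ t))⁻¹ * b) t :=
    (hgd.comp t hlin).congr_of_eventuallyEq hev.symm
  have h2 := hγd.const_mul u
  refine ⟨_, ?_, Complex.reCLM.hasFDerivAt.comp_hasDerivAt t h2⟩
  have : u * (((derivative f).eval (γ t))⁻¹ * b) = ((t⁻¹ : ℝ) : ℂ) * (S / u)⁻¹ := by
    rw [hd, hγf t ht.le]
    push_cast
    field_simp
  rw [this, Complex.reCLM_apply, Complex.re_ofReal_mul]
  exact mul_pos (inv_pos.2 ht) (aux_inv_re hSu)

lemma aux_exit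
    (s : ℕ) (α : Fin s → ℂ) (n : Fin s → ℕ) (hn : ∀ j, 1 ≤ n j)
    (f : Polynomial ℂ) (hf : f = ∏ j, (X - C (α j)) ^ n j)
    (K : Set ℂ) (hK : K = convexHull ℝ (Set.range α))
    (hKint : (interior K).Nonempty)
    (b : ℂ) (hb : b ≠ 0)
    (γ : ℝ → ℂ) (hγcont : ContinuousOn γ (Set.Ici 0))
    (hγf : ∀ t : ℝ, 0 ≤ t → f.eval (γ t) = (t : ℂ) * b)
    (t₀ : ℝ) (h0 : 0 < t₀) (hout : γ t₀ ∉ interior K) (t₁ : ℝ) (h1 : t₀ < t₁) :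
    γ t₁ ∉ K := by
  have hconv : Convex ℝ K := hK ▸ convex_convexHull ℝ _
  obtain ⟨g, hg⟩ := geometric_hahn_banach_open_point hconv.interior isOpen_interior hout
  have hgK : ∀ z ∈ K, g z ≤ g (γ t₀) := by
    intro z hz
    have hz' : z ∈ closure (interior K) := by
      rw [hconv.closure_interior_eq_closure_of_nonempty_interior hKint]
      exact subset_closure hz
    exact closure_minimal (t := {z | g z ≤ g (γ t₀)}) (fun a ha => (hg a ha).le)
      (isClosed_le g.continuous continuous_const) hz'
  have hαK : ∀ j, α j ∈ K := fun j => hK ▸ subset_convexHull ℝ _ ⟨j, rfl⟩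
  have hlt : ∃ j, g (α j) < g (γ t₀) := by
    by_contra! hcon
    obtain ⟨p, hp⟩ := hKint
    have hsub : K ⊆ {z | g (γ t₀) ≤ g z} := by
      rw [hK]
      refine convexHull_min ?_ (convex_halfSpace_ge g.toLinearMap.isLinear _)
      rintro _ ⟨j, rfl⟩
      exact hcon j
    have := hsub (interior_subset hp)
    exact absurd (hg p hp) (not_lt.2 this)
  set u : ℂ := (g 1 : ℂ) - g I * I with hu
  have hgu : ∀ z, g z = (u * z).re := by
    intro z
    have : z = z.re • (1 : ℂ) + z.im • I := by
      apply Complex.ext <;> simp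
    conv_lhs => rw [this]
    rw [map_add, map_smul, map_smul]
    simp [hu]
    ring
  simp only [hgu] at hgK hlt
  set H : ℝ → ℝ := fun t => (u * γ t).re with hH
  have hder : ∀ t, 0 < t → H t₀ ≤ H t → ∃ d : ℝ, 0 < d ∧ HasDerivAt H d t := by
    intro t ht hle
    refine aux_deriv s α n hn f hf b hb γ hγcont hγf u t ht
      (fun j => (hgK _ (hαK j)).trans hle) ?_
    obtain ⟨j, hj⟩ := hlt
    exact ⟨j, hj.trans_le hle⟩
  have hHc : ContinuousOn H (Icc t₀ t₁) := by
    have : ContinuousOn γ (Icc t₀ t₁) := hγcont.mono fun x hx => h0.le.trans hx.1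
    exact Complex.continuous_re.comp_continuousOn (continuousOn_const.mul this)
  have hge : Icc t₀ t₁ ⊆ {t | H t₀ ≤ H t} := by
    refine IsClosed.Icc_subset_of_forall_mem_nhdsWithin ?_ ?_ ?_
    · have := hHc.preimage_isClosed_of_isClosed isClosed_Icc (isClosed_Ici (a := H t₀))
      rw [inter_comm] at this
      exact this
    · exact le_refl (H t₀)
    · rintro x ⟨hx, hx'⟩
      obtain ⟨d, hd, hdd⟩ := hder x (h0.trans_le hx'.1) hx
      have hs := (hasDerivAt_iff_tendsto_slope.1 hdd).eventually (lt_mem_nhds hd)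
      have hs' := hs.filter_mono (nhdsWithin_mono x (fun y (hy : y ∈ Ioi x) => ne_of_gt hy))
      filter_upwards [hs', self_mem_nhdsWithin] with y hy hyx
      have hyx' : x < y := hyx
      rw [slope_def_field] at hy
      have := (div_pos_iff_of_pos_right (sub_pos.2 hyx')).1 hy
      have hx2 : H t₀ ≤ H x := hx
      show H t₀ ≤ H y
      linarith
  have hmono : StrictMonoOn H (Icc t₀ t₁) := by
    refine strictMonoOn_of_deriv_pos (convex_Icc _ _) hHc ?_
    intro x hx
    have hx' := interior_subset hx
    obtain ⟨d, hd, hdd⟩ := hder x (h0.trans_le hx'.1) (hge hx')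
    rw [hdd.deriv]; exact hd
  intro hmem
  have := hmono (left_mem_Icc.2 h1.le) (right_mem_Icc.2 h1.le) h1
  exact absurd (hgK _ hmem) (not_le.2 this)

/-- If the convex hull `K` of the roots of `f` has nonempty
interior and `β` is an interior point of `K` with `f β ≠ 0`, then any
continuous lift `γ` on `[0, ∞)` of the line `t ↦ t • f β` with `γ 1 = β`
crosses the boundary of `K` at a unique time `c > 1`; before time `c` it stays
in the interior of `K` and after time `c` it stays outside `K`. -/
theorem unique_exit_time
    (s : ℕ) (hs : 2 ≤ s)
    (α : Fin s → ℂ) (hα : Function.Injective α)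
    (n : Fin s → ℕ) (hn : ∀ j, 1 ≤ n j)
    (f : Polynomial ℂ) (hf : f = ∏ j, (X - C (α j)) ^ n j)
    (K : Set ℂ) (hK : K = convexHull ℝ (Set.range α))
    (hKint : (interior K).Nonempty)
    (β : ℂ) (hβ : β ∈ interior K) (hfβ : f.eval β ≠ 0)
    (γ : ℝ → ℂ) (hγcont : ContinuousOn γ (Set.Ici 0))
    (hγ1 : γ 1 = β)
    (hγf : ∀ t : ℝ, 0 ≤ t → f.eval (γ t) = (t : ℂ) * f.eval β) :
    ∃ c : ℝ, 1 < c ∧ γ c ∈ frontier K ∧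
      (∀ t : ℝ, 0 < t → t < c → γ t ∈ interior K) ∧
      (∀ t : ℝ, c < t → γ t ∉ K) ∧
      ∀ c' : ℝ, 1 < c' → γ c' ∈ frontier K → c' = c := by
  have hexit := aux_exit s α n hn f hf K hK hKint (f.eval β) hfβ γ hγcont hγf
  have hKc : IsCompact K := hK ▸ (Set.finite_range α).isCompact_convexHull ℝ
  have hKcl : IsClosed K := hKc.isClosed
  have hbd : ∃ T : ℝ, 1 ≤ T ∧ γ T ∉ interior K := by
    obtain ⟨M, hM⟩ := hKc.exists_bound_of_continuousOn (f := fun z => f.eval z)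
      f.continuous.continuousOn
    have hpos : 0 < ‖f.eval β‖ := norm_pos_iff.2 hfβ
    refine ⟨max 1 ((M + 1) / ‖f.eval β‖), le_max_left _ _, fun hin => ?_⟩
    set T := max 1 ((M + 1) / ‖f.eval β‖) with hT
    have hT0 : 0 ≤ T := zero_le_one.trans (le_max_left _ _)
    have h1 := hM _ (interior_subset hin)
    simp only [hγf T hT0, norm_mul, Complex.norm_real, Real.norm_of_nonneg hT0] at h1
    have h2 : (M + 1) / ‖f.eval β‖ ≤ T := le_max_right _ _
    rw [div_le_iff₀ hpos] at h2
    linarith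
  set A : Set ℝ := {t | 1 ≤ t ∧ γ t ∉ interior K} with hA
  have hAcl : IsClosed A := by
    have h1 : ContinuousOn γ (Ici 1) := hγcont.mono (Ici_subset_Ici.2 zero_le_one)
    exact h1.preimage_isClosed_of_isClosed isClosed_Ici isOpen_interior.isClosed_compl
  have hAbdd : BddBelow A := ⟨1, fun t ht => ht.1⟩
  have hcA : sInf A ∈ A := hAcl.csInf_mem hbd hAbdd
  set c := sInf A with hc
  have hc1 : 1 < c := by
    refine lt_of_le_of_ne hcA.1 fun h => hcA.2 ?_
    rw [← h, hγ1]; exact hβ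
  have hin : ∀ t : ℝ, 0 < t → t < c → γ t ∈ interior K := by
    intro t ht htc
    by_contra hcon
    rcases lt_or_ge t 1 with h | h
    · exact hexit t ht hcon 1 h (by rw [hγ1]; exact interior_subset hβ)
    · exact absurd (csInf_le hAbdd (show t ∈ A from ⟨h, hcon⟩)) (not_le.2 htc)
  have hafter : ∀ t : ℝ, c < t → γ t ∉ K := fun t ht =>
    hexit c (zero_lt_one.trans hc1) hcA.2 t ht
  have hcK : γ c ∈ K := by
    have hcont : ContinuousAt γ c := hγcont.continuousAt (Ici_mem_nhds (zero_lt_one.trans hc1))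
    refine hKcl.mem_of_tendsto (hcont.tendsto.mono_left (nhdsWithin_le_nhds (s := Iio c))) ?_
    filter_upwards [Ioo_mem_nhdsLT (zero_lt_one.trans hc1)] with t ht
    exact interior_subset (hin t ht.1 ht.2)
  refine ⟨c, hc1, ⟨subset_closure hcK, hcA.2⟩, hin, hafter, fun c' h1 hfr => ?_⟩
  rcases lt_trichotomy c' c with h | h | h
  · exact absurd (hin c' (zero_lt_one.trans h1) h) hfr.2
  · exact h
  · exact absurd (hKcl.frontier_subset hfr) (hafter c' h)
end

section
/- Let β ∈ ℂ with f(β) ≠ 0 and let θ ∈ ℝ be such that (i·e^{iθ})^N / f(β) is not a real number. Then for every r ∈ ℝ, the set {u ∈ ℝ : f((r + i·u)·e^{iθ}) / f(β) ∈ ℝ} is finite and has at most N elements. -/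
open Polynomial Complex Set

/-- Provided `(i e^{iθ})^N / f(β)` is not real, every line
`D_{r,θ} = {(r + iu) e^{iθ} : u ∈ ℝ}` meets the level set
`{z : f z / f β ∈ ℝ}` in at most `N` points, i.e. for every `r` the set of
parameters `u` with `f((r + iu) e^{iθ}) / f(β)` real is finite of cardinality
at most `N`. -/
theorem line_meets_level_set_in_at_most_N_points
    (s : ℕ) (hs : 2 ≤ s)
    (α : Fin s → ℂ) (hα : Function.Injective α)
    (n : Fin s → ℕ) (hn : ∀ j, 1 ≤ n j)
    (N : ℕ) (hN : N = ∑ j, n j)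
    (f : Polynomial ℂ) (hf : f = ∏ j, (X - C (α j)) ^ n j)
    (β : ℂ) (hβ : f.eval β ≠ 0)
    (θ : ℝ) (hθ : ((Complex.I * Complex.exp (θ * Complex.I)) ^ N / f.eval β).im ≠ 0) :
    ∀ r : ℝ,
      {u : ℝ | (f.eval ((r + u * Complex.I) * Complex.exp (θ * Complex.I))
          / f.eval β).im = 0}.Finite ∧
      {u : ℝ | (f.eval ((r + u * Complex.I) * Complex.exp (θ * Complex.I))
          / f.eval β).im = 0}.ncard ≤ N := by
  intro r
  set e := Complex.exp (θ * Complex.I) with he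
  have he0 : Complex.I * e ≠ 0 := mul_ne_zero Complex.I_ne_zero (Complex.exp_ne_zero _)
  have hmon : f.Monic := by
    rw [hf]
    exact monic_prod_of_monic _ _ (fun j _ => (monic_X_sub_C _).pow _)
  have hdeg : f.natDegree = N := by
    rw [hf, hN, natDegree_prod_of_monic _ _ (fun j _ => (monic_X_sub_C _).pow _)]
    simp
  set q : Polynomial ℂ := C (Complex.I * e) * X + C (r * e) with hq
  have hqd : q.natDegree = 1 := natDegree_linear he0
  have hql : q.leadingCoeff = Complex.I * e := leadingCoeff_linear he0
  set c : ℂ := f.eval β with hc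
  set g : Polynomial ℂ := C c⁻¹ * f.comp q with hg
  have hcd : (f.comp q).natDegree = N := by rw [natDegree_comp, hqd, hdeg, mul_one]
  have hgd : g.natDegree ≤ N := (natDegree_C_mul_le _ _).trans hcd.le
  have hgN : g.coeff N = (Complex.I * e) ^ N / c := by
    have h1 : (f.comp q).coeff N = (Complex.I * e) ^ N := by
      have h2 := leadingCoeff_comp (p := f) (q := q) (by rw [hqd]; exact one_ne_zero)
      rw [hmon.leadingCoeff, hql, hdeg, one_mul] at h2
      rw [← h2, leadingCoeff, hcd]
    rw [hg, coeff_C_mul, h1, div_eq_inv_mul]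
  set h : Polynomial ℝ := ∑ i ∈ Finset.range (N + 1), monomial i (g.coeff i).im with hh
  have hhN : h.coeff N ≠ 0 := by
    have : h.coeff N = (g.coeff N).im := by
      simp [hh, finset_sum_coeff, coeff_monomial]
    rw [this, hgN]
    exact hθ
  have hhd : h.natDegree ≤ N := by
    refine natDegree_sum_le_of_forall_le _ _ (fun i hi => ?_)
    exact (natDegree_monomial_le _).trans (Nat.lt_succ_iff.mp (Finset.mem_range.mp hi))
  have hh0 : h ≠ 0 := fun h0 => hhN (by rw [h0, coeff_zero])
  have heval : ∀ u : ℝ, h.eval u = (f.eval ((r + u * Complex.I) * e) / c).im := by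
    intro u
    have h1 : f.eval ((r + u * Complex.I) * e) / c = g.eval (u : ℂ) := by
      rw [hg, eval_mul, eval_C, eval_comp, div_eq_inv_mul, hq]
      simp only [eval_add, eval_mul, eval_C, eval_X]
      congr 2
      ring
    rw [h1, eval_eq_sum_range' (Nat.lt_succ_of_le hgd), Complex.im_sum, hh, eval_finset_sum]
    refine Finset.sum_congr rfl (fun i _ => ?_)
    rw [eval_monomial, ← Complex.ofReal_pow, Complex.im_mul_ofReal]
  have hset : {u : ℝ | (f.eval ((r + u * Complex.I) * e) / c).im = 0}
      = (h.roots.toFinset : Set ℝ) := by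
    ext u
    simp [hh0, ← heval u, IsRoot]
  rw [hset]
  refine ⟨Finset.finite_toSet _, ?_⟩
  rw [Set.ncard_coe_finset]
  exact (Multiset.toFinset_card_le _).trans ((card_roots' h).trans hhd)
end
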